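/- arXiv:1606.04892 — 4 statements merged into one kernel-verified Lean document; each statement's English description precedes it below -/
import Mathlib

section
/- Nonexistence for the supercritical problem (Theorem 1.2, localized formulation). Let n ≥ 3 be an integer, let p ≥ (n+2)/(n−2), and let m > 0. Let Ω ⊂ ℝⁿ be a bounded open set with C² boundary which is star-shaped with respect to the origin (i.e. s·x ∈ Ω for every x ∈ Ω and s ∈ [0,1]). Suppose U : cl(Ω) × [0,∞) → ℝ is bounded, twice continuously differentiable up to the boundary, has finite energy ∫₀^∞∫_Ω (|∇U(x,t)|² + U(x,t)²) dx dt < ∞, and satisfies: −ΔU + m²U = 0 in Ω × (0,∞) (where Δ is the Laplacian in all n+1 variables (x,t)); U(x,t) = 0 for all x ∈ ∂Ω and t ≥ 0; and −∂ₜU(x,0) = m U(x,0) + |U(x,0)|^{p−1} U(x,0) for all x ∈ Ω. Then U vanishes identically. -/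
/-!
The proof is Pohozaev's, arranged so that no regularity of `∂Ω` and no boundary integral of the
normal derivative is needed. Put `A = ∫|∇ₓU|²`, `B = ∫|∂ₜU|²`, `E = ∫U²` over the half-cylinder, and
on the base `u = U(·, 0)`, `I = ∫u²`, `J = ∫|u|^(p+1)`.

For `l ≥ 1` and `k > 0` the dilation `U(l x, k t)`, extended by zero, is supported over
`{x | l x ∈ Ω} ⊆ Ω` by star-shapedness, so it may be used as a test function in the weak formulation
(`CylData.weak`). Young's inequality and a change of variables turn this into an inequality between
boundary terms and energies (`CylData.boundary_le_energy`), with equality at `l = k = 1`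
(`CylData.boundary_eq_energy`): `m I + J = A + B + m² E`. Varying `k` around `1` gives the
equipartition `B = A + m² E` (`CylData.energyT_eq`). Letting `l` decrease to `1` gives Pohozaev's
inequality `(n/2)(A + B + m² E) - A ≤ n (m I / 2 + J / (p + 1))` (`CylData.pohozaev`).

Since `p ≥ (n+2)/(n-2)`, these yield `J ≤ A`, hence `m I ≥ B + m² E`. On the other hand
`I = -2 ∫ U ∂ₜU`, so `∫ (∂ₜU + m U)² = B + m² E - m I ≤ 0`. Therefore `∂ₜU = -m U`, which gives
`B = m² E`, then `A = 0`. With vanishing horizontal gradient and zero lateral data, `U = 0`.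

Green's formula on slices for functions vanishing on an arbitrary boundary is `integral_green`: it
truncates the test function near its zero level.
-/

open MeasureTheory

noncomputable section

/-- `Ω ⊂ ℝⁿ` has `C²` boundary: near each boundary point, `Ω` is the sublevel set of a
`C²` local defining function with nonvanishing derivative. -/
def HasC2Boundary {n : ℕ} (Ω : Set (EuclideanSpace ℝ (Fin n))) : Prop :=
  ∀ x ∈ frontier Ω, ∃ (V : Set (EuclideanSpace ℝ (Fin n))) (f : EuclideanSpace ℝ (Fin n) → ℝ),
    IsOpen V ∧ x ∈ V ∧ ContDiffOn ℝ 2 f V ∧ (∀ y ∈ V, fderiv ℝ f y ≠ 0) ∧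
    Ω ∩ V = {y ∈ V | f y < 0}

/-- Partial derivative of `U` in the `i`-th `x`-direction. -/
def pderivX {n : ℕ} (U : EuclideanSpace ℝ (Fin n) → ℝ → ℝ) (i : Fin n)
    (x : EuclideanSpace ℝ (Fin n)) (t : ℝ) : ℝ :=
  fderiv ℝ (fun y => U y t) x (EuclideanSpace.single i 1)

/-- Partial derivative of `U` in the `t`-direction. -/
def pderivT {n : ℕ} (U : EuclideanSpace ℝ (Fin n) → ℝ → ℝ)
    (x : EuclideanSpace ℝ (Fin n)) (t : ℝ) : ℝ :=
  deriv (U x) t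

/-- Laplacian of `U` in all `n+1` variables `(x,t)`. -/
def cylLaplacian {n : ℕ} (U : EuclideanSpace ℝ (Fin n) → ℝ → ℝ)
    (x : EuclideanSpace ℝ (Fin n)) (t : ℝ) : ℝ :=
  (∑ i : Fin n, pderivX (fun y s => pderivX U i y s) i x t) +
    pderivT (fun y s => pderivT U y s) x t

/-- `|∇U|²`, the squared full gradient of `U` in the `n+1` variables `(x,t)`. -/
def gradSqFull {n : ℕ} (U : EuclideanSpace ℝ (Fin n) → ℝ → ℝ)
    (x : EuclideanSpace ℝ (Fin n)) (t : ℝ) : ℝ :=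
  (∑ i : Fin n, (pderivX U i x t) ^ 2) + (pderivT U x t) ^ 2

section Auxiliary

open Set Filter Topology

/-! ### Green's formula without boundary regularity -/

/-- A continuous ramp: `0` for `|r| ≤ 1`, `1` for `|r| ≥ 2`, linear in between. -/
def cutoffDeriv (r : ℝ) : ℝ := max 0 (min (|r| - 1) 1)
/-- A `C¹` truncation: it vanishes near `0` and stays within bounded distance of the identity, so
that `cutoff (k * s) / k → s` uniformly as `k → ∞`. -/
def cutoff (r : ℝ) : ℝ := ∫ s in (0:ℝ)..r, cutoffDeriv s

lemma continuous_cutoffDeriv : Continuous cutoffDeriv := by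
  unfold cutoffDeriv; fun_prop

lemma cutoffDeriv_nonneg (r : ℝ) : 0 ≤ cutoffDeriv r := le_max_left _ _

lemma cutoffDeriv_le_one (r : ℝ) : cutoffDeriv r ≤ 1 :=
  max_le zero_le_one (min_le_right _ _)

lemma cutoffDeriv_eq_zero {r : ℝ} (h : |r| ≤ 1) : cutoffDeriv r = 0 :=
  max_eq_left ((min_le_left _ _).trans (by linarith))

lemma cutoffDeriv_eq_one {r : ℝ} (h : 2 ≤ |r|) : cutoffDeriv r = 1 := by
  unfold cutoffDeriv
  rw [min_eq_right (by linarith), max_eq_right zero_le_one]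

lemma hasDerivAt_cutoff (r : ℝ) : HasDerivAt cutoff (cutoffDeriv r) r :=
  intervalIntegral.integral_hasDerivAt_right (continuous_cutoffDeriv.intervalIntegrable _ _)
    (continuous_cutoffDeriv.stronglyMeasurableAtFilter _ _) continuous_cutoffDeriv.continuousAt

lemma continuous_cutoff : Continuous cutoff :=
  continuous_iff_continuousAt.2 fun r => (hasDerivAt_cutoff r).continuousAt

lemma cutoff_eq_zero {r : ℝ} (h : |r| ≤ 1) : cutoff r = 0 := by
  unfold cutoff
  rw [intervalIntegral.integral_congr (g := fun _ => (0:ℝ))]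
  · simp
  · intro s hs
    apply cutoffDeriv_eq_zero
    have := abs_sub_left_of_mem_uIcc hs
    simp at this
    linarith

lemma abs_cutoff_sub_le (r : ℝ) : |cutoff r - r| ≤ 2 := by
  have key : ∀ s : ℝ, HasDerivAt (fun r => cutoff r - r) (cutoffDeriv s - 1) s := fun s =>
    (hasDerivAt_cutoff s).sub (hasDerivAt_id s)
  have hin : ∀ s : ℝ, |s| ≤ 2 → |cutoff s - s| ≤ 2 := by
    intro s hs
    have := Convex.norm_image_sub_le_of_norm_hasDerivWithin_le (f := fun r => cutoff r - r)
      (f' := fun s => cutoffDeriv s - 1) (C := 1) (s := univ) (x := 0) (y := s)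
      (fun x _ => (key x).hasDerivWithinAt) (fun x _ => by
        rw [Real.norm_eq_abs, abs_le]
        constructor <;> linarith [cutoffDeriv_nonneg x, cutoffDeriv_le_one x])
      convex_univ (mem_univ _) (mem_univ _)
    simp only [cutoff_eq_zero (r := 0) (by simp), Real.norm_eq_abs, sub_zero, one_mul] at this
    linarith
  rcases le_total (|r|) 2 with h | h
  · exact hin r h
  · rcases le_total 0 r with h0 | h0
    · rw [abs_of_nonneg h0] at h
      have := Convex.norm_image_sub_le_of_norm_hasDerivWithin_le (f := fun r => cutoff r - r)
        (f' := fun s => cutoffDeriv s - 1) (C := 0) (s := Ici 2) (x := 2) (y := r)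
        (fun x _ => (key x).hasDerivWithinAt) (fun x hx => by
          rw [cutoffDeriv_eq_one (le_trans hx (le_abs_self _))]; simp)
        (convex_Ici _) (by simp) h
      rw [zero_mul, norm_le_zero_iff, sub_eq_zero] at this
      rw [this]; exact hin 2 (by norm_num)
    · rw [abs_of_nonpos h0] at h
      have := Convex.norm_image_sub_le_of_norm_hasDerivWithin_le (f := fun r => cutoff r - r)
        (f' := fun s => cutoffDeriv s - 1) (C := 0) (s := Iic (-2)) (x := -2) (y := r)
        (fun x _ => (key x).hasDerivWithinAt) (fun x hx => by
          rw [cutoffDeriv_eq_one (le_trans (by simp at hx; linarith) (neg_le_abs _))]; simp)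
        (convex_Iic _) (by simp) (by simp; linarith)
      rw [zero_mul, norm_le_zero_iff, sub_eq_zero] at this
      rw [this]; exact hin (-2) (by norm_num)

section Green
variable {E : Type*} [NormedAddCommGroup E] [NormedSpace ℝ E] [FiniteDimensional ℝ E]
  [MeasurableSpace E] [BorelSpace E] {μ : Measure E} [μ.IsAddHaarMeasure]

/-- The derivative of a differentiable function vanishes almost everywhere on its zero set. -/
lemma ae_fderiv_eq_zero_of_zero {D : Set E} (hD : IsOpen D) {φ : E → ℝ} {φ' : E → E →L[ℝ] ℝ}
    (hφ : ∀ x ∈ D, HasFDerivAt φ (φ' x) x) (v : E) :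
    ∀ᵐ x ∂(μ.restrict D), φ x = 0 → φ' x v = 0 := by
  have hc : ContinuousOn φ D := fun x hx => (hφ x hx).continuousAt.continuousWithinAt
  set Z : Set E := D ∩ φ ⁻¹' {0} with hZdef
  have hZ : MeasurableSet Z := by
    obtain ⟨c, hc1, hc2⟩ := (continuousOn_iff_isClosed.1 hc) {0} isClosed_singleton
    rw [hZdef, inter_comm, hc2]
    exact hc1.measurableSet.inter hD.measurableSet
  have happ : ApproximatesLinearOn (fun x => φ x • v) (0 : E →L[ℝ] E) Z 0 := by
    intro x hx y hy
    have h1 : φ x = 0 := hx.2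
    have h2 : φ y = 0 := hy.2
    simp [h1, h2]
  have h1 := happ.norm_fderiv_sub_le μ hZ (fun x => (φ' x).smulRight v) (fun x hx =>
    ((hφ x hx.1).smul_const v).hasFDerivWithinAt)
  rw [ae_restrict_iff' hZ] at h1
  rw [ae_restrict_iff' hD.measurableSet]
  filter_upwards [h1] with x hx hxD hx0
  have h2 := hx ⟨hxD, hx0⟩
  have h3 : (φ' x).smulRight v = 0 := by
    have h : ‖(φ' x).smulRight v - 0‖₊ = 0 := le_antisymm h2 bot_le
    rwa [nnnorm_eq_zero, sub_zero] at h
  have h4 := congrArg (fun A => A v) h3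
  simp only [ContinuousLinearMap.smulRight_apply, _root_.zero_apply, smul_eq_zero] at h4
  rcases h4 with h4 | h4
  · exact h4
  · simp [h4]

lemma integrableOn_of_continuousOn_of_bound {X : Type*} [TopologicalSpace X] [MeasurableSpace X]
    [OpensMeasurableSpace X] {μ : Measure X} {D : Set X}
    (hD : MeasurableSet D) (hfin : μ D ≠ ⊤) {f : X → ℝ} (hf : ContinuousOn f D) {C : ℝ}
    (hC : ∀ x ∈ D, |f x| ≤ C) : IntegrableOn f D μ := by
  refine IntegrableOn.of_bound hfin.lt_top (hf.aestronglyMeasurable hD) C ?_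
  exact (ae_restrict_iff' hD).2 (ae_of_all _ fun x hx => by simpa using hC x hx)

/-- `∫_D ∂ᵥ(φ w) = 0` when `φ` vanishes at `∂D`, the latter expressed by compactness of the
superlevel sets of `|φ|` in `D`. No regularity of `∂D` is needed: `φ` is replaced by the truncation
`cutoff ((k + 1) φ) / (k + 1)`, whose product with `w` extends by zero to the whole space, and
`k → ∞` by dominated convergence. -/
lemma integral_green {D : Set E} (hD : IsOpen D) (hfin : μ D ≠ ⊤) {φ w : E → ℝ}
    {φ' w' : E → E →L[ℝ] ℝ} {v : E}
    (hφ : ∀ x ∈ D, HasFDerivAt φ (φ' x) x) (hw : ∀ x ∈ D, HasFDerivAt w (w' x) x)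
    (hφ'c : ContinuousOn (fun x => φ' x v) D) (hw'c : ContinuousOn (fun x => w' x v) D)
    {C : ℝ} (hφb : ∀ x ∈ D, |φ x| ≤ C) (hwb : ∀ x ∈ D, |w x| ≤ C)
    (hφ'b : ∀ x ∈ D, |φ' x v| ≤ C) (hw'b : ∀ x ∈ D, |w' x v| ≤ C)
    (hK : ∀ ε > 0, IsCompact {x ∈ D | ε ≤ |φ x|}) :
    ∫ x in D, (φ' x v * w x + φ x * w' x v) ∂μ = 0 := by
  have hφc : ContinuousOn φ D := fun x hx => (hφ x hx).continuousAt.continuousWithinAt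
  have hwc : ContinuousOn w D := fun x hx => (hw x hx).continuousAt.continuousWithinAt
  set F' : ℕ → E → ℝ := fun k x =>
    cutoffDeriv ((k + 1) * φ x) * φ' x v * w x + cutoff ((k + 1) * φ x) / (k + 1) * w' x v with hF'
  have hkpos : ∀ k : ℕ, (0:ℝ) < k + 1 := fun k => by positivity
  have hη : ∀ (k : ℕ) (s : ℝ), |cutoff ((k + 1) * s) / (k + 1) - s| ≤ 2 / (k + 1) := by
    intro k s
    have := abs_cutoff_sub_le ((k + 1) * s)
    have e : cutoff ((k + 1) * s) / (k + 1) - s = (cutoff ((k + 1) * s) - (k + 1) * s) / (k + 1) := by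
      have := (hkpos k).ne'
      field_simp
    rw [e, abs_div, abs_of_pos (hkpos k)]
    gcongr
  have hη' : ∀ (k : ℕ) (s : ℝ), |s| ≤ C → |cutoff ((k + 1) * s) / (k + 1)| ≤ C + 2 := by
    intro k s hs
    have h1 := hη k s
    have h2 : 2 / ((k:ℝ) + 1) ≤ 2 := div_le_self (by norm_num) (by linarith [Nat.cast_nonneg (α := ℝ) k])
    have h3 := abs_sub_abs_le_abs_sub (cutoff ((k + 1) * s) / (k + 1)) s
    linarith
  have hF'c : ∀ k, ContinuousOn (F' k) D := by
    intro k
    have h1 : ContinuousOn (fun x => cutoffDeriv ((k + 1) * φ x)) D :=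
      continuous_cutoffDeriv.comp_continuousOn (hφc.const_mul _ )
    have h2 : ContinuousOn (fun x => cutoff ((k + 1) * φ x)) D :=
      continuous_cutoff.comp_continuousOn (hφc.const_mul _ )
    exact ((h1.mul hφ'c).mul hwc).add ((h2.div_const _).mul hw'c)
  have hF'b : ∀ k, ∀ x ∈ D, |F' k x| ≤ C * C + (C + 2) * C := by
    intro k x hx
    have hC : 0 ≤ C := (abs_nonneg _).trans (hφb x hx)
    refine (abs_add_le _ _).trans ?_
    rw [abs_mul, abs_mul, abs_mul]
    have h1 : |cutoffDeriv ((k + 1) * φ x)| ≤ 1 := by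
      rw [abs_of_nonneg (cutoffDeriv_nonneg _)]; exact cutoffDeriv_le_one _
    have h2 := hη' k _ (hφb x hx)
    have h3 : |cutoffDeriv ((k + 1) * φ x)| * |φ' x v| ≤ C := by
      have := mul_le_mul h1 (hφ'b x hx) (abs_nonneg _) zero_le_one
      linarith
    exact add_le_add (mul_le_mul h3 (hwb x hx) (abs_nonneg _) hC)
      (mul_le_mul h2 (hw'b x hx) (abs_nonneg _) (by linarith))
  have hzero : ∀ k, ∫ x in D, F' k x ∂μ = 0 := by
    intro k
    set F : E → ℝ := D.indicator (fun x => cutoff ((k + 1) * φ x) / (k + 1) * w x) with hF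
    have hFc : ContinuousOn (fun x => cutoff ((k + 1) * φ x) / (k + 1) * w x) D :=
      ((continuous_cutoff.comp_continuousOn (hφc.const_mul _ )).div_const _).mul hwc
    have hline : ∀ x, HasLineDerivAt ℝ F (D.indicator (F' k) x) x v := by
      intro x
      by_cases hx : x ∈ D
      · have h1 : HasFDerivAt (fun x => cutoff ((k + 1) * φ x) / (k + 1) * w x) _ x :=
          ((((hasDerivAt_cutoff ((k + 1) * φ x)).comp_hasFDerivAt x
            ((hφ x hx).const_mul ((k:ℝ) + 1))).mul_const (((k:ℝ) + 1)⁻¹))).mul (hw x hx)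
        have h2 : F =ᶠ[𝓝 x] (fun x => cutoff ((k + 1) * φ x) / (k + 1) * w x) := by
          filter_upwards [hD.mem_nhds hx] with y hy
          simp [hF, hy]
        have h3 := ((h1.congr_of_eventuallyEq h2).hasLineDerivAt v)
        convert h3 using 1
        have := (hkpos k).ne'
        simp [hx, hF']
        field_simp
        ring
      · have h0 : D.indicator (F' k) x = 0 := by simp [hx]
        rw [h0]
        have hKk := hK (1 / (k + 1)) (by positivity)
        have h2 : F =ᶠ[𝓝 x] fun _ => 0 := by
          filter_upwards [hKk.isClosed.isOpen_compl.mem_nhds (x := x) (fun h => hx h.1)] with y hy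
          by_cases hyD : y ∈ D
          · have : |φ y| < 1 / (k + 1) := by
              by_contra hcon
              exact hy ⟨hyD, not_lt.1 hcon⟩
            have h4 : cutoff ((k + 1) * φ y) = 0 := by
              apply cutoff_eq_zero
              rw [abs_mul, abs_of_pos (hkpos k)]
              rw [lt_div_iff₀ (hkpos k)] at this
              linarith
            simp [hF, hyD, h4]
          · simp [hF, hyD]
        have h3 := ((hasFDerivAt_const (𝕜 := ℝ) (0:ℝ) x).congr_of_eventuallyEq h2).hasLineDerivAt v
        simpa using h3
    have hFint : Integrable F μ := by
      rw [hF, integrable_indicator_iff hD.measurableSet]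
      refine integrableOn_of_continuousOn_of_bound hD.measurableSet hfin hFc (C := (C + 2) * C) ?_
      intro x hx
      rw [abs_mul]
      have hC : 0 ≤ C := (abs_nonneg _).trans (hφb x hx)
      exact mul_le_mul (hη' k _ (hφb x hx)) (hwb x hx) (abs_nonneg _) (by linarith)
    have hF'int : Integrable (D.indicator (F' k)) μ := by
      rw [integrable_indicator_iff hD.measurableSet]
      exact integrableOn_of_continuousOn_of_bound hD.measurableSet hfin (hF'c k) (hF'b k)
    have := integral_bilinear_hasLineDerivAt_right_eq_neg_left_of_integrable (μ := μ)
      (f := fun _ => (1:ℝ)) (f' := fun _ => 0) (g := F) (g' := D.indicator (F' k))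
      (B := ContinuousLinearMap.mul ℝ ℝ) (v := v) (by simp) (by simpa using hF'int)
      (by simpa using hFint) (fun x _ => by
        have := (hasFDerivAt_const (𝕜 := ℝ) (1:ℝ) x).hasLineDerivAt v
        simpa using this) (fun x _ => hline x)
    simp only [ContinuousLinearMap.mul_apply', one_mul, zero_mul, integral_zero, neg_zero] at this
    rwa [integral_indicator hD.measurableSet] at this
  have hlim : Tendsto (fun k => ∫ x in D, F' k x ∂μ) atTop
      (𝓝 (∫ x in D, (φ' x v * w x + φ x * w' x v) ∂μ)) := by
    refine tendsto_integral_of_dominated_convergence (fun _ => C * C + (C + 2) * C)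
      (fun k => (hF'c k).aestronglyMeasurable hD.measurableSet)
      (integrableOn_const hfin)
      (fun k => (ae_restrict_iff' hD.measurableSet).2 (ae_of_all _ fun x hx => hF'b k x hx)) ?_
    -- the truncated gradients converge to `0` on `{φ = 0}`, where `φ'` vanishes almost everywhere
    filter_upwards [ae_fderiv_eq_zero_of_zero (μ := μ) hD hφ v] with x hx
    refine Tendsto.add ?_ ?_
    · refine Tendsto.mul_const _ ?_
      by_cases h0 : φ x = 0
      · simp [hx h0]
      · refine tendsto_const_nhds.congr' ?_
        obtain ⟨N, hN⟩ := exists_nat_ge (2 / |φ x|)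
        filter_upwards [eventually_ge_atTop N] with k hk
        rw [cutoffDeriv_eq_one, one_mul]
        rw [abs_mul, abs_of_pos (hkpos k)]
        have h5 : 0 < |φ x| := abs_pos.2 h0
        rw [div_le_iff₀ h5] at hN
        have : (N:ℝ) ≤ k := by exact_mod_cast hk
        nlinarith
    · refine Tendsto.mul_const _ ?_
      rw [tendsto_iff_norm_sub_tendsto_zero]
      refine squeeze_zero (fun _ => norm_nonneg _) (fun k => hη k (φ x)) ?_
      have := (tendsto_one_div_add_atTop_nhds_zero_nat (𝕜 := ℝ)).const_mul 2
      simpa [div_eq_mul_inv] using this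
  exact tendsto_nhds_unique hlim (by simp [hzero])
end Green

/-! ### Integration along the cylinder and dilations -/

lemma eq_zero_of_tendsto_of_integrableOn_Ioi {b : ℝ → ℝ} {L : ℝ}
    (hb : IntegrableOn b (Ioi 0)) (hL : Tendsto b atTop (𝓝 L)) : L = 0 := by
  by_contra h
  have hpos : 0 < |L| / 2 := by positivity
  have h1 : ∀ᶠ t in atTop, |L| / 2 ≤ ‖b t‖ := by
    filter_upwards [hL.norm.eventually (lt_mem_nhds (show |L| / 2 < ‖L‖ by
      rw [Real.norm_eq_abs]; linarith))] with t ht using ht.le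
  obtain ⟨T, hT⟩ := eventually_atTop.1 h1
  have h2 := Integrable.measure_ge_lt_top hb.norm hpos
  have h3 : Ioi (max T 0) ⊆ {x | |L| / 2 ≤ ‖b x‖} ∩ Ioi 0 := fun t ht =>
    ⟨hT t ((le_max_left _ _).trans (le_of_lt ht)), mem_Ioi.2 (lt_of_le_of_lt (le_max_right _ _) (mem_Ioi.1 ht))⟩
  have h4 := (measure_mono h3).trans (Measure.le_restrict_apply (μ := volume) _ _)
  simp only [Real.volume_Ioi, top_le_iff] at h4
  exact h2.ne h4

section Time
variable {E : Type*} [MeasureSpace E] [SFinite (volume : Measure E)]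

/-- Integration in the vertical variable: if the slice integrals of `∂ₜW = W'` and of `H` agree, then
`∫ H = -∫ W(·, 0)`. There is no contribution from `t = ∞`, because `t ↦ ∫ W(·, t)` has a limit and is
integrable. -/
lemma integral_cylinder_eq {D : Set E} {W W' H : E × ℝ → ℝ}
    (hWc : ∀ x ∈ D, ContinuousOn (fun t => W (x, t)) (Ici 0))
    (hWd : ∀ x ∈ D, ∀ t > 0, HasDerivAt (fun s => W (x, s)) (W' (x, t)) t)
    (hD : MeasurableSet D)
    (hW'int : ∀ T > 0, IntegrableOn W' (D ×ˢ Ioc 0 T))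
    (hWint : IntegrableOn W (D ×ˢ Ioi 0))
    (hWT : ∀ T ≥ 0, IntegrableOn (fun x => W (x, T)) D)
    (hH : IntegrableOn H (D ×ˢ Ioi 0))
    (hHW : ∀ t > 0, ∫ x in D, W' (x, t) = ∫ x in D, H (x, t)) :
    ∫ z in D ×ˢ Ioi 0, H z = - ∫ x in D, W (x, 0) := by
  have hH' : Integrable H ((volume.restrict D).prod (volume.restrict (Ioi 0))) := by
    rw [Measure.prod_restrict]; exact hH
  have hW2 : Integrable W ((volume.restrict D).prod (volume.restrict (Ioi 0))) := by
    rw [Measure.prod_restrict]; exact hWint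
  have hk : IntegrableOn (fun t => ∫ x in D, H (x, t)) (Ioi 0) := hH'.integral_prod_right
  have hb : IntegrableOn (fun t => ∫ x in D, W (x, t)) (Ioi 0) := hW2.integral_prod_right
  have e1 : ∫ z in D ×ˢ Ioi 0, H z = ∫ t in Ioi 0, ∫ x in D, H (x, t) := by
    have := integral_prod_symm _ hH'
    rwa [Measure.prod_restrict] at this
  have e2 : ∀ T > 0, ∫ t in (0:ℝ)..T, ∫ x in D, H (x, t) =
      (∫ x in D, W (x, T)) - ∫ x in D, W (x, 0) := by
    intro T hT
    have hI : Integrable W' ((volume.restrict D).prod (volume.restrict (Ioc 0 T))) := by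
      rw [Measure.prod_restrict]; exact hW'int T hT
    rw [intervalIntegral.integral_of_le hT.le,
      setIntegral_congr_fun measurableSet_Ioc (fun t ht => (hHW t ht.1).symm),
      ← integral_prod_symm _ hI, integral_prod _ hI, ← integral_sub (hWT T hT.le) (hWT 0 le_rfl)]
    apply integral_congr_ae
    filter_upwards [hI.prod_right_ae, ae_restrict_mem hD] with x hx hxD
    rw [← intervalIntegral.integral_of_le hT.le]
    exact intervalIntegral.integral_eq_sub_of_hasDerivAt_of_le hT.le
      ((hWc x hxD).mono Icc_subset_Ici_self) (fun t ht => hWd x hxD t ht.1)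
      ((intervalIntegrable_iff_integrableOn_Ioc_of_le hT.le).2 hx)
  have hlim := intervalIntegral_tendsto_integral_Ioi 0 hk tendsto_id
  have hlim2 : Tendsto (fun T => ∫ x in D, W (x, T)) atTop
      (𝓝 ((∫ t in Ioi 0, ∫ x in D, H (x, t)) + ∫ x in D, W (x, 0))) := by
    refine (hlim.add_const (∫ x in D, W (x, 0))).congr' ?_
    filter_upwards [eventually_gt_atTop 0] with T hT
    simp only [id]
    rw [e2 T hT]; ring
  have := eq_zero_of_tendsto_of_integrableOn_Ioi hb hlim2
  rw [e1]; linarith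
end Time

section Scaling
variable {n : ℕ}

/-- The anisotropic dilation `(x, t) ↦ (l x, k t)`. -/
def dil (l k : ℝ) (z : EuclideanSpace ℝ (Fin n) × ℝ) : EuclideanSpace ℝ (Fin n) × ℝ :=
  (l • z.1, k * z.2)

/-- The dilation `dil l k` as a continuous linear map. -/
def dilL (l k : ℝ) : (EuclideanSpace ℝ (Fin n) × ℝ) →L[ℝ] (EuclideanSpace ℝ (Fin n) × ℝ) :=
  (l • ContinuousLinearMap.id ℝ _).prodMap (k • ContinuousLinearMap.id ℝ _)

lemma dilL_apply (l k : ℝ) (z : EuclideanSpace ℝ (Fin n) × ℝ) : dilL l k z = dil l k z := by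
  rfl

lemma dilL_det (l k : ℝ) : (dilL (n := n) l k).det = l ^ n * k := by
  have : (dilL (n := n) l k).toLinearMap =
      (l • LinearMap.id).prodMap (k • LinearMap.id) := by
    ext <;> simp [dilL]
  rw [ContinuousLinearMap.det, this, LinearMap.det_prodMap]
  simp

lemma hasFDerivAt_dil (l k : ℝ) (z : EuclideanSpace ℝ (Fin n) × ℝ) :
    HasFDerivAt (dil l k) (dilL l k) z := by
  have := (dilL (n := n) l k).hasFDerivAt (x := z)
  have e : (dil (n := n) l k) = dilL l k := by ext1 z; rw [dilL_apply]
  rwa [e]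

lemma dil_image {l k : ℝ} (hl : 0 < l) (hk : 0 < k) (Ω : Set (EuclideanSpace ℝ (Fin n))) :
    dil l k '' ({x | l • x ∈ Ω} ×ˢ Ioi 0) = Ω ×ˢ Ioi 0 := by
  ext ⟨x, t⟩
  constructor
  · rintro ⟨⟨y, s⟩, ⟨h1, h2⟩, h3⟩
    simp only [dil, Prod.mk.injEq] at h3
    obtain ⟨rfl, rfl⟩ := h3
    exact ⟨h1, mul_pos hk h2⟩
  · rintro ⟨h1, h2⟩
    refine ⟨(l⁻¹ • x, k⁻¹ * t), ⟨?_, ?_⟩, ?_⟩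
    · simpa [smul_smul, hl.ne'] using h1
    · exact mul_pos (inv_pos.2 hk) h2
    · simp [dil, smul_smul, hl.ne', hk.ne']

lemma dil_injective {l k : ℝ} (hl : 0 < l) (hk : 0 < k) :
    Function.Injective (dil (n := n) l k) := by
  rintro ⟨x, t⟩ ⟨y, s⟩ h
  simp only [dil, Prod.mk.injEq] at h
  ext1
  · exact smul_right_injective _ hl.ne' h.1
  · exact mul_left_cancel₀ hk.ne' h.2

variable {Ω : Set (EuclideanSpace ℝ (Fin n))}

/-- Recorded explicitly because the instance is not found through `volume` on the product. -/
lemma isAddHaar_cyl (n : ℕ) :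
    (volume : Measure (EuclideanSpace ℝ (Fin n) × ℝ)).IsAddHaarMeasure :=
  inferInstanceAs ((volume : Measure (EuclideanSpace ℝ (Fin n))).prod
    (volume : Measure ℝ)).IsAddHaarMeasure

lemma isOpen_dilDomain (hΩ : IsOpen Ω) (l : ℝ) : IsOpen {x | l • x ∈ Ω} :=
  hΩ.preimage (continuous_const_smul l)

lemma integrableOn_comp_dil (hΩ : IsOpen Ω) {l k : ℝ} (hl : 0 < l) (hk : 0 < k)
    {h : EuclideanSpace ℝ (Fin n) × ℝ → ℝ} (hh : IntegrableOn h (Ω ×ˢ Ioi 0)) :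
    IntegrableOn (fun z => h (dil l k z)) ({x | l • x ∈ Ω} ×ˢ Ioi 0) := by
  have := isAddHaar_cyl n
  rw [← dil_image hl hk, integrableOn_image_iff_integrableOn_abs_det_fderiv_smul volume
    ((isOpen_dilDomain hΩ l).measurableSet.prod measurableSet_Ioi)
    (fun z _ => (hasFDerivAt_dil l k z).hasFDerivWithinAt) (dil_injective hl hk).injOn] at hh
  have h0 : |(dilL (n := n) l k).det| ≠ 0 := by
    rw [dilL_det]; positivity
  have := hh.smul (|(dilL (n := n) l k).det|⁻¹)
  refine this.congr (ae_of_all _ fun z => ?_)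
  simp [h0]

lemma integral_comp_dil (hΩ : IsOpen Ω) {l k : ℝ} (hl : 0 < l) (hk : 0 < k)
    (h : EuclideanSpace ℝ (Fin n) × ℝ → ℝ) :
    ∫ z in {x | l • x ∈ Ω} ×ˢ Ioi 0, h (dil l k z) = (l ^ n * k)⁻¹ * ∫ z in Ω ×ˢ Ioi 0, h z := by
  have := isAddHaar_cyl n
  rw [← dil_image hl hk Ω, integral_image_eq_integral_abs_det_fderiv_smul volume
    ((isOpen_dilDomain hΩ l).measurableSet.prod measurableSet_Ioi)
    (fun z _ => (hasFDerivAt_dil l k z).hasFDerivWithinAt) (dil_injective hl hk).injOn]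
  have h0 : (0:ℝ) < l ^ n * k := by positivity
  simp only [dilL_det, smul_eq_mul, integral_const_mul, abs_of_pos h0]
  field_simp
end Scaling

/-! ### The weak formulation with dilated test functions -/

/-- The `i`-th horizontal unit vector of `ℝⁿ × ℝ`. -/
def ex {n : ℕ} (i : Fin n) : EuclideanSpace ℝ (Fin n) × ℝ := (EuclideanSpace.single i 1, 0)

/-- The vertical unit vector of `ℝⁿ × ℝ`. -/
def et {n : ℕ} : EuclideanSpace ℝ (Fin n) × ℝ := (0, 1)

lemma norm_ex {n : ℕ} (i : Fin n) : ‖ex i‖ = 1 := by simp [ex, Prod.norm_def]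
lemma norm_et {n : ℕ} : ‖et (n := n)‖ = 1 := by simp [et, Prod.norm_def]

/-- A bounded finite-energy solution `F` of `ΔF = m²F` on the half-cylinder over a bounded open set
`Ω`, star-shaped about `0`, with zero lateral data and nonlinear Neumann condition
`-∂ₜF = g(F)` at `t = 0`. The field `bound` records that first and second derivatives are bounded on
bounded parts of the cylinder; `neumann` says that `∂ₜF(x, ·)` extends continuously to `t = 0` with
the value `-g(F(x, 0))`. -/
structure CylData {n : ℕ} (Ω : Set (EuclideanSpace ℝ (Fin n)))
    (F : EuclideanSpace ℝ (Fin n) × ℝ → ℝ) (m : ℝ) (g : ℝ → ℝ) : Prop where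
  isOpen : IsOpen Ω
  bdd : Bornology.IsBounded Ω
  star : ∀ x ∈ Ω, ∀ s ∈ Icc (0:ℝ) 1, s • x ∈ Ω
  cont : ContinuousOn F (closure Ω ×ˢ Ici 0)
  bddF : ∃ M, ∀ z ∈ closure Ω ×ˢ Ici 0, |F z| ≤ M
  dir : ∀ x ∈ frontier Ω, ∀ t, 0 ≤ t → F (x, t) = 0
  c2 : ContDiffOn ℝ 2 F (Ω ×ˢ Ioi 0)
  bound : ∀ T : ℝ, ∃ C, ∀ z ∈ Ω ×ˢ Ioc 0 T,
    ‖fderiv ℝ F z‖ ≤ C ∧ ‖fderiv ℝ (fderiv ℝ F) z‖ ≤ C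
  pde : ∀ z ∈ Ω ×ˢ Ioi 0, ∑ i, fderiv ℝ (fderiv ℝ F) z (ex i) (ex i) +
    fderiv ℝ (fderiv ℝ F) z et et = m ^ 2 * F z
  neumann : ∀ x ∈ Ω, ∃ w : ℝ → ℝ, ContinuousOn w (Ici 0) ∧
    (∀ t > 0, w t = fderiv ℝ F (x, t) et) ∧ w 0 = - g (F (x, 0))
  intX : ∀ i, IntegrableOn (fun z => (fderiv ℝ F z (ex i)) ^ 2) (Ω ×ˢ Ioi 0)
  intT : IntegrableOn (fun z => (fderiv ℝ F z et) ^ 2) (Ω ×ˢ Ioi 0)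
  intU : IntegrableOn (fun z => (F z) ^ 2) (Ω ×ˢ Ioi 0)
  gcont : Continuous g

lemma integrableOn_mul_of_sq {X : Type*} [MeasurableSpace X] {μ : Measure X} {s : Set X}
    {a b : X → ℝ} (ha : AEStronglyMeasurable a (μ.restrict s))
    (hb : AEStronglyMeasurable b (μ.restrict s))
    (ha2 : IntegrableOn (fun x => a x ^ 2) s μ) (hb2 : IntegrableOn (fun x => b x ^ 2) s μ) :
    IntegrableOn (fun x => a x * b x) s μ :=
  ((memLp_two_iff_integrable_sq ha).2 ha2).integrable_mul ((memLp_two_iff_integrable_sq hb).2 hb2)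

namespace CylData
variable {n : ℕ} {Ω : Set (EuclideanSpace ℝ (Fin n))}
    {F : EuclideanSpace ℝ (Fin n) × ℝ → ℝ} {m : ℝ} {g : ℝ → ℝ}

lemma isOpen_cyl (c : CylData Ω F m g) : IsOpen (Ω ×ˢ Ioi (0:ℝ)) := c.isOpen.prod isOpen_Ioi

lemma contDiffOn_fderiv (c : CylData Ω F m g) : ContDiffOn ℝ 1 (fderiv ℝ F) (Ω ×ˢ Ioi 0) :=
  c.c2.fderiv_of_isOpen c.isOpen_cyl (by norm_num)

lemma hasFDerivAt (c : CylData Ω F m g) {z} (hz : z ∈ Ω ×ˢ Ioi 0) :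
    HasFDerivAt F (fderiv ℝ F z) z :=
  ((c.c2.contDiffAt (c.isOpen_cyl.mem_nhds hz)).differentiableAt (by norm_num)).hasFDerivAt

lemma hasFDerivAt2 (c : CylData Ω F m g) {z} (hz : z ∈ Ω ×ˢ Ioi 0) :
    HasFDerivAt (fderiv ℝ F) (fderiv ℝ (fderiv ℝ F) z) z :=
  ((c.contDiffOn_fderiv.contDiffAt (c.isOpen_cyl.mem_nhds hz)).differentiableAt
    (by norm_num)).hasFDerivAt

lemma cont0 (c : CylData Ω F m g) : ContinuousOn F (Ω ×ˢ Ioi 0) := c.c2.continuousOn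

lemma cont1 (c : CylData Ω F m g) (v) : ContinuousOn (fun z => fderiv ℝ F z v) (Ω ×ˢ Ioi 0) :=
  c.contDiffOn_fderiv.continuousOn.clm_apply continuousOn_const

lemma cont2 (c : CylData Ω F m g) (v w) :
    ContinuousOn (fun z => fderiv ℝ (fderiv ℝ F) z v w) (Ω ×ˢ Ioi 0) :=
  ((c.contDiffOn_fderiv.continuousOn_fderiv_of_isOpen c.isOpen_cyl le_rfl).clm_apply
    continuousOn_const).clm_apply continuousOn_const

lemma exists_bound (c : CylData Ω F m g) (T : ℝ) : ∃ C, 0 ≤ C ∧ ∀ z ∈ Ω ×ˢ Ioc 0 T, |F z| ≤ C ∧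
    (∀ v, ‖v‖ = 1 → |fderiv ℝ F z v| ≤ C) ∧
    (∀ v, ‖v‖ = 1 → |fderiv ℝ (fderiv ℝ F) z v v| ≤ C) := by
  obtain ⟨M, hM⟩ := c.bddF
  obtain ⟨C, hC⟩ := c.bound T
  refine ⟨max (max M C) 0, le_max_right _ _, fun z hz => ?_⟩
  have h1 := hM z ⟨subset_closure hz.1, hz.2.1.le⟩
  obtain ⟨h2, h3⟩ := hC z hz
  have hCC : C ≤ max (max M C) 0 := (le_max_right _ _).trans (le_max_left _ _)
  refine ⟨h1.trans ((le_max_left _ _).trans (le_max_left _ _)), fun v hv => ?_, fun v hv => ?_⟩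
  · have := (fderiv ℝ F z).le_opNorm v
    rw [hv, mul_one, Real.norm_eq_abs] at this
    linarith
  · have := (fderiv ℝ (fderiv ℝ F) z).le_opNorm₂ v v
    rw [hv, mul_one, mul_one, Real.norm_eq_abs] at this
    linarith

lemma dom_subset (c : CylData Ω F m g) {l : ℝ} (hl : 1 ≤ l) : {x | l • x ∈ Ω} ⊆ Ω := by
  intro x hx
  have := c.star _ hx l⁻¹ ⟨by positivity, inv_le_one_of_one_le₀ hl⟩
  rwa [smul_smul, inv_mul_cancel₀ (by linarith), one_smul] at this

lemma volume_ne_top (c : CylData Ω F m g) {D : Set (EuclideanSpace ℝ (Fin n))} (hD : D ⊆ Ω) :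
    volume D ≠ ⊤ :=
  ((measure_mono hD).trans_lt c.bdd.measure_lt_top).ne

/-- The dilated function vanishes at the lateral boundary of its domain, in the form required by
`integral_green`. -/
lemma compact_super (c : CylData Ω F m g) {l : ℝ} (hl : 0 < l) {s : ℝ} (hs : 0 ≤ s) {ε : ℝ}
    (hε : 0 < ε) : IsCompact {x | x ∈ {x | l • x ∈ Ω} ∧ ε ≤ |F (l • x, s)|} := by
  have h1 : IsCompact {y | y ∈ closure Ω ∧ ε ≤ |F (y, s)|} := by
    have hc : ContinuousOn (fun y => |F (y, s)|) (closure Ω) :=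
      (c.cont.comp (f := fun y => (y, s)) (by fun_prop) (fun y hy => ⟨hy, hs⟩)).abs
    refine c.bdd.isCompact_closure.of_isClosed_subset ?_ (fun y hy => hy.1)
    exact hc.preimage_isClosed_of_isClosed isClosed_closure isClosed_Ici
  have h2 : {x | x ∈ {x | l • x ∈ Ω} ∧ ε ≤ |F (l • x, s)|} =
      (fun y => l⁻¹ • y) '' {y | y ∈ closure Ω ∧ ε ≤ |F (y, s)|} := by
    ext x
    constructor
    · rintro ⟨hx1, hx2⟩
      exact ⟨l • x, ⟨subset_closure hx1, hx2⟩, by simp [smul_smul, hl.ne']⟩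
    · rintro ⟨y, ⟨hy1, hy2⟩, rfl⟩
      have hy : y ∈ Ω := by
        by_contra hcon
        have : y ∈ frontier Ω := by
          rw [c.isOpen.frontier_eq]; exact ⟨hy1, hcon⟩
        rw [c.dir y this s hs, abs_zero] at hy2
        linarith
      simpa [smul_smul, hl.ne'] using ⟨hy, hy2⟩
  rw [h2]
  exact h1.image (continuous_const_smul _)

/-- Green's identity in direction `i` on a horizontal slice. -/
lemma slice_green (c : CylData Ω F m g) {l k : ℝ} (hl : 1 ≤ l) (hk : 0 < k) {t : ℝ} (ht : 0 < t)
    (i : Fin n) :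
    IntegrableOn (fun x => l * fderiv ℝ F (dil l k (x, t)) (ex i) * fderiv ℝ F (x, t) (ex i) +
      F (dil l k (x, t)) * fderiv ℝ (fderiv ℝ F) (x, t) (ex i) (ex i)) {x | l • x ∈ Ω} ∧
    ∫ x in {x | l • x ∈ Ω},
      (l * fderiv ℝ F (dil l k (x, t)) (ex i) * fderiv ℝ F (x, t) (ex i) +
      F (dil l k (x, t)) * fderiv ℝ (fderiv ℝ F) (x, t) (ex i) (ex i)) = 0 := by
  have hl0 : 0 < l := by linarith
  set D := {x | l • x ∈ Ω} with hD
  have hDo : IsOpen D := isOpen_dilDomain c.isOpen l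
  have hDs : D ⊆ Ω := c.dom_subset hl
  have hfin := c.volume_ne_top hDs
  obtain ⟨C, hC0, hC⟩ := c.exists_bound (max t (k * t))
  have hm1 : ∀ x ∈ D, (x, t) ∈ Ω ×ˢ Ioi (0:ℝ) := fun x hx => ⟨hDs hx, ht⟩
  have hm2 : ∀ x ∈ D, dil l k (x, t) ∈ Ω ×ˢ Ioi (0:ℝ) := fun x hx => ⟨hx, mul_pos hk ht⟩
  have hb1 : ∀ x ∈ D, (x, t) ∈ Ω ×ˢ Ioc (0:ℝ) (max t (k * t)) :=
    fun x hx => ⟨hDs hx, ht, le_max_left _ _⟩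
  have hb2 : ∀ x ∈ D, dil l k (x, t) ∈ Ω ×ˢ Ioc (0:ℝ) (max t (k * t)) :=
    fun x hx => ⟨hx, mul_pos hk ht, le_max_right _ _⟩
  have hin : ∀ x : EuclideanSpace ℝ (Fin n), HasFDerivAt (fun x => (x, t))
      (ContinuousLinearMap.inl ℝ (EuclideanSpace ℝ (Fin n)) ℝ) x := fun x => by
    exact hasFDerivAt_prodMk_left x t
  set φ : EuclideanSpace ℝ (Fin n) → ℝ := fun x => F (dil l k (x, t)) with hφ
  set w : EuclideanSpace ℝ (Fin n) → ℝ := fun x => fderiv ℝ F (x, t) (ex i) with hw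
  set φ' : EuclideanSpace ℝ (Fin n) → EuclideanSpace ℝ (Fin n) →L[ℝ] ℝ := fun x =>
    (fderiv ℝ F (dil l k (x, t))).comp ((dilL l k).comp (ContinuousLinearMap.inl ℝ _ ℝ)) with hφ'
  set w' : EuclideanSpace ℝ (Fin n) → EuclideanSpace ℝ (Fin n) →L[ℝ] ℝ := fun x =>
    (ContinuousLinearMap.apply ℝ ℝ (ex i)).comp
      ((fderiv ℝ (fderiv ℝ F) (x, t)).comp (ContinuousLinearMap.inl ℝ _ ℝ)) with hw'
  have hφd : ∀ x ∈ D, HasFDerivAt φ (φ' x) x := fun x hx => by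
    have h1 : HasFDerivAt (fun x => dil l k (x, t)) _ x :=
      HasFDerivAt.comp (g := dil l k) x (hasFDerivAt_dil l k (x, t)) (hin x)
    exact (c.hasFDerivAt (hm2 x hx)).comp x h1
  have hwd : ∀ x ∈ D, HasFDerivAt w (w' x) x := fun x hx =>
    (ContinuousLinearMap.apply ℝ ℝ (ex i)).hasFDerivAt.comp x
      ((c.hasFDerivAt2 (hm1 x hx)).comp x (hin x))
  have eφ : ∀ x, φ' x (EuclideanSpace.single i 1) = l * fderiv ℝ F (dil l k (x, t)) (ex i) := by
    intro x
    have : dilL l k (EuclideanSpace.single i 1, 0) = l • ex i := by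
      rw [dilL_apply]; ext1 <;> simp [dil, ex]
    simp [hφ', this]
  have ew : ∀ x, w' x (EuclideanSpace.single i 1) =
      fderiv ℝ (fderiv ℝ F) (x, t) (ex i) (ex i) := by
    intro x; simp [hw', ex]
  have hdc : Continuous (fun x : EuclideanSpace ℝ (Fin n) => dil l k (x, t)) := by
    unfold dil; fun_prop
  have hφ'c : ContinuousOn (fun x => φ' x (EuclideanSpace.single i 1)) D := by
    simp only [eφ]
    exact ((c.cont1 (ex i)).comp hdc.continuousOn hm2).const_smul l
  have hw'c : ContinuousOn (fun x => w' x (EuclideanSpace.single i 1)) D := by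
    simp only [ew]
    exact (c.cont2 (ex i) (ex i)).comp (by fun_prop) hm1
  have hφc : ContinuousOn φ D := fun x hx => (hφd x hx).continuousAt.continuousWithinAt
  have hwc : ContinuousOn w D := fun x hx => (hwd x hx).continuousAt.continuousWithinAt
  have hCl : C ≤ l * C := by nlinarith
  have B1 : ∀ x ∈ D, |φ x| ≤ l * C := fun x hx => ((hC _ (hb2 x hx)).1).trans hCl
  have B2 : ∀ x ∈ D, |w x| ≤ l * C := fun x hx => ((hC _ (hb1 x hx)).2.1 _ (norm_ex i)).trans hCl
  have B3 : ∀ x ∈ D, |φ' x (EuclideanSpace.single i 1)| ≤ l * C := fun x hx => by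
    rw [eφ, abs_mul, abs_of_pos hl0]
    exact mul_le_mul_of_nonneg_left ((hC _ (hb2 x hx)).2.1 _ (norm_ex i)) hl0.le
  have B4 : ∀ x ∈ D, |w' x (EuclideanSpace.single i 1)| ≤ l * C := fun x hx => by
    rw [ew]; exact ((hC _ (hb1 x hx)).2.2 _ (norm_ex i)).trans hCl
  have key := integral_green (μ := volume) hDo hfin hφd hwd hφ'c hw'c B1 B2 B3 B4
    (fun ε hε => c.compact_super hl0 (mul_pos hk ht).le hε)
  simp only [eφ, ew] at key
  refine ⟨?_, key⟩
  have hint : IntegrableOn (fun x => φ' x (EuclideanSpace.single i 1) * w x +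
      φ x * w' x (EuclideanSpace.single i 1)) D := by
    refine integrableOn_of_continuousOn_of_bound hDo.measurableSet hfin
      ((hφ'c.mul hwc).add (hφc.mul hw'c)) (C := l * C * (l * C) + l * C * (l * C)) ?_
    intro x hx
    have : 0 ≤ l * C := by positivity
    refine (abs_add_le _ _).trans ?_
    rw [abs_mul, abs_mul]
    exact add_le_add (mul_le_mul (B3 x hx) (B2 x hx) (abs_nonneg _) this)
      (mul_le_mul (B1 x hx) (B4 x hx) (abs_nonneg _) this)
  simpa only [eφ, ew] using hint

lemma mapsTo_dil (l : ℝ) {k : ℝ} (hk : 0 < k) :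
    MapsTo (dil l k) ({x | l • x ∈ Ω} ×ˢ Ioi (0:ℝ)) (Ω ×ˢ Ioi 0) :=
  fun _ hz => ⟨hz.1, mul_pos hk hz.2⟩

lemma continuous_dil (l k : ℝ) : Continuous (dil (n := n) l k) := by
  unfold dil; fun_prop

/-- The weak formulation tested against `F ∘ dil l k`. For `l ≥ 1` its horizontal domain
`{x | l • x ∈ Ω}` is contained in `Ω`, so that `F ∘ dil l k`, extended by zero, is an admissible
test function. -/
lemma weak (c : CylData Ω F m g) {l k : ℝ} (hl : 1 ≤ l) (hk : 0 < k) :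
    IntegrableOn (fun z => (∑ i, l * fderiv ℝ F (dil l k z) (ex i) * fderiv ℝ F z (ex i)) +
      k * fderiv ℝ F (dil l k z) et * fderiv ℝ F z et + m ^ 2 * (F (dil l k z) * F z))
      ({x | l • x ∈ Ω} ×ˢ Ioi 0) ∧
    ∫ z in {x | l • x ∈ Ω} ×ˢ Ioi 0,
      ((∑ i, l * fderiv ℝ F (dil l k z) (ex i) * fderiv ℝ F z (ex i)) +
      k * fderiv ℝ F (dil l k z) et * fderiv ℝ F z et + m ^ 2 * (F (dil l k z) * F z)) =
    ∫ x in {x | l • x ∈ Ω}, g (F (x, 0)) * F (l • x, 0) := by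
  have hl0 : 0 < l := by linarith
  set D := {x | l • x ∈ Ω} with hD
  have hDo : IsOpen D := isOpen_dilDomain c.isOpen l
  have hDs : D ⊆ Ω := c.dom_subset hl
  have hfin := c.volume_ne_top hDs
  have hQ : D ×ˢ Ioi (0:ℝ) ⊆ Ω ×ˢ Ioi 0 := prod_mono hDs subset_rfl
  have hQm : MeasurableSet (D ×ˢ Ioi (0:ℝ)) := hDo.measurableSet.prod measurableSet_Ioi
  have hmt : MapsTo (dil l k) (D ×ˢ Ioi (0:ℝ)) (Ω ×ˢ Ioi 0) := mapsTo_dil l hk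
  have hdc := continuous_dil (n := n) l k
  -- continuity of the factors
  have cF := c.cont0.mono hQ
  have cFd : ContinuousOn (fun z => F (dil l k z)) (D ×ˢ Ioi 0) := c.cont0.comp hdc.continuousOn hmt
  have c1 := fun v => (c.cont1 v).mono hQ
  have c1d : ∀ v, ContinuousOn (fun z => fderiv ℝ F (dil l k z) v) (D ×ˢ Ioi 0) :=
    fun v => (c.cont1 v).comp hdc.continuousOn hmt
  have c2' := fun v w => (c.cont2 v w).mono hQ
  have iX : ∀ i, IntegrableOn (fun z => fderiv ℝ F (dil l k z) (ex i) * fderiv ℝ F z (ex i))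
      (D ×ˢ Ioi 0) := fun i =>
    integrableOn_mul_of_sq ((c1d _).aestronglyMeasurable hQm) ((c1 _).aestronglyMeasurable hQm)
      (integrableOn_comp_dil c.isOpen hl0 hk (c.intX i)) ((c.intX i).mono_set hQ)
  have iT : IntegrableOn (fun z => fderiv ℝ F (dil l k z) et * fderiv ℝ F z et)
      (D ×ˢ Ioi 0) :=
    integrableOn_mul_of_sq ((c1d _).aestronglyMeasurable hQm) ((c1 _).aestronglyMeasurable hQm)
      (integrableOn_comp_dil c.isOpen hl0 hk c.intT) (c.intT.mono_set hQ)
  have iU : IntegrableOn (fun z => F (dil l k z) * F z) (D ×ˢ Ioi 0) :=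
    integrableOn_mul_of_sq (cFd.aestronglyMeasurable hQm) (cF.aestronglyMeasurable hQm)
      (integrableOn_comp_dil c.isOpen hl0 hk c.intU) (c.intU.mono_set hQ)
  have iTU : IntegrableOn (fun z => fderiv ℝ F z et * F (dil l k z)) (D ×ˢ Ioi 0) :=
    integrableOn_mul_of_sq ((c1 _).aestronglyMeasurable hQm) (cFd.aestronglyMeasurable hQm)
      (c.intT.mono_set hQ) (integrableOn_comp_dil c.isOpen hl0 hk c.intU)
  have hH : IntegrableOn (fun z =>
      (∑ i, l * fderiv ℝ F (dil l k z) (ex i) * fderiv ℝ F z (ex i)) +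
      k * fderiv ℝ F (dil l k z) et * fderiv ℝ F z et + m ^ 2 * (F (dil l k z) * F z))
      (D ×ˢ Ioi 0) := by
    refine (Integrable.add (integrable_finsetSum _ fun i _ => ?_) ?_).add (iU.const_mul _)
    · simp only [mul_assoc]; exact (iX i).const_mul l
    · simp only [mul_assoc]; exact iT.const_mul k
  refine ⟨hH, ?_⟩
  -- `W` is `∂ₜF · (F ∘ dil l k)`, extended to `t = 0` through the Neumann condition
  set W : EuclideanSpace ℝ (Fin n) × ℝ → ℝ := fun z =>
    if z.2 ≤ 0 then - g (F (z.1, 0)) * F (l • z.1, 0) else fderiv ℝ F z et * F (dil l k z) with hW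
  set W' : EuclideanSpace ℝ (Fin n) × ℝ → ℝ := fun z =>
    fderiv ℝ (fderiv ℝ F) z et et * F (dil l k z) +
      fderiv ℝ F z et * (k * fderiv ℝ F (dil l k z) et) with hW'
  have cW' : ContinuousOn W' (D ×ˢ Ioi 0) :=
    ((c2' et et).mul cFd).add ((c1 et).mul ((c1d et).const_smul k))
  have bW' : ∀ T > 0, ∃ C, ∀ z ∈ D ×ˢ Ioc 0 T, |W' z| ≤ C := by
    intro T hT
    obtain ⟨C, hC0, hC⟩ := c.exists_bound (max T (k * T))
    refine ⟨C * C + C * (k * C), fun z hz => ?_⟩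
    have h1 := hC z ⟨hDs hz.1, hz.2.1, hz.2.2.trans (le_max_left _ _)⟩
    have h2 := hC (dil l k z) ⟨hz.1, mul_pos hk hz.2.1,
      (mul_le_mul_of_nonneg_left hz.2.2 hk.le).trans (le_max_right _ _)⟩
    refine (abs_add_le _ _).trans ?_
    rw [abs_mul, abs_mul, abs_mul, abs_of_pos hk]
    exact add_le_add (mul_le_mul (h1.2.2 _ norm_et) h2.1 (abs_nonneg _) hC0)
      (mul_le_mul (h1.2.1 _ norm_et) (mul_le_mul_of_nonneg_left (h2.2.1 _ norm_et) hk.le)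
        (by positivity) hC0)
  have hF0 : ContinuousOn (fun x => F (x, 0)) (closure Ω) :=
    c.cont.comp (f := fun y => (y, (0:ℝ))) (by fun_prop) (fun y hy => ⟨hy, self_mem_Ici⟩)
  have hfinT : ∀ T : ℝ, volume (D ×ˢ Ioc 0 T) ≠ ⊤ := fun T => by
    rw [Measure.volume_eq_prod, Measure.prod_prod]
    exact ENNReal.mul_ne_top hfin (by simp)
  have main := integral_cylinder_eq (D := D) (W := W) (W' := W') ?_ ?_ hDo.measurableSet ?_ ?_ ?_
    hH ?_
  · rw [main, ← integral_neg]
    refine setIntegral_congr_fun hDo.measurableSet fun x _ => ?_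
    simp [hW]
  · -- time continuity up to `t = 0`
    intro x hx
    obtain ⟨w, hw1, hw2, hw3⟩ := c.neumann x (hDs hx)
    have h1 : ContinuousOn (fun t => F (dil l k (x, t))) (Ici 0) :=
      c.cont.comp (f := fun t => dil l k (x, t)) (by unfold dil; fun_prop)
        (fun t ht => ⟨subset_closure hx, mul_nonneg hk.le ht⟩)
    refine (hw1.mul h1).congr fun t ht => ?_
    rcases eq_or_lt_of_le (mem_Ici.1 ht) with h0 | h0
    · subst h0
      simp [hW, hw3, dil]
    · simp [hW, not_le.2 h0, hw2 t h0]
  · -- time derivative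
    intro x hx t ht
    have hz : (x, t) ∈ Ω ×ˢ Ioi (0:ℝ) := ⟨hDs hx, ht⟩
    have hz2 : dil l k (x, t) ∈ Ω ×ˢ Ioi (0:ℝ) := ⟨hx, mul_pos hk ht⟩
    have hin : HasDerivAt (fun s : ℝ => (x, s)) et t := by
      simpa [et] using (hasDerivAt_const t x).prodMk (hasDerivAt_id t)
    have hd1 : HasDerivAt (fun s => fderiv ℝ F (x, s) et)
        (fderiv ℝ (fderiv ℝ F) (x, t) et et) t := by
      have := (c.hasFDerivAt2 hz).comp_hasDerivAt t hin
      exact (ContinuousLinearMap.apply ℝ ℝ et).hasFDerivAt.comp_hasDerivAt t this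
    have hd2 : HasDerivAt (fun s => F (dil l k (x, s))) (k * fderiv ℝ F (dil l k (x, t)) et) t := by
      have h3 := (hasFDerivAt_dil l k (x, t)).comp_hasDerivAt t hin
      have h4 := (c.hasFDerivAt hz2).comp_hasDerivAt t h3
      have h5 : dilL l k (et (n := n)) = k • et := by
        rw [dilL_apply]; ext1 <;> simp [dil, et]
      rw [h5, map_smul, smul_eq_mul] at h4
      exact h4
    refine (hd1.mul hd2).congr_of_eventuallyEq ?_
    filter_upwards [lt_mem_nhds ht] with s hs
    simp [hW, not_le.2 hs]
  · intro T hT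
    obtain ⟨C, hC⟩ := bW' T hT
    exact integrableOn_of_continuousOn_of_bound (hDo.measurableSet.prod measurableSet_Ioc)
      (hfinT T) (cW'.mono (prod_mono subset_rfl Ioc_subset_Ioi_self)) hC
  · refine iTU.congr_fun (fun z hz => ?_) hQm
    have : ¬ z.2 ≤ 0 := not_le.2 hz.2
    simp [hW, this]
  · intro T hT
    rcases eq_or_lt_of_le hT with h0 | h0
    · subst h0
      simp only [hW, le_refl, if_true]
      have hc1 : ContinuousOn (fun x => - g (F (x, 0)) * F (l • x, 0)) (closure D) := by
        have hcl : closure D ⊆ closure Ω := closure_mono hDs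
        have hcl2 : MapsTo (fun x => l • x) (closure D) (closure Ω) := by
          have h0 : MapsTo (fun x => l • x) D Ω := fun x hx => hx
          exact h0.closure (continuous_const_smul l)
        exact ((c.gcont.comp_continuousOn (hF0.mono hcl)).neg).mul
          (hF0.comp (continuous_const_smul l).continuousOn hcl2)
      exact (hc1.integrableOn_compact (c.bdd.subset hDs).isCompact_closure).mono_set subset_closure
    · obtain ⟨C, hC0, hC⟩ := c.exists_bound (max T (k * T))
      simp only [hW, not_le.2 h0, if_false]
      refine integrableOn_of_continuousOn_of_bound hDo.measurableSet hfin (C := C * C) ?_ ?_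
      · exact ((c1 et).mul cFd).comp (f := fun x => (x, T)) (by fun_prop) (fun x hx => ⟨hx, h0⟩)
      · intro x hx
        rw [abs_mul]
        exact mul_le_mul ((hC _ ⟨hDs hx, h0, le_max_left _ _⟩).2.1 _ norm_et)
          (hC (dil l k (x, T)) ⟨hx, mul_pos hk h0, le_max_right _ _⟩).1 (abs_nonneg _) hC0
  · -- the slice identity
    intro t ht
    have hsum := fun i => c.slice_green hl hk ht i
    have hint : IntegrableOn (fun x => W' (x, t)) D := by
      obtain ⟨C, hC⟩ := bW' t ht
      exact integrableOn_of_continuousOn_of_bound hDo.measurableSet hfin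
        (cW'.comp (f := fun x => (x, t)) (by fun_prop) (fun x hx => ⟨hx, ht⟩))
        (fun x hx => hC (x, t) ⟨hx, ht, le_rfl⟩)
    have e : ∫ x in D, (W' (x, t) + ∑ i,
        (l * fderiv ℝ F (dil l k (x, t)) (ex i) * fderiv ℝ F (x, t) (ex i) +
          F (dil l k (x, t)) * fderiv ℝ (fderiv ℝ F) (x, t) (ex i) (ex i))) =
        ∫ x in D, W' (x, t) := by
      rw [integral_add hint (integrable_finsetSum _ fun i _ => (hsum i).1),
        integral_finsetSum _ (fun i _ => (hsum i).1),
        Finset.sum_eq_zero (fun i _ => (hsum i).2), add_zero]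
    rw [← e]
    refine setIntegral_congr_fun hDo.measurableSet fun x hx => ?_
    have hp := c.pde (x, t) ⟨hDs hx, ht⟩
    simp only [hW', Finset.sum_add_distrib, ← Finset.mul_sum]
    have : m ^ 2 * (F (dil l k (x, t)) * F (x, t)) = F (dil l k (x, t)) * (m ^ 2 * F (x, t)) := by
      ring
    rw [this, ← hp]
    ring

end CylData

/-! ### From the partial derivative formulation to `CylData` -/

/-- `C²` regularity up to a point of `S`, in the sense of `ContDiffWithinAt`, bounds the genuine
derivatives at nearby points of an open set `O ⊆ S`. The extended derivatives coming from the
definition are used, so that `S` need not have unique differentiability. -/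
lemma exists_local_fderiv_bound {X : Type*} [NormedAddCommGroup X] [NormedSpace ℝ X]
    {f : X → ℝ} {S O : Set X} (hO : IsOpen O) (hOS : O ⊆ S) {z : X} (hz : z ∈ S)
    (hf : ContDiffWithinAt ℝ 2 f S z) :
    ∃ N ∈ 𝓝 z, ∃ C, ∀ y ∈ N ∩ O, ‖fderiv ℝ f y‖ ≤ C ∧ ‖fderiv ℝ (fderiv ℝ f) y‖ ≤ C := by
  have h2 : (2 : WithTop ℕ∞) = 1 + 1 := by norm_num
  have h1 : (1 : WithTop ℕ∞) = 0 + 1 := by norm_num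
  rw [h2, contDiffWithinAt_succ_iff_hasFDerivWithinAt (by simp)] at hf
  obtain ⟨u, hu, -, f', hf', hcf'⟩ := hf
  have hcont1 := hcf'.continuousWithinAt
  have hzu : z ∈ u := mem_of_mem_nhdsWithin (mem_insert z S) hu
  rw [h1, contDiffWithinAt_succ_iff_hasFDerivWithinAt (by simp)] at hcf'
  obtain ⟨u2, hu2, -, f'', hf'', hcf''⟩ := hcf'
  have hcont2 := hcf''.continuousWithinAt
  rw [insert_eq_of_mem hz] at hu
  rw [insert_eq_of_mem hzu] at hu2
  -- local bounds for the candidate derivatives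
  have b1 : ∀ᶠ y in 𝓝[u] z, ‖f' y‖ < ‖f' z‖ + 1 :=
    hcont1.norm.eventually (gt_mem_nhds (by linarith))
  have b2 : ∀ᶠ y in 𝓝[u2] z, ‖f'' y‖ < ‖f'' z‖ + 1 :=
    hcont2.norm.eventually (gt_mem_nhds (by linarith))
  obtain ⟨N1, hN1, hN1'⟩ := mem_nhdsWithin_iff_exists_mem_nhds_inter.1 hu
  obtain ⟨N2, hN2, hN2'⟩ := mem_nhdsWithin_iff_exists_mem_nhds_inter.1 hu2
  obtain ⟨N3, hN3, hN3'⟩ := mem_nhdsWithin_iff_exists_mem_nhds_inter.1 b1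
  obtain ⟨N4, hN4, hN4'⟩ := mem_nhdsWithin_iff_exists_mem_nhds_inter.1 b2
  obtain ⟨N, hNs, hNo, hzN⟩ := mem_nhds_iff.1 (inter_mem (inter_mem hN1 hN2) (inter_mem hN3 hN4))
  refine ⟨N, hNo.mem_nhds hzN, max (‖f' z‖ + 1) (‖f'' z‖ + 1), fun y hy => ?_⟩
  have hNO : IsOpen (N ∩ O) := hNo.inter hO
  have hu_sub : N ∩ O ⊆ u := fun y hy => hN1' ⟨(hNs hy.1).1.1, hOS hy.2⟩
  have hu2_sub : N ∩ O ⊆ u2 := fun y hy => hN2' ⟨(hNs hy.1).1.2, hu_sub hy⟩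
  have d1 : ∀ y ∈ N ∩ O, HasFDerivAt f (f' y) y := fun y hy =>
    (hf' y (hu_sub hy)).hasFDerivAt (mem_of_superset (hNO.mem_nhds hy) hu_sub)
  have d2 : HasFDerivAt (fderiv ℝ f) (f'' y) y := by
    refine ((hf'' y (hu2_sub hy)).hasFDerivAt
      (mem_of_superset (hNO.mem_nhds hy) hu2_sub)).congr_of_eventuallyEq ?_
    filter_upwards [hNO.mem_nhds hy] with x hx using (d1 x hx).fderiv
  rw [(d1 y hy).fderiv, d2.fderiv]
  have e1 : ‖f' y‖ < ‖f' z‖ + 1 := hN3' ⟨(hNs hy.1).2.1, hu_sub hy⟩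
  have e2 : ‖f'' y‖ < ‖f'' z‖ + 1 := hN4' ⟨(hNs hy.1).2.2, hu2_sub hy⟩
  exact ⟨e1.le.trans (le_max_left _ _), e2.le.trans (le_max_right _ _)⟩

lemma exists_fderiv_bound {X : Type*} [NormedAddCommGroup X] [NormedSpace ℝ X]
    {f : X → ℝ} {S O K : Set X} (hO : IsOpen O) (hOS : O ⊆ S)
    (hf : ContDiffOn ℝ 2 f S) (hK : IsCompact K) (hKS : K ⊆ S) :
    ∃ C, ∀ y ∈ K ∩ O, ‖fderiv ℝ f y‖ ≤ C ∧ ‖fderiv ℝ (fderiv ℝ f) y‖ ≤ C := by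
  refine hK.induction_on (p := fun A => ∃ C, ∀ y ∈ A ∩ O,
    ‖fderiv ℝ f y‖ ≤ C ∧ ‖fderiv ℝ (fderiv ℝ f) y‖ ≤ C) ⟨0, by simp⟩ ?_ ?_ ?_
  · rintro A B hAB ⟨C, hC⟩
    exact ⟨C, fun y hy => hC y ⟨hAB hy.1, hy.2⟩⟩
  · rintro A B ⟨C, hC⟩ ⟨C', hC'⟩
    refine ⟨max C C', fun y hy => ?_⟩
    rcases hy.1 with h | h
    · exact ⟨(hC y ⟨h, hy.2⟩).1.trans (le_max_left _ _), (hC y ⟨h, hy.2⟩).2.trans (le_max_left _ _)⟩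
    · exact ⟨(hC' y ⟨h, hy.2⟩).1.trans (le_max_right _ _),
        (hC' y ⟨h, hy.2⟩).2.trans (le_max_right _ _)⟩
  · intro z hz
    obtain ⟨N, hN, hC⟩ := exists_local_fderiv_bound hO hOS (hKS hz) (hf z (hKS hz))
    exact ⟨N, mem_nhdsWithin_of_mem_nhds hN, hC⟩

section Bridge
variable {n : ℕ} {U : EuclideanSpace ℝ (Fin n) → ℝ → ℝ}

lemma pderivX_eq {x : EuclideanSpace ℝ (Fin n)} {t : ℝ}
    (h : DifferentiableAt ℝ (fun z : EuclideanSpace ℝ (Fin n) × ℝ => U z.1 z.2) (x, t))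
    (i : Fin n) :
    pderivX U i x t = fderiv ℝ (fun z : EuclideanSpace ℝ (Fin n) × ℝ => U z.1 z.2) (x, t) (ex i) := by
  have hin : HasFDerivAt (fun y : EuclideanSpace ℝ (Fin n) => (y, t))
      (ContinuousLinearMap.inl ℝ (EuclideanSpace ℝ (Fin n)) ℝ) x := hasFDerivAt_prodMk_left x t
  have h1 : HasFDerivAt (fun y => U y t) _ x :=
    HasFDerivAt.comp (g := fun z : EuclideanSpace ℝ (Fin n) × ℝ => U z.1 z.2) x h.hasFDerivAt hin
  rw [pderivX, h1.fderiv]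
  simp [ex]

lemma pderivT_eq {x : EuclideanSpace ℝ (Fin n)} {t : ℝ}
    (h : DifferentiableAt ℝ (fun z : EuclideanSpace ℝ (Fin n) × ℝ => U z.1 z.2) (x, t)) :
    pderivT U x t = fderiv ℝ (fun z : EuclideanSpace ℝ (Fin n) × ℝ => U z.1 z.2) (x, t) et := by
  have hin : HasDerivAt (fun s : ℝ => (x, s)) et t := by
    simpa [et] using (hasDerivAt_const t x).prodMk (hasDerivAt_id t)
  have h1 : HasDerivAt (fun s => U x s) _ t :=
    HasFDerivAt.comp_hasDerivAt (l := fun z : EuclideanSpace ℝ (Fin n) × ℝ => U z.1 z.2) t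
      h.hasFDerivAt hin
  rw [pderivT]
  exact h1.deriv

lemma cylLaplacian_eq {O : Set (EuclideanSpace ℝ (Fin n) × ℝ)} (hO : IsOpen O)
    (hU : ContDiffOn ℝ 2 (fun z : EuclideanSpace ℝ (Fin n) × ℝ => U z.1 z.2) O)
    {x : EuclideanSpace ℝ (Fin n)} {t : ℝ} (hxt : (x, t) ∈ O) :
    cylLaplacian U x t =
      ∑ i, fderiv ℝ (fderiv ℝ (fun z : EuclideanSpace ℝ (Fin n) × ℝ => U z.1 z.2)) (x, t)
        (ex i) (ex i) +
      fderiv ℝ (fderiv ℝ (fun z : EuclideanSpace ℝ (Fin n) × ℝ => U z.1 z.2)) (x, t) et et := by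
  have hd : ∀ z ∈ O,
      DifferentiableAt ℝ (fun z : EuclideanSpace ℝ (Fin n) × ℝ => U z.1 z.2) z := fun z hz =>
    (hU.contDiffAt (hO.mem_nhds hz)).differentiableAt (by norm_num)
  have hd2 : HasFDerivAt (fderiv ℝ (fun z : EuclideanSpace ℝ (Fin n) × ℝ => U z.1 z.2)) _ (x, t) :=
    (((hU.fderiv_of_isOpen (m := 1) hO (by norm_num)).contDiffAt
      (hO.mem_nhds hxt)).differentiableAt (by norm_num)).hasFDerivAt
  have hX : ∀ᶠ y in 𝓝 x, (y, t) ∈ O :=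
    (Continuous.continuousAt (by fun_prop : Continuous fun y => (y, t))).eventually
      (hO.mem_nhds hxt)
  have hT : ∀ᶠ s in 𝓝 t, (x, s) ∈ O :=
    (Continuous.continuousAt (by fun_prop : Continuous fun s => (x, s))).eventually
      (hO.mem_nhds hxt)
  rw [cylLaplacian]
  congr 1
  · refine Finset.sum_congr rfl fun i _ => ?_
    have h1 : HasFDerivAt (fun y => fderiv ℝ (fun z : EuclideanSpace ℝ (Fin n) × ℝ => U z.1 z.2)
        (y, t) (ex i)) _ x :=
      (ContinuousLinearMap.apply ℝ ℝ (ex i)).hasFDerivAt.comp x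
        (hd2.comp x (hasFDerivAt_prodMk_left x t))
    have h2 : (fun y => pderivX U i y t) =ᶠ[𝓝 x] (fun y => fderiv ℝ
        (fun z : EuclideanSpace ℝ (Fin n) × ℝ => U z.1 z.2) (y, t) (ex i)) := by
      filter_upwards [hX] with y hy using pderivX_eq (hd _ hy) i
    rw [pderivX, (h1.congr_of_eventuallyEq h2).fderiv]
    simp [ex]
  · have hin : HasDerivAt (fun s : ℝ => (x, s)) et t := by
      simpa [et] using (hasDerivAt_const t x).prodMk (hasDerivAt_id t)
    have h1 : HasDerivAt (fun s => fderiv ℝ (fun z : EuclideanSpace ℝ (Fin n) × ℝ => U z.1 z.2)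
        (x, s) et) _ t :=
      (ContinuousLinearMap.apply ℝ ℝ et).hasFDerivAt.comp_hasDerivAt t
        (hd2.comp_hasDerivAt t hin)
    have h2 : (fun s => pderivT U x s) =ᶠ[𝓝 t] (fun s => fderiv ℝ
        (fun z : EuclideanSpace ℝ (Fin n) × ℝ => U z.1 z.2) (x, s) et) := by
      filter_upwards [hT] with y hy using pderivT_eq (hd _ hy)
    rw [pderivT]
    exact (h1.congr_of_eventuallyEq h2).deriv

/-- The hypotheses on `U` in terms of partial derivatives give the data used in the energy
argument. -/
lemma cylData_of_solution {m : ℝ} {g : ℝ → ℝ} (hg : Continuous g)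
    {Ω : Set (EuclideanSpace ℝ (Fin n))}
    (hΩopen : IsOpen Ω) (hΩbdd : Bornology.IsBounded Ω)
    (hstar : ∀ x ∈ Ω, ∀ s ∈ Set.Icc (0:ℝ) 1, s • x ∈ Ω)
    (hUbdd : ∃ M : ℝ, ∀ x ∈ closure Ω, ∀ t ∈ Set.Ici (0:ℝ), |U x t| ≤ M)
    (hUreg : ContDiffOn ℝ 2 (fun z : EuclideanSpace ℝ (Fin n) × ℝ => U z.1 z.2)
      (closure Ω ×ˢ Set.Ici (0:ℝ)))
    (hUenergy : IntegrableOn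
      (fun z : EuclideanSpace ℝ (Fin n) × ℝ => gradSqFull U z.1 z.2 + (U z.1 z.2) ^ 2)
      (Ω ×ˢ Set.Ioi (0:ℝ)))
    (hPDE : ∀ x ∈ Ω, ∀ t ∈ Set.Ioi (0:ℝ), cylLaplacian U x t = m ^ 2 * U x t)
    (hDir : ∀ x ∈ frontier Ω, ∀ t ∈ Set.Ici (0:ℝ), U x t = 0)
    (hNeu : ∀ x ∈ Ω, -(derivWithin (U x) (Set.Ici (0:ℝ)) 0) = g (U x 0)) :
    CylData Ω (fun z => U z.1 z.2) m g := by
  have hO : IsOpen (Ω ×ˢ Ioi (0:ℝ)) := hΩopen.prod isOpen_Ioi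
  have hOS : Ω ×ˢ Ioi (0:ℝ) ⊆ closure Ω ×ˢ Ici (0:ℝ) :=
    prod_mono subset_closure Ioi_subset_Ici_self
  have hreg := hUreg.mono hOS
  have hd : ∀ z ∈ Ω ×ˢ Ioi (0:ℝ),
      DifferentiableAt ℝ (fun z : EuclideanSpace ℝ (Fin n) × ℝ => U z.1 z.2) z := fun z hz =>
    (hreg.contDiffAt (hO.mem_nhds hz)).differentiableAt (by norm_num)
  have hc1 : ∀ v, ContinuousOn (fun z => fderiv ℝ
      (fun z : EuclideanSpace ℝ (Fin n) × ℝ => U z.1 z.2) z v) (Ω ×ˢ Ioi (0:ℝ)) := fun v =>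
    (hreg.fderiv_of_isOpen (m := 1) hO (by norm_num)).continuousOn.clm_apply continuousOn_const
  have hEn : IntegrableOn (fun z => ((∑ i, (fderiv ℝ
      (fun z : EuclideanSpace ℝ (Fin n) × ℝ => U z.1 z.2) z (ex i)) ^ 2) + (fderiv ℝ
      (fun z : EuclideanSpace ℝ (Fin n) × ℝ => U z.1 z.2) z et) ^ 2) + (U z.1 z.2) ^ 2)
      (Ω ×ˢ Ioi (0:ℝ)) := by
    refine hUenergy.congr_fun (fun z hz => ?_) hO.measurableSet
    simp only [gradSqFull, pderivX_eq (hd z hz), pderivT_eq (hd z hz)]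
  have hdom : ∀ f : EuclideanSpace ℝ (Fin n) × ℝ → ℝ, ContinuousOn f (Ω ×ˢ Ioi (0:ℝ)) →
      (∀ z, f z ^ 2 ≤ ((∑ i, (fderiv ℝ
      (fun z : EuclideanSpace ℝ (Fin n) × ℝ => U z.1 z.2) z (ex i)) ^ 2) + (fderiv ℝ
      (fun z : EuclideanSpace ℝ (Fin n) × ℝ => U z.1 z.2) z et) ^ 2) + (U z.1 z.2) ^ 2) →
      IntegrableOn (fun z => f z ^ 2) (Ω ×ˢ Ioi (0:ℝ)) := fun f hf hle =>
    Integrable.mono' hEn ((hf.pow 2).aestronglyMeasurable hO.measurableSet)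
      (ae_of_all _ fun z => by
        rw [Real.norm_eq_abs, abs_of_nonneg (sq_nonneg _)]; exact hle z)
  exact
  { isOpen := hΩopen
    bdd := hΩbdd
    star := hstar
    cont := hUreg.continuousOn
    bddF := by
      obtain ⟨M, hM⟩ := hUbdd
      exact ⟨M, fun z hz => hM z.1 hz.1 z.2 hz.2⟩
    dir := fun x hx t ht => hDir x hx t ht
    c2 := hreg
    bound := fun T => by
      obtain ⟨C, hC⟩ := exists_fderiv_bound (K := closure Ω ×ˢ Icc (0:ℝ) T) hO hOS hUreg
        (hΩbdd.isCompact_closure.prod isCompact_Icc) (prod_mono subset_rfl Icc_subset_Ici_self)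
      exact ⟨C, fun z hz => hC z ⟨⟨subset_closure hz.1, hz.2.1.le, hz.2.2⟩, hz.1, hz.2.1⟩⟩
    pde := fun z hz => by
      rw [← hPDE z.1 hz.1 z.2 hz.2]
      exact (cylLaplacian_eq hO hreg (x := z.1) (t := z.2) hz).symm
    neumann := fun x hx => by
      have h1 : ContDiffOn ℝ 2 (U x) (Ici 0) :=
        hUreg.comp (f := fun t : ℝ => (x, t)) (by fun_prop) (fun t ht => ⟨subset_closure hx, ht⟩)
      refine ⟨derivWithin (U x) (Ici 0),
        h1.continuousOn_derivWithin (uniqueDiffOn_Ici 0) (by norm_num), fun t ht => ?_, ?_⟩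
      · rw [derivWithin_of_mem_nhds (Ici_mem_nhds ht)]
        exact pderivT_eq (hd (x, t) ⟨hx, ht⟩)
      · rw [← hNeu x hx]; ring
    intX := fun i => hdom _ (hc1 _) fun z => by
      have := Finset.single_le_sum (f := fun i => (fderiv ℝ
        (fun z : EuclideanSpace ℝ (Fin n) × ℝ => U z.1 z.2) z (ex i)) ^ 2)
        (fun i _ => sq_nonneg _) (Finset.mem_univ i)
      nlinarith [sq_nonneg (fderiv ℝ
        (fun z : EuclideanSpace ℝ (Fin n) × ℝ => U z.1 z.2) z et), sq_nonneg (U z.1 z.2)]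
    intT := hdom _ (hc1 _) fun z => by
      have := Finset.sum_nonneg (s := Finset.univ) (f := fun i => (fderiv ℝ
        (fun z : EuclideanSpace ℝ (Fin n) × ℝ => U z.1 z.2) z (ex i)) ^ 2)
        (fun i _ => sq_nonneg _)
      nlinarith [sq_nonneg (U z.1 z.2)]
    intU := hdom _ hreg.continuousOn fun z => by
      have := Finset.sum_nonneg (s := Finset.univ) (f := fun i => (fderiv ℝ
        (fun z : EuclideanSpace ℝ (Fin n) × ℝ => U z.1 z.2) z (ex i)) ^ 2)
        (fun i _ => sq_nonneg _)
      nlinarith [sq_nonneg (fderiv ℝ (fun z : EuclideanSpace ℝ (Fin n) × ℝ => U z.1 z.2) z et)]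
    gcont := hg }
end Bridge

/-! ### Estimates along horizontal rays -/

namespace CylData
variable {n : ℕ} {Ω : Set (EuclideanSpace ℝ (Fin n))}
    {F : EuclideanSpace ℝ (Fin n) × ℝ → ℝ} {m : ℝ} {g : ℝ → ℝ}

lemma ray_segment (c : CylData Ω F m g) {x d : EuclideanSpace ℝ (Fin n)} {b t K : ℝ}
    (hb : 0 ≤ b) (ht : 0 < t) (hin : ∀ s ∈ Ico 0 b, x + s • d ∈ Ω)
    (hend : x + b • d ∈ closure Ω) (hK : ∀ y ∈ Ω, |fderiv ℝ F (y, t) (d, 0)| ≤ K) :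
    |F (x + b • d, t) - F (x, t)| ≤ K * b := by
  have hmem : ∀ s ∈ Icc 0 b, x + s • d ∈ closure Ω := by
    intro s hs
    rcases hs.2.eq_or_lt with h | h
    · rwa [h]
    · exact subset_closure (hin s ⟨hs.1, h⟩)
  have h := norm_image_sub_le_of_norm_deriv_right_le_segment (f := fun s => F (x + s • d, t))
    (f' := fun s => fderiv ℝ F (x + s • d, t) (d, 0)) (a := 0) (b := b) (C := K)
    (c.cont.comp (f := fun s : ℝ => (x + s • d, t)) (by fun_prop)
      (fun s hs => ⟨hmem s hs, ht.le⟩))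
    (fun s hs => by
      have h1 : HasDerivAt (fun s : ℝ => (x + s • d, t)) (d, 0) s := by
        have := ((hasDerivAt_id s).smul_const d).const_add x
        simpa using this.prodMk (hasDerivAt_const s t)
      exact ((c.hasFDerivAt (z := (x + s • d, t)) ⟨hin s hs, ht⟩).comp_hasDerivAt s
        h1).hasDerivWithinAt)
    (fun s hs => hK _ (hin s hs)) b ⟨hb, le_rfl⟩
  simpa using h

/-- If the ray from `x` in direction `d` leaves `Ω` before time `b`, the lateral condition at the
first exit point bounds `F (x, t)`. -/
lemma ray_exit (c : CylData Ω F m g) {x d : EuclideanSpace ℝ (Fin n)} {b t K : ℝ}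
    (hx : x ∈ Ω) (hb : 0 ≤ b) (ht : 0 < t) (hout : x + b • d ∉ Ω)
    (hK : ∀ y ∈ Ω, |fderiv ℝ F (y, t) (d, 0)| ≤ K) :
    |F (x, t)| ≤ K * b := by
  have hcomp : IsCompact (Icc 0 b ∩ (fun s : ℝ => x + s • d) ⁻¹' Ωᶜ) :=
    isCompact_Icc.inter_right (c.isOpen.isClosed_compl.preimage (by fun_prop))
  obtain ⟨s, ⟨hs, hsout⟩, hmin⟩ := hcomp.exists_isLeast ⟨b, ⟨hb, le_rfl⟩, hout⟩
  have hin : ∀ r ∈ Ico 0 s, x + r • d ∈ Ω := by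
    intro r hr
    by_contra hcon
    exact absurd (hmin ⟨⟨hr.1, hr.2.le.trans hs.2⟩, hcon⟩) (not_le.2 hr.2)
  have hs0 : 0 < s := by
    rcases hs.1.eq_or_lt with h | h
    · rw [← h] at hsout; simp [hx] at hsout
    · exact h
  have hcl : x + s • d ∈ closure Ω := by
    have hcont : ContinuousWithinAt (fun r : ℝ => x + r • d) (Ico 0 s) s :=
      Continuous.continuousWithinAt (by fun_prop)
    refine hcont.mem_closure ?_ hin
    rw [closure_Ico hs0.ne]
    exact ⟨hs0.le, le_rfl⟩
  have hfr : x + s • d ∈ frontier Ω := by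
    rw [c.isOpen.frontier_eq]; exact ⟨hcl, hsout⟩
  have h := c.ray_segment hs0.le ht hin hcl hK
  rw [c.dir _ hfr t ht.le, zero_sub, abs_neg] at h
  have hK0 : 0 ≤ K := (abs_nonneg _).trans (hK x hx)
  exact h.trans (mul_le_mul_of_nonneg_left hs.2 hK0)

/-- The trace `F(·, 0)` on `Ω`, extended by zero. -/
def trace (Ω : Set (EuclideanSpace ℝ (Fin n))) (F : EuclideanSpace ℝ (Fin n) × ℝ → ℝ)
    (y : EuclideanSpace ℝ (Fin n)) : ℝ := Ω.indicator (fun y => F (y, 0)) y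

/-- Dilating the trace by `l ≥ 1` changes it by `O(l - 1)`, uniformly on `Ω`. Segments between `x` and
`l • x` stay in `Ω` when `l • x ∈ Ω`; otherwise they exit through the boundary, where `F = 0`. -/
lemma trace_dilation_sub_le (c : CylData Ω F m g) :
    ∃ R, 0 ≤ R ∧ ∀ l, 1 ≤ l → ∀ x ∈ Ω, |trace Ω F (l • x) - F (x, 0)| ≤ R * (l - 1) := by
  obtain ⟨C, hC⟩ := c.bound 1
  obtain ⟨r, hr⟩ := c.bdd.exists_norm_le
  refine ⟨max C 0 * max r 0, by positivity, fun l hl x hx => ?_⟩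
  have hKt : ∀ t ∈ Ioc (0:ℝ) 1, ∀ y ∈ Ω, |fderiv ℝ F (y, t) (x, 0)| ≤ max C 0 * max r 0 := by
    intro t ht y hy
    have h1 := (fderiv ℝ F (y, t)).le_opNorm (x, 0)
    rw [Real.norm_eq_abs] at h1
    refine h1.trans ?_
    have h2 : ‖((x, 0) : EuclideanSpace ℝ (Fin n) × ℝ)‖ ≤ max r 0 := by
      simpa [Prod.norm_def] using Or.inl (hr x hx)
    exact mul_le_mul (((hC _ ⟨hy, ht⟩).1).trans (le_max_left _ _)) h2 (norm_nonneg _)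
      (le_max_right _ _)
  have hlx : l • x = x + (l - 1) • x := by rw [sub_smul, one_smul]; abel
  have hlim : ∀ y ∈ closure Ω, Tendsto (fun t => F (y, t)) (𝓝[>] 0) (𝓝 (F (y, 0))) := by
    intro y hy
    have h1 : ContinuousOn (fun t : ℝ => F (y, t)) (Ici 0) :=
      c.cont.comp (f := fun t : ℝ => (y, t)) (by fun_prop) (fun t ht => ⟨hy, ht⟩)
    exact (h1 0 self_mem_Ici).mono_left (nhdsWithin_mono _ Ioi_subset_Ici_self)
  have hev : ∀ᶠ t in 𝓝[>] (0:ℝ), t ∈ Ioc (0:ℝ) 1 := Ioc_mem_nhdsGT one_pos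
  by_cases hlΩ : l • x ∈ Ω
  · rw [trace, indicator_of_mem hlΩ]
    refine le_of_tendsto (((hlim _ (subset_closure hlΩ)).sub
      (hlim _ (subset_closure hx))).abs) ?_
    filter_upwards [hev] with t ht
    rw [hlx] at hlΩ ⊢
    refine c.ray_segment (by linarith) ht.1 (fun s hs => ?_) (subset_closure hlΩ) (hKt t ht)
    -- intermediate points are contractions of the endpoint
    have := c.star _ hlΩ ((1 + s) / l)
      ⟨by have := hs.1; positivity, by rw [div_le_one (by linarith)]; linarith [hs.2]⟩
    rw [← hlx, smul_smul, div_mul_cancel₀ _ (by linarith : l ≠ 0), add_smul, one_smul] at this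
    exact this
  · rw [trace, indicator_of_notMem hlΩ, zero_sub, abs_neg]
    refine le_of_tendsto (hlim _ (subset_closure hx)).abs ?_
    filter_upwards [hev] with t ht
    rw [hlx] at hlΩ
    exact c.ray_exit hx (by linarith) ht.1 hlΩ (hKt t ht)

end CylData

/-! ### Energy identities -/

/-- The horizontal Dirichlet energy `∫_{Ω×(0,∞)} |∇ₓF|²`. -/
def energyX {n : ℕ} (Ω : Set (EuclideanSpace ℝ (Fin n))) (F : EuclideanSpace ℝ (Fin n) × ℝ → ℝ) :
    ℝ := ∫ z in Ω ×ˢ Ioi 0, ∑ i, (fderiv ℝ F z (ex i)) ^ 2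

/-- The vertical Dirichlet energy `∫_{Ω×(0,∞)} |∂ₜF|²`. -/
def energyT {n : ℕ} (Ω : Set (EuclideanSpace ℝ (Fin n))) (F : EuclideanSpace ℝ (Fin n) × ℝ → ℝ) :
    ℝ := ∫ z in Ω ×ˢ Ioi 0, (fderiv ℝ F z et) ^ 2

/-- The squared `L²` norm `∫_{Ω×(0,∞)} F²`. -/
def energyU {n : ℕ} (Ω : Set (EuclideanSpace ℝ (Fin n))) (F : EuclideanSpace ℝ (Fin n) × ℝ → ℝ) :
    ℝ := ∫ z in Ω ×ˢ Ioi 0, (F z) ^ 2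

/-- A function that does not drop immediately to the right of a point has nonnegative derivative
there. -/
lemma deriv_nonneg_of_eventually_le {ψ : ℝ → ℝ} {d a : ℝ} (h : HasDerivAt ψ d a)
    (hle : ∀ᶠ l in 𝓝[>] a, ψ a ≤ ψ l) : 0 ≤ d := by
  have h1 := (hasDerivWithinAt_iff_tendsto_slope' (s := Ioi a) (by simp)).1 h.hasDerivWithinAt
  refine ge_of_tendsto h1 ?_
  filter_upwards [hle, self_mem_nhdsWithin] with l hl hla
  rw [slope_def_field]
  exact div_nonneg (by linarith) (by linarith [mem_Ioi.1 hla])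

/-- First-order Taylor estimate on `[-M, M]` with modulus of continuity of the derivative. -/
lemma exists_taylor_bound {g G : ℝ → ℝ} (hg : Continuous g) (hG : ∀ s, HasDerivAt G (g s) s)
    (M : ℝ) {ε : ℝ} (hε : 0 < ε) :
    ∃ δ > 0, ∀ u ∈ Icc (-M) M, ∀ v ∈ Icc (-M) M, |v - u| < δ →
      G v - G u ≤ g u * (v - u) + ε * |v - u| := by
  have huc := isCompact_Icc.uniformContinuousOn_of_continuous
    (hg.continuousOn (s := Icc (-M) M))
  obtain ⟨δ, hδ, h⟩ := Metric.uniformContinuousOn_iff.1 huc ε hε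
  refine ⟨δ, hδ, fun u hu v hv huv => ?_⟩
  have hsub : uIcc u v ⊆ Icc (-M) M := uIcc_subset_Icc hu hv
  have h1 := (convex_uIcc u v).norm_image_sub_le_of_norm_hasDerivWithin_le
    (f := fun s => G s - g u * s) (f' := fun s => g s - g u) (C := ε) (x := u) (y := v)
    (fun s _ => ((hG s).sub (by simpa using (hasDerivAt_id s).const_mul (g u))).hasDerivWithinAt)
    (fun s hs => by
      have := h s (hsub hs) u hu (by
        rw [Real.dist_eq]
        exact (abs_sub_left_of_mem_uIcc hs).trans_lt huv)
      rw [Real.dist_eq] at this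
      exact this.le) left_mem_uIcc right_mem_uIcc
  rw [Real.norm_eq_abs, Real.norm_eq_abs] at h1
  have := (le_abs_self _).trans h1
  linarith

namespace CylData
variable {n : ℕ} {Ω : Set (EuclideanSpace ℝ (Fin n))}
    {F : EuclideanSpace ℝ (Fin n) × ℝ → ℝ} {m : ℝ} {g : ℝ → ℝ}

lemma integrableOn_gradX (c : CylData Ω F m g) :
    IntegrableOn (fun z => ∑ i, (fderiv ℝ F z (ex i)) ^ 2) (Ω ×ˢ Ioi 0) :=
  integrable_finsetSum _ fun i _ => c.intX i

lemma integral_quadratic (c : CylData Ω F m g) (α β γ : ℝ) :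
    IntegrableOn (fun z => α * (∑ i, (fderiv ℝ F z (ex i)) ^ 2) + β * (fderiv ℝ F z et) ^ 2
      + γ * (F z) ^ 2) (Ω ×ˢ Ioi 0) ∧
    ∫ z in Ω ×ˢ Ioi 0, (α * (∑ i, (fderiv ℝ F z (ex i)) ^ 2) + β * (fderiv ℝ F z et) ^ 2
      + γ * (F z) ^ 2) = α * energyX Ω F + β * energyT Ω F + γ * energyU Ω F := by
  have h1 := c.integrableOn_gradX.const_mul α
  have h2 := c.intT.const_mul β
  have h3 := c.intU.const_mul γ
  refine ⟨(h1.add h2).add h3, ?_⟩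
  have h4 : ∫ z in Ω ×ˢ Ioi 0, (α * (∑ i, (fderiv ℝ F z (ex i)) ^ 2) + β * (fderiv ℝ F z et) ^ 2
      + γ * (F z) ^ 2) = _ := integral_add (h1.add h2) h3
  rw [h4, integral_add h1 h2, integral_const_mul, integral_const_mul, integral_const_mul]
  rfl

/-- The weak formulation tested with the dilation of `F`, estimated by Young's inequality. -/
lemma boundary_le_energy (c : CylData Ω F m g) {l k : ℝ} (hl : 1 ≤ l) (hk : 0 < k) :
    ∫ x in {x | l • x ∈ Ω}, g (F (x, 0)) * F (l • x, 0) ≤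
      1 / 2 * (energyX Ω F + energyT Ω F + m ^ 2 * energyU Ω F) +
      1 / 2 * ((l ^ n * k)⁻¹ *
        (l ^ 2 * energyX Ω F + k ^ 2 * energyT Ω F + m ^ 2 * energyU Ω F)) := by
  obtain ⟨hint, heq⟩ := c.weak hl hk
  rw [← heq]
  have hl0 : 0 < l := by linarith
  obtain ⟨hq, hqe⟩ := c.integral_quadratic (1/2) (1/2) (1/2 * m ^ 2)
  obtain ⟨hQ, hQe⟩ := c.integral_quadratic (1/2 * l ^ 2) (1/2 * k ^ 2) (1/2 * m ^ 2)
  have hsub : {x | l • x ∈ Ω} ×ˢ Ioi (0:ℝ) ⊆ Ω ×ˢ Ioi 0 := prod_mono (c.dom_subset hl) subset_rfl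
  have hQd := integrableOn_comp_dil c.isOpen hl0 hk hQ
  have hQi := integral_comp_dil c.isOpen hl0 hk (fun z => (1/2 * l ^ 2) *
    (∑ i, (fderiv ℝ F z (ex i)) ^ 2) + (1/2 * k ^ 2) * (fderiv ℝ F z et) ^ 2
      + (1/2 * m ^ 2) * (F z) ^ 2)
  rw [hQe] at hQi
  have h1 := integral_mono hint ((hq.mono_set hsub).add hQd) (fun z => by
    have hs : (∑ i, l * fderiv ℝ F (dil l k z) (ex i) * fderiv ℝ F z (ex i)) ≤
        1/2 * (∑ i, (fderiv ℝ F z (ex i)) ^ 2) +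
        1/2 * l ^ 2 * (∑ i, (fderiv ℝ F (dil l k z) (ex i)) ^ 2) := by
      rw [Finset.mul_sum, Finset.mul_sum, ← Finset.sum_add_distrib]
      refine Finset.sum_le_sum fun i _ => ?_
      nlinarith [sq_nonneg (l * fderiv ℝ F (dil l k z) (ex i) - fderiv ℝ F z (ex i))]
    simp only [Pi.add_apply]
    nlinarith [sq_nonneg (k * fderiv ℝ F (dil l k z) et - fderiv ℝ F z et),
      sq_nonneg (m * F (dil l k z) - m * F z)])
  have h2 : ∫ z in {x | l • x ∈ Ω} ×ˢ Ioi (0:ℝ), (1/2 * (∑ i, (fderiv ℝ F z (ex i)) ^ 2) +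
      1/2 * (fderiv ℝ F z et) ^ 2 + 1/2 * m ^ 2 * (F z) ^ 2) ≤ _ :=
    setIntegral_mono_set hq (ae_of_all _ fun z => by
      have := Finset.sum_nonneg (s := Finset.univ) (f := fun i => (fderiv ℝ F z (ex i)) ^ 2)
        (fun i _ => sq_nonneg _)
      simp only [Pi.zero_apply]
      positivity) hsub.eventuallyLE
  rw [hqe] at h2
  have h3 : ∫ z in {x | l • x ∈ Ω} ×ˢ Ioi (0:ℝ), ((1/2 * (∑ i, (fderiv ℝ F z (ex i)) ^ 2) +
      1/2 * (fderiv ℝ F z et) ^ 2 + 1/2 * m ^ 2 * (F z) ^ 2) + _) = _ :=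
    integral_add (hq.mono_set hsub) hQd
  rw [hQi] at h3
  refine h1.trans ?_
  simp only [Pi.add_apply]
  rw [h3]
  refine (add_le_add_left h2 _).trans (le_of_eq ?_)
  ring

lemma boundary_eq_energy (c : CylData Ω F m g) :
    ∫ x in Ω, g (F (x, 0)) * F (x, 0) = energyX Ω F + energyT Ω F + m ^ 2 * energyU Ω F := by
  obtain ⟨-, heq⟩ := c.weak le_rfl one_pos
  have h1 := (c.integral_quadratic 1 1 (m ^ 2)).2
  simp only [one_mul] at h1
  rw [← h1]
  simp only [one_smul, ofPred_mem_eq] at heq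
  rw [← heq]
  congr 1
  ext z
  have : dil 1 1 z = z := by simp [dil]
  simp only [this, one_mul]
  simp only [sq]

/-- Equipartition, from optimality of `k = 1` among the vertical dilations. -/
lemma energyT_eq (c : CylData Ω F m g) :
    energyT Ω F = energyX Ω F + m ^ 2 * energyU Ω F := by
  have h : ∀ k : ℝ, 0 < k → 0 ≤ (k - 1) * (energyT Ω F * k -
      (energyX Ω F + m ^ 2 * energyU Ω F)) := by
    intro k hk
    have h1 := c.boundary_le_energy le_rfl hk
    simp only [one_smul, ofPred_mem_eq, one_pow, one_mul] at h1
    rw [c.boundary_eq_energy] at h1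
    have h2 := mul_le_mul_of_nonneg_left h1 hk.le
    have h3 : k * (1 / 2 * (energyX Ω F + energyT Ω F + m ^ 2 * energyU Ω F) +
        1 / 2 * (k⁻¹ * (energyX Ω F + k ^ 2 * energyT Ω F + m ^ 2 * energyU Ω F))) =
        1 / 2 * (k * (energyX Ω F + energyT Ω F + m ^ 2 * energyU Ω F)) +
        1 / 2 * (energyX Ω F + k ^ 2 * energyT Ω F + m ^ 2 * energyU Ω F) := by
      field_simp
    rw [h3] at h2
    nlinarith
  have hd : HasDerivAt (fun k => (k - 1) * (energyT Ω F * k -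
      (energyX Ω F + m ^ 2 * energyU Ω F))) (energyT Ω F -
      (energyX Ω F + m ^ 2 * energyU Ω F)) 1 := by
    have h1 := ((hasDerivAt_id (1:ℝ)).sub_const 1).mul
      (((hasDerivAt_id (1:ℝ)).const_mul (energyT Ω F)).sub_const
        (energyX Ω F + m ^ 2 * energyU Ω F))
    exact h1.congr_deriv (by simp)
  have hmin : IsLocalMin (fun k => (k - 1) * (energyT Ω F * k -
      (energyX Ω F + m ^ 2 * energyU Ω F))) 1 := by
    filter_upwards [Ioi_mem_nhds (zero_lt_one (α := ℝ))] with k hk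
    simpa using h k hk
  linarith [hmin.hasDerivAt_eq_zero hd]

end CylData

/-! ### Pohozaev's inequality -/

namespace CylData
variable {n : ℕ} {Ω : Set (EuclideanSpace ℝ (Fin n))}
    {F : EuclideanSpace ℝ (Fin n) × ℝ → ℝ} {m : ℝ} {g : ℝ → ℝ}

lemma cont_trace (c : CylData Ω F m g) : ContinuousOn (fun x => F (x, 0)) (closure Ω) :=
  c.cont.comp (f := fun x : EuclideanSpace ℝ (Fin n) => (x, (0:ℝ))) (by fun_prop)
    (fun _ hx => ⟨hx, self_mem_Ici⟩)

lemma integrableOn_comp_trace (c : CylData Ω F m g) {h : ℝ → ℝ} (hh : Continuous h) :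
    IntegrableOn (fun x => h (F (x, 0))) Ω :=
  ((hh.comp_continuousOn c.cont_trace).integrableOn_compact c.bdd.isCompact_closure).mono_set
    subset_closure

lemma integral_comp_trace_dilation (c : CylData Ω F m g) {G : ℝ → ℝ} (hG : Continuous G)
    (hG0 : G 0 = 0) {l : ℝ} (hl : 1 ≤ l) :
    IntegrableOn (fun x => G (trace Ω F (l • x))) Ω ∧
    ∫ x in Ω, G (trace Ω F (l • x)) = (l ^ n)⁻¹ * ∫ x in Ω, G (F (x, 0)) := by
  have hl0 : 0 < l := by linarith
  have hind : (fun y => G (trace Ω F y)) = Ω.indicator (fun y => G (F (y, 0))) := by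
    ext y
    by_cases hy : y ∈ Ω <;> simp [trace, hy, hG0]
  have hint : Integrable (fun y => G (trace Ω F y)) := by
    rw [hind, integrable_indicator_iff c.isOpen.measurableSet]
    exact c.integrableOn_comp_trace hG
  refine ⟨(hint.comp_smul hl0.ne').integrableOn, ?_⟩
  have hzero : ∀ x, x ∉ Ω → G (trace Ω F (l • x)) = 0 := by
    intro x hx
    have : l • x ∉ Ω := fun h => hx (c.dom_subset hl h)
    simp [trace, this, hG0]
  rw [setIntegral_eq_integral_of_forall_compl_eq_zero hzero,
    Measure.integral_comp_smul volume (fun y => G (trace Ω F y)) l, hind,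
    integral_indicator c.isOpen.measurableSet]
  simp [abs_of_pos hl0]

lemma integral_mul_trace_dilation (c : CylData Ω F m g) {l : ℝ} (hl : 1 ≤ l) :
    IntegrableOn (fun x => g (F (x, 0)) * trace Ω F (l • x)) Ω ∧
    ∫ x in Ω, g (F (x, 0)) * trace Ω F (l • x) =
      ∫ x in {x | l • x ∈ Ω}, g (F (x, 0)) * F (l • x, 0) := by
  have hsub := c.dom_subset hl
  have hDm : MeasurableSet {x | l • x ∈ Ω} := (isOpen_dilDomain c.isOpen l).measurableSet
  have hzero : ∀ x ∈ Ω \ {x | l • x ∈ Ω}, g (F (x, 0)) * trace Ω F (l • x) = 0 := by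
    rintro x ⟨-, hx⟩
    have hx' : l • x ∉ Ω := hx
    simp [trace, hx']
  have hcongr : EqOn (fun x => g (F (x, 0)) * F (l • x, 0))
      (fun x => g (F (x, 0)) * trace Ω F (l • x)) {x | l • x ∈ Ω} := by
    intro x hx
    have hx' : l • x ∈ Ω := hx
    simp [trace, hx']
  obtain ⟨M, hM⟩ := c.bddF
  have hcomp : IsCompact (closure Ω) := c.bdd.isCompact_closure
  obtain ⟨C, hC⟩ := hcomp.exists_bound_of_continuousOn (c.gcont.comp_continuousOn c.cont_trace)
  have hint : IntegrableOn (fun x => g (F (x, 0)) * F (l • x, 0)) {x | l • x ∈ Ω} := by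
    refine integrableOn_of_continuousOn_of_bound (C := C * M) hDm (c.volume_ne_top hsub) ?_ ?_
    · refine (c.gcont.comp_continuousOn (c.cont_trace.mono (hsub.trans subset_closure))).mul ?_
      exact c.cont_trace.comp (f := fun x : EuclideanSpace ℝ (Fin n) => l • x) (by fun_prop)
        (fun x hx => subset_closure hx)
    · intro x hx
      rw [abs_mul]
      have h1 := hC x (subset_closure (hsub hx))
      exact mul_le_mul h1 (hM (l • x, 0) ⟨subset_closure hx, self_mem_Ici⟩) (abs_nonneg _)
        ((norm_nonneg _).trans h1)
  refine ⟨(hint.congr_fun hcongr hDm).of_forall_sdiff_eq_zero c.isOpen.measurableSet hzero, ?_⟩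
  rw [setIntegral_eq_of_subset_of_forall_sdiff_eq_zero c.isOpen.measurableSet hsub hzero]
  exact (setIntegral_congr_fun hDm hcongr).symm

/-- Pohozaev's inequality. It is obtained by testing with the horizontal dilations of `F` and
differentiating the resulting inequality at dilation factor `1` from the right. The nonnegative
boundary term of the classical identity is discarded, so its trace is never needed. -/
lemma pohozaev (c : CylData Ω F m g) {G : ℝ → ℝ} (hG : ∀ s, HasDerivAt G (g s) s)
    (hG0 : G 0 = 0) :
    (n / 2 : ℝ) * (energyX Ω F + energyT Ω F + m ^ 2 * energyU Ω F) - energyX Ω F ≤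
      n * ∫ x in Ω, G (F (x, 0)) := by
  have hGc : Continuous G := continuous_iff_continuousAt.2 fun s => (hG s).continuousAt
  obtain ⟨R, hR0, hR⟩ := c.trace_dilation_sub_le
  obtain ⟨M, hM⟩ := c.bddF
  have hN := c.boundary_eq_energy
  set A := energyX Ω F
  set B := energyT Ω F + m ^ 2 * energyU Ω F with hB
  set P := ∫ x in Ω, G (F (x, 0))
  set V := volume.real Ω
  have hV : 0 ≤ V := measureReal_nonneg
  have key : ∀ ε > 0, 0 ≤ -(n / 2 : ℝ) * (A + B) + A + n * P + ε * R * V := by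
    intro ε hε
    obtain ⟨δ, hδ, hT⟩ := exists_taylor_bound c.gcont hG (max M 0) hε
    -- the inequality for factor `l` says that this function of `l` is at least its value at `1`
    have hder : HasDerivAt (fun l : ℝ => 1 / 2 * ((l ^ n)⁻¹ * (l ^ 2 * A + B)) - (l ^ n)⁻¹ * P
        + ε * R * V * (l - 1)) (-(n / 2 : ℝ) * (A + B) + A + n * P + ε * R * V) 1 := by
      have h1 : HasDerivAt (fun l : ℝ => (l ^ n)⁻¹) (-(n : ℝ)) 1 := by
        have := (hasDerivAt_pow n (1:ℝ)).inv (by simp)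
        exact this.congr_deriv (by simp)
      have h2 : HasDerivAt (fun l : ℝ => l ^ 2 * A + B) (2 * A) 1 := by
        have := ((hasDerivAt_pow 2 (1:ℝ)).mul_const A).add_const B
        exact this.congr_deriv (by simp)
      have h3 := (((h1.mul h2).const_mul (1 / 2 : ℝ)).sub (h1.mul_const P)).add
        (((hasDerivAt_id (1:ℝ)).sub_const 1).const_mul (ε * R * V))
      exact h3.congr_deriv (by simp; ring)
    refine deriv_nonneg_of_eventually_le hder ?_
    have hev : ∀ᶠ l in 𝓝[>] (1:ℝ), R * (l - 1) < δ := by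
      have : Tendsto (fun l : ℝ => R * (l - 1)) (𝓝[>] 1) (𝓝 (R * (1 - 1))) :=
        (Continuous.tendsto (by fun_prop) 1).mono_left nhdsWithin_le_nhds
      rw [sub_self, mul_zero] at this
      exact this.eventually_lt_const hδ
    filter_upwards [hev, self_mem_nhdsWithin] with l hlδ hl1
    have hl : 1 ≤ l := (mem_Ioi.1 hl1).le
    obtain ⟨i1, e1⟩ := c.integral_comp_trace_dilation hGc hG0 hl
    obtain ⟨i2, e2⟩ := c.integral_mul_trace_dilation hl
    have i3 : IntegrableOn (fun x => G (F (x, 0))) Ω := c.integrableOn_comp_trace hGc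
    have i4 : IntegrableOn (fun x => g (F (x, 0)) * F (x, 0)) Ω :=
      c.integrableOn_comp_trace (h := fun s => g s * s) (c.gcont.mul continuous_id)
    have i5 : IntegrableOn (fun _ : EuclideanSpace ℝ (Fin n) => ε * (R * (l - 1))) Ω :=
      integrableOn_const (c.volume_ne_top subset_rfl)
    have hpt : ∀ x ∈ Ω, G (trace Ω F (l • x)) - G (F (x, 0)) ≤
        g (F (x, 0)) * trace Ω F (l • x) - g (F (x, 0)) * F (x, 0) + ε * (R * (l - 1)) := by
      intro x hx
      have hmem : ∀ y ∈ Ω, F (y, 0) ∈ Icc (-(max M 0)) (max M 0) := fun y hy =>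
        abs_le.1 ((hM (y, 0) ⟨subset_closure hy, self_mem_Ici⟩).trans (le_max_left _ _))
      have hmem' : trace Ω F (l • x) ∈ Icc (-(max M 0)) (max M 0) := by
        by_cases hlx : l • x ∈ Ω
        · rw [trace, indicator_of_mem hlx]; exact hmem _ hlx
        · rw [trace, indicator_of_notMem hlx]; simp
      have h1 := hR l hl x hx
      have h2 := hT _ (hmem x hx) _ hmem' (h1.trans_lt hlδ)
      have h3 := mul_le_mul_of_nonneg_left h1 hε.le
      linarith
    have hI := setIntegral_mono_on (i1.sub i3) ((i2.sub i4).add i5) c.isOpen.measurableSet hpt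
    have hI1 : ∫ x in Ω, ((fun x => G (trace Ω F (l • x))) - fun x => G (F (x, 0))) x = _ :=
      integral_sub i1 i3
    have hI2 : ∫ x in Ω, ((g (F (x, 0)) * trace Ω F (l • x) - g (F (x, 0)) * F (x, 0)) +
        ε * (R * (l - 1))) = _ := integral_add (i2.sub i4) i5
    have hI3 : ∫ x in Ω, (g (F (x, 0)) * trace Ω F (l • x) - g (F (x, 0)) * F (x, 0)) = _ :=
      integral_sub i2 i4
    have hI4 : ∫ _ in Ω, ε * (R * (l - 1)) = V * (ε * (R * (l - 1))) := by
      rw [setIntegral_const, smul_eq_mul]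
    have hE := c.boundary_le_energy hl one_pos
    rw [← e2] at hE
    have hfin : (l ^ n)⁻¹ * P - P ≤ (1 / 2 * (A + B) + 1 / 2 * ((l ^ n)⁻¹ * (l ^ 2 * A + B)))
        - (A + B) + V * (ε * (R * (l - 1))) := by
      have hE' : ∫ x in Ω, g (F (x, 0)) * trace Ω F (l • x) ≤
          1 / 2 * (A + B) + 1 / 2 * ((l ^ n)⁻¹ * (l ^ 2 * A + B)) := by
        refine hE.trans (le_of_eq ?_)
        rw [mul_one, one_pow, one_mul, hB]; ring
      have hN' : ∫ x in Ω, g (F (x, 0)) * F (x, 0) = A + B := by rw [hN, hB]; ring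
      have hI' := hI.trans_eq hI2
      rw [hI1, hI3, hI4, e1] at hI'
      linarith
    simp only [one_pow, inv_one, one_mul, sub_self, mul_zero, add_zero]
    linarith
  have hlim : Tendsto (fun ε : ℝ => -(n / 2 : ℝ) * (A + B) + A + n * P + ε * R * V) (𝓝[>] 0)
      (𝓝 (-(n / 2 : ℝ) * (A + B) + A + n * P + 0 * R * V)) :=
    (Continuous.tendsto (by fun_prop) 0).mono_left nhdsWithin_le_nhds
  have := ge_of_tendsto hlim (by
    filter_upwards [self_mem_nhdsWithin] with ε hε using key ε hε)
  have h2 : energyX Ω F + energyT Ω F + m ^ 2 * energyU Ω F = A + B := by rw [hB]; ring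
  linarith

end CylData

/-! ### Vanishing of the solution -/

lemma eqOn_zero_of_integral_nonpos {n : ℕ} {O : Set (EuclideanSpace ℝ (Fin n) × ℝ)}
    (hO : IsOpen O) {f : EuclideanSpace ℝ (Fin n) × ℝ → ℝ} (hf : ContinuousOn f O)
    (hint : IntegrableOn f O) (h0 : ∀ z, 0 ≤ f z) (hI : ∫ z in O, f z ≤ 0) :
    ∀ z ∈ O, f z = 0 := by
  have := isAddHaar_cyl n
  have h1 : ∫ z in O, f z = 0 := le_antisymm hI (integral_nonneg h0)
  have h2 := (integral_eq_zero_iff_of_nonneg h0 hint).1 h1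
  exact Measure.eqOn_open_of_ae_eq h2 hO hf continuousOn_const

namespace CylData
variable {n : ℕ} {Ω : Set (EuclideanSpace ℝ (Fin n))}
    {F : EuclideanSpace ℝ (Fin n) × ℝ → ℝ} {m : ℝ} {g : ℝ → ℝ}

lemma integrableOn_mul_dt (c : CylData Ω F m g) :
    IntegrableOn (fun z => F z * fderiv ℝ F z et) (Ω ×ˢ Ioi 0) :=
  integrableOn_mul_of_sq (c.cont0.aestronglyMeasurable c.isOpen_cyl.measurableSet)
    ((c.cont1 _).aestronglyMeasurable c.isOpen_cyl.measurableSet) c.intU c.intT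

/-- The boundary mass as a bulk integral: `∫ F(x, 0)² = -∫∫ ∂ₜ(F²)`. -/
lemma integral_trace_sq (c : CylData Ω F m g) :
    ∫ x in Ω, (F (x, 0)) ^ 2 = -(2 * ∫ z in Ω ×ˢ Ioi 0, F z * fderiv ℝ F z et) := by
  have hi : IntegrableOn (fun z => 2 * (F z * fderiv ℝ F z et)) (Ω ×ˢ Ioi 0) :=
    c.integrableOn_mul_dt.const_mul 2
  have h := integral_cylinder_eq (D := Ω) (W := fun z => F z ^ 2)
    (W' := fun z => 2 * (F z * fderiv ℝ F z et)) (H := fun z => 2 * (F z * fderiv ℝ F z et))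
    (fun x hx => (c.cont.comp (f := fun t : ℝ => (x, t)) (by fun_prop)
      (fun t ht => ⟨subset_closure hx, ht⟩)).pow 2)
    (fun x hx t ht => by
      have hin : HasDerivAt (fun s : ℝ => (x, s)) et t := by
        simpa [et] using (hasDerivAt_const t x).prodMk (hasDerivAt_id t)
      have h1 := (c.hasFDerivAt (z := (x, t)) ⟨hx, ht⟩).comp_hasDerivAt t hin
      exact (h1.pow 2).congr_deriv (by simp; ring))
    c.isOpen.measurableSet
    (fun T _ => hi.mono_set (prod_mono subset_rfl Ioc_subset_Ioi_self))
    c.intU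
    (fun T hT => by
      have hc : ContinuousOn (fun x => F (x, T) ^ 2) (closure Ω) :=
        (c.cont.comp (f := fun x : EuclideanSpace ℝ (Fin n) => (x, T)) (by fun_prop)
          (fun x hx => ⟨hx, hT⟩)).pow 2
      exact (hc.integrableOn_compact c.bdd.isCompact_closure).mono_set subset_closure)
    hi (fun _ _ => rfl)
  rw [integral_const_mul] at h
  linarith

/-- A function whose horizontal gradient vanishes is constant along horizontal lines up to the
lateral boundary, where it is zero. -/
lemma eq_zero_of_gradX (c : CylData Ω F m g) (hn : 0 < n)
    (h : ∀ z ∈ Ω ×ˢ Ioi (0:ℝ), ∀ i, fderiv ℝ F z (ex i) = 0) :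
    ∀ x ∈ closure Ω, ∀ t, 0 ≤ t → F (x, t) = 0 := by
  have hin : ∀ x ∈ Ω, ∀ t > 0, F (x, t) = 0 := by
    intro x hx t ht
    obtain ⟨r, hr⟩ := c.bdd.exists_norm_le
    have hr0 : 0 ≤ r := (norm_nonneg _).trans (hr x hx)
    have hout : x + (2 * r + 1) • EuclideanSpace.single (⟨0, hn⟩ : Fin n) (1:ℝ) ∉ Ω := by
      intro hmem
      have h1 := hr _ hmem
      have h2 := norm_sub_le (x + (2 * r + 1) • EuclideanSpace.single (⟨0, hn⟩ : Fin n) (1:ℝ)) x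
      rw [add_sub_cancel_left, norm_smul, Real.norm_of_nonneg (by positivity)] at h2
      simp only [PiLp.norm_single, norm_one, mul_one] at h2
      linarith [hr x hx]
    have h1 := c.ray_exit (K := 0) hx (by positivity) ht hout
      (fun y hy => by
        have := h (y, t) ⟨hy, ht⟩ ⟨0, hn⟩
        rw [ex] at this
        rw [this, abs_zero])
    rw [zero_mul] at h1
    exact abs_nonpos_iff.1 h1
  have hcl : closure Ω ×ˢ Ici (0:ℝ) = closure (Ω ×ˢ Ioi (0:ℝ)) := by
    rw [closure_prod_eq, closure_Ioi]
  have hcl' : closure (Ω ×ˢ Ioi (0:ℝ)) ⊆ closure Ω ×ˢ Ici (0:ℝ) := hcl.ge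
  have hz : EqOn F (fun _ => 0) (closure Ω ×ˢ Ici (0:ℝ)) :=
    EqOn.of_subset_closure (s := Ω ×ˢ Ioi (0:ℝ)) (fun z hz => hin z.1 hz.1 z.2 hz.2) c.cont
      continuousOn_const (prod_mono subset_closure Ioi_subset_Ici_self) hcl.le
  exact fun x hx t ht => hz ⟨hx, ht⟩

end CylData

lemma hasDerivAt_primitive {p : ℝ} (hp : 1 < p) (m s : ℝ) :
    HasDerivAt (fun s : ℝ => m / 2 * s ^ 2 + (p + 1)⁻¹ * |s| ^ (p + 1))
      (m * s + |s| ^ (p - 1) * s) s := by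
  have h1 := (hasDerivAt_abs_rpow s (p := p + 1) (by linarith)).const_mul ((p + 1)⁻¹)
  have h2 := ((hasDerivAt_pow 2 s).const_mul (m / 2)).add h1
  refine h2.congr_deriv ?_
  have hp1 : p + 1 ≠ 0 := by linarith
  rw [show p + 1 - 2 = p - 1 by ring]
  field_simp
  simp
  ring

/-- Writing `A`, `B`, `E` for `energyX`, `energyT`, `energyU`, and `I`, `J` for the boundary integrals
of `F²` and `|F|^(p+1)`, the identities `m I + J = A + B + m² E` and `B = A + m² E` together with
Pohozaev's inequality give `J ≤ A` and `∫ (∂ₜF + m F)² = B + m² E - m I ≤ 0`. Hence `B = m² E` and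
`A = 0`. -/
lemma CylData.eq_zero_of_supercritical {n : ℕ} {Ω : Set (EuclideanSpace ℝ (Fin n))}
    {F : EuclideanSpace ℝ (Fin n) × ℝ → ℝ} {m p : ℝ} (hn : 3 ≤ n)
    (hp : ((n : ℝ) + 2) / ((n : ℝ) - 2) ≤ p) (hp1 : 1 < p)
    (c : CylData Ω F m (fun s => m * s + |s| ^ (p - 1) * s)) :
    ∀ x ∈ closure Ω, ∀ t, 0 ≤ t → F (x, t) = 0 := by
  have hn' : (3:ℝ) ≤ n := by exact_mod_cast hn
  have hO := c.isOpen_cyl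
  have hpc : Continuous fun s : ℝ => |s| ^ (p + 1) :=
    continuous_abs.rpow_const fun s => Or.inr (by linarith)
  have i1 := c.integrableOn_comp_trace (h := fun s => s ^ 2) (by fun_prop)
  have i2 := c.integrableOn_comp_trace hpc
  have hE := c.boundary_eq_energy
  have hT := c.energyT_eq
  have hP := c.pohozaev (hasDerivAt_primitive hp1 m) (by
    simp [Real.zero_rpow (by linarith : p + 1 ≠ 0)])
  have hI := c.integral_trace_sq
  set A := energyX Ω F with hA
  set B := energyT Ω F with hB
  set E := energyU Ω F with hEU
  set I := ∫ x in Ω, (F (x, 0)) ^ 2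
  set J := ∫ x in Ω, |F (x, 0)| ^ (p + 1)
  have hJ0 : 0 ≤ J := integral_nonneg fun x => by positivity
  have hN : ∫ x in Ω, (m * F (x, 0) + |F (x, 0)| ^ (p - 1) * F (x, 0)) * F (x, 0) =
      m * I + J := by
    have : ∀ x, (m * F (x, 0) + |F (x, 0)| ^ (p - 1) * F (x, 0)) * F (x, 0) =
        m * F (x, 0) ^ 2 + |F (x, 0)| ^ (p + 1) := by
      intro x
      have h1 : |F (x, 0)| ^ (p + 1) = |F (x, 0)| ^ (p - 1) * F (x, 0) ^ 2 := by
        rw [← sq_abs, ← Real.rpow_natCast, ← Real.rpow_add' (abs_nonneg _) (by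
          push_cast; linarith)]
        congr 1; push_cast; ring
      rw [h1]; ring
    simp only [this]
    rw [integral_add (i1.const_mul m) i2, integral_const_mul]
  have hPP : ∫ x in Ω, (m / 2 * F (x, 0) ^ 2 + (p + 1)⁻¹ * |F (x, 0)| ^ (p + 1)) =
      m / 2 * I + (p + 1)⁻¹ * J := by
    rw [integral_add (i1.const_mul _) (i2.const_mul _), integral_const_mul, integral_const_mul]
  rw [hN] at hE
  rw [hPP] at hP
  -- supercriticality: `n / (p + 1) ≤ (n - 2) / 2`
  have hcrit : (n : ℝ) * (p + 1)⁻¹ ≤ (n - 2) / 2 := by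
    rw [div_le_iff₀ (by linarith)] at hp
    rw [← div_eq_mul_inv, div_le_div_iff₀ (by linarith) (by norm_num)]
    nlinarith
  have hJA : J ≤ A := by
    have h1 := mul_le_mul_of_nonneg_right hcrit hJ0
    rw [← hE] at hP
    linarith
  have hmI : B + m ^ 2 * E ≤ m * I := by linarith
  -- the first-order equation `∂ₜF = -mF`
  set X := ∫ z in Ω ×ˢ Ioi (0:ℝ), F z * fderiv ℝ F z et
  have j1 := (c.intT.add (c.intU.const_mul (m ^ 2)))
  have j2 := c.integrableOn_mul_dt.const_mul (2 * m)
  have hsq : ∀ z, (fderiv ℝ F z et + m * F z) ^ 2 = ((fderiv ℝ F z et) ^ 2 + m ^ 2 * (F z) ^ 2) +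
      2 * m * (F z * fderiv ℝ F z et) := fun z => by ring
  have hint : IntegrableOn (fun z => (fderiv ℝ F z et + m * F z) ^ 2) (Ω ×ˢ Ioi (0:ℝ)) := by
    simp only [hsq]; exact j1.add j2
  have hval : ∫ z in Ω ×ˢ Ioi (0:ℝ), (fderiv ℝ F z et + m * F z) ^ 2 =
      (B + m ^ 2 * E) + 2 * m * X := by
    simp only [hsq]
    have h1 : ∫ z in Ω ×ˢ Ioi (0:ℝ), (((fderiv ℝ F z et) ^ 2 + m ^ 2 * (F z) ^ 2) +
      2 * m * (F z * fderiv ℝ F z et)) = _ := integral_add j1 j2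
    have h2 : ∫ z in Ω ×ˢ Ioi (0:ℝ), ((fderiv ℝ F z et) ^ 2 + m ^ 2 * (F z) ^ 2) = _ :=
      integral_add c.intT (c.intU.const_mul (m ^ 2))
    rw [h1]
    refine congrArg₂ (· + ·) (h2.trans ?_) (integral_const_mul _ _)
    rw [integral_const_mul]; rfl
  have hode := eqOn_zero_of_integral_nonpos (f := fun z => (fderiv ℝ F z et + m * F z) ^ 2) hO
    (((c.cont1 et).add (c.cont0.const_smul m)).pow 2) hint (fun z => sq_nonneg _) (by
      rw [hval]
      have : m * I = -(2 * m * X) := by rw [hI]; ring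
      linarith)
  have hBE : B = m ^ 2 * E := by
    rw [hB, hEU, energyT, energyU, ← integral_const_mul]
    refine setIntegral_congr_fun hO.measurableSet fun z hz => ?_
    have h1 : fderiv ℝ F z et + m * F z = 0 := by
      have := hode z hz
      exact pow_eq_zero_iff (two_ne_zero) |>.1 this
    have h2 : fderiv ℝ F z et = -(m * F z) := by linarith
    simp only [h2]; ring
  have hA0 : A ≤ 0 := by linarith
  have hgrad := eqOn_zero_of_integral_nonpos hO
    (continuousOn_finsetSum _ fun i _ => (c.cont1 (ex i)).pow 2) c.integrableOn_gradX
    (fun z => Finset.sum_nonneg fun i _ => sq_nonneg _) hA0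
  refine c.eq_zero_of_gradX (by omega) fun z hz i => ?_
  have h1 := (Finset.sum_eq_zero_iff_of_nonneg fun i _ => sq_nonneg (fderiv ℝ F z (ex i))).1
    (hgrad z hz) i (Finset.mem_univ i)
  exact pow_eq_zero_iff two_ne_zero |>.1 h1

end Auxiliary

/-- **Nonexistence for the supercritical problem** (Theorem 1.2, localized formulation). -/
theorem nonexistence_supercritical
    {n : ℕ} (hn : 3 ≤ n) (p m : ℝ)
    (hp : ((n : ℝ) + 2) / ((n : ℝ) - 2) ≤ p) (hm : 0 < m)
    (Ω : Set (EuclideanSpace ℝ (Fin n)))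
    (hΩopen : IsOpen Ω) (hΩbdd : Bornology.IsBounded Ω) (hΩbdry : HasC2Boundary Ω)
    (hstar : ∀ x ∈ Ω, ∀ s ∈ Set.Icc (0:ℝ) 1, s • x ∈ Ω)
    (U : EuclideanSpace ℝ (Fin n) → ℝ → ℝ)
    (hUbdd : ∃ M : ℝ, ∀ x ∈ closure Ω, ∀ t ∈ Set.Ici (0:ℝ), |U x t| ≤ M)
    (hUreg : ContDiffOn ℝ 2 (fun z : EuclideanSpace ℝ (Fin n) × ℝ => U z.1 z.2)
      (closure Ω ×ˢ Set.Ici (0:ℝ)))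
    (hUenergy : IntegrableOn
      (fun z : EuclideanSpace ℝ (Fin n) × ℝ => gradSqFull U z.1 z.2 + (U z.1 z.2) ^ 2)
      (Ω ×ˢ Set.Ioi (0:ℝ)))
    (hPDE : ∀ x ∈ Ω, ∀ t ∈ Set.Ioi (0:ℝ), cylLaplacian U x t = m ^ 2 * U x t)
    (hDir : ∀ x ∈ frontier Ω, ∀ t ∈ Set.Ici (0:ℝ), U x t = 0)
    (hNeu : ∀ x ∈ Ω,
      -(derivWithin (U x) (Set.Ici (0:ℝ)) 0) = m * U x 0 + |U x 0| ^ (p - 1) * U x 0) :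
    ∀ x ∈ closure Ω, ∀ t ∈ Set.Ici (0:ℝ), U x t = 0 := by
  have hn' : (3:ℝ) ≤ n := by exact_mod_cast hn
  have hp1 : 1 < p := by
    refine lt_of_lt_of_le ?_ hp
    rw [lt_div_iff₀ (by linarith)]
    linarith
  have hg : Continuous fun s : ℝ => m * s + |s| ^ (p - 1) * s :=
    (continuous_const.mul continuous_id).add
      ((continuous_abs.rpow_const fun s => Or.inr (by linarith)).mul continuous_id)
  have c := cylData_of_solution hg hΩopen hΩbdd hstar hUbdd hUreg hUenergy hPDE hDir hNeu
  exact fun x hx t ht => c.eq_zero_of_supercritical hn hp hp1 x hx t ht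
end
end

section
/- Nehari identity for classical solutions of the localized problem. Let n ≥ 3 be an integer, p > 1, m > 0, and let Ω ⊂ ℝⁿ be a bounded open set with C² boundary. Suppose U : cl(Ω) × [0,∞) → ℝ is bounded, twice continuously differentiable up to the boundary, has finite energy ∫₀^∞∫_Ω (|∇U(x,t)|² + U(x,t)²) dx dt < ∞, and satisfies −ΔU + m²U = 0 in Ω × (0,∞), U(x,t) = 0 for all x ∈ ∂Ω and t ≥ 0, and −∂ₜU(x,0) = m U(x,0) + |U(x,0)|^{p−1}U(x,0) for all x ∈ Ω. Then ∫_Ω ( m U(x,0)² + |U(x,0)|^{p+1} ) dx = m² ∫₀^∞∫_Ω U(x,t)² dx dt + ∫₀^∞∫_Ω |∇U(x,t)|² dx dt. -/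
/-!
The identity is the equation tested against `U` itself. To avoid any trace or divergence theorem on
`Ω`, the equation is tested instead against `η(t) φ(U)`, where `φ` is a `C¹` truncation of the
identity vanishing near `0` and `η` is a cutoff in time. Since `U` vanishes on the lateral boundary
and is continuous up to it, `η(t) φ(U)` is supported in a compact subset of `Ω × [0, ∞)`. Hence the
fields `η φ(U) ∂ᵢU`, extended by zero, integrate by parts on all of `ℝⁿ` at each fixed `t`
(`integral_fderiv_horizontal`), and `η φ(U) ∂ₜU` is handled by the fundamental theorem of calculus
on each vertical half-line (`integral_fderiv_vertical`), producing the boundary term at `t = 0`.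
Adding these and using `ΔU = m²U` gives `weak_identity`:

  `∫∫ (η φ'(U) |∇U|² + η' φ(U) ∂ₜU + m² η φ(U) U) = ∫_Ω η(0) φ(U(x,0)) (-∂ₜU(x,0)) dx`.

Applied to a sequence with `φ_N(s) → s` and `η_N → 1` (`CutoffSeq`), both sides converge by
dominated convergence: the energy dominates on the left, boundedness of `U` and `Ω` on the right.
The only delicate point is that `φ_N'(0) = 0` for all `N`, so on `{U = 0}` the first integrand does
not see `|∇U|²`; but `∇U = 0` almost everywhere on `{U = 0}` (`ae_fderiv_eq_zero_of_eq_zero`).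
-/

open MeasureTheory

noncomputable section

open Set Filter Topology

/-! ### Integration by parts for compactly supported fields -/

/-- No regularity of `Ω` is needed, because `f` extends by zero to a compactly supported `C¹`
function on the whole space. -/
lemma integral_fderiv_eq_zero_of_compact {E : Type*} [NormedAddCommGroup E] [NormedSpace ℝ E]
    [FiniteDimensional ℝ E] [MeasurableSpace E] [BorelSpace E] (μ : Measure E)
    [μ.IsAddHaarMeasure] {Ω K : Set E} (hΩ : IsOpen Ω) (hK : IsCompact K) (hKΩ : K ⊆ Ω)
    {f : E → ℝ} (hf : ContDiffOn ℝ 1 f Ω) (hf0 : ∀ x ∈ Ω \ K, f x = 0) (v : E) :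
    ∫ x in Ω, fderiv ℝ f x v ∂μ = 0 := by
  set g : E → ℝ := Ω.indicator f with hg
  have hgK : ∀ x ∉ K, g x = 0 := by
    intro x hx
    by_cases hxΩ : x ∈ Ω
    · rw [hg, indicator_of_mem hxΩ, hf0 x ⟨hxΩ, hx⟩]
    · rw [hg, indicator_of_notMem hxΩ]
  have hgf : ∀ x ∈ Ω, g =ᶠ[𝓝 x] f := fun x hx => by
    filter_upwards [hΩ.mem_nhds hx] with y hy
    rw [hg, indicator_of_mem hy]
  have hg0 : ∀ x ∉ K, g =ᶠ[𝓝 x] fun _ => 0 := fun x hx => by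
    filter_upwards [hK.isClosed.isOpen_compl.mem_nhds hx] with y hy using hgK y hy
  have hgC : ContDiff ℝ 1 g := by
    rw [contDiff_iff_contDiffAt]
    intro x
    by_cases hx : x ∈ K
    · exact (hf.contDiffAt (hΩ.mem_nhds (hKΩ hx))).congr_of_eventuallyEq (hgf x (hKΩ hx))
    · exact contDiffAt_const.congr_of_eventuallyEq (hg0 x hx)
  have hgs : HasCompactSupport g := HasCompactSupport.intro hK hgK
  have hgi : Integrable g μ := hgC.continuous.integrable_of_hasCompactSupport hgs
  have hdi : Integrable (fun x => fderiv ℝ g x v) μ :=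
    (((hgC.continuous_fderiv one_ne_zero).clm_apply continuous_const)).integrable_of_hasCompactSupport
      (hgs.fderiv_apply ℝ v)
  have key := integral_mul_fderiv_eq_neg_fderiv_mul_of_integrable (μ := μ) (𝕜 := ℝ)
    (f := fun _ : E => (1 : ℝ)) (g := g) (v := v) (by simp) (by simpa using hdi)
    (by simpa using hgi) (fun x _ => by fun_prop)
    (fun x _ => (hgC.differentiable one_ne_zero) x)
  simp only [one_mul, fderiv_fun_const, Pi.zero_apply, _root_.zero_apply, zero_mul,
    integral_zero, neg_zero] at key
  rw [← key, ← setIntegral_eq_integral_of_forall_compl_eq_zero (s := Ω) (μ := μ)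
    (f := fun x => fderiv ℝ g x v)]
  · exact setIntegral_congr_fun hΩ.measurableSet fun x hx => by
      simp only [(hgf x hx).fderiv_eq]
  · intro x hx
    rw [(hg0 x fun h => hx (hKΩ h)).fderiv_eq]
    simp

lemma integrableOn_of_continuousOn_compact {X : Type*} [TopologicalSpace X] [T2Space X]
    [MeasurableSpace X]
    [BorelSpace X] {μ : Measure X} [IsFiniteMeasureOnCompacts μ] {S T K : Set X} {f : X → ℝ}
    (hK : IsCompact K) (hKS : K ⊆ S) (hT : MeasurableSet T) (hf : ContinuousOn f S)
    (hf0 : ∀ x ∈ T \ K, f x = 0) : IntegrableOn f T μ :=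
  ((hf.mono hKS).integrableOn_compact hK).of_forall_sdiff_eq_zero hT hf0

lemma setIntegral_prod_symm' {X Y : Type*} [MeasurableSpace X] [MeasurableSpace Y]
    {μ : Measure X} {ν : Measure Y} [SFinite μ] [SFinite ν] {s : Set X} {t : Set Y}
    {f : X × Y → ℝ} (hf : IntegrableOn f (s ×ˢ t) (μ.prod ν)) :
    ∫ z in s ×ˢ t, f z ∂μ.prod ν = ∫ y in t, ∫ x in s, f (x, y) ∂μ ∂ν := by
  simp only [← Measure.prod_restrict s t, IntegrableOn] at hf ⊢
  exact integral_prod_symm f hf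

lemma cylinder_mem_nhds {E : Type*} [TopologicalSpace E] {Ω : Set E} (hΩ : IsOpen Ω)
    {z : E × ℝ} (hz : z ∈ Ω ×ˢ Ioi (0 : ℝ)) :
    Ω ×ˢ Ici (0 : ℝ) ∈ 𝓝 z :=
  mem_of_superset ((hΩ.prod isOpen_Ioi).mem_nhds hz) (prod_mono_right Ioi_subset_Ici_self)

section Cylinder

variable {E : Type*} [NormedAddCommGroup E] [NormedSpace ℝ E]
  {Ω : Set E} {K : Set (E × ℝ)} {V : E × ℝ → ℝ}

lemma uniqueDiffOn_cylinder (hΩ : IsOpen Ω) : UniqueDiffOn ℝ (Ω ×ˢ Ici (0 : ℝ)) :=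
  hΩ.uniqueDiffOn.prod (uniqueDiffOn_Ici 0)

lemma fderivWithin_cylinder_eq_zero (hK : IsCompact K)
    (hV0 : ∀ z ∈ Ω ×ˢ Ici (0 : ℝ) \ K, V z = 0) {z : E × ℝ} (hz : z ∈ Ω ×ˢ Ici (0 : ℝ) \ K) :
    fderivWithin ℝ V (Ω ×ˢ Ici (0 : ℝ)) z = 0 := by
  have h : V =ᶠ[𝓝[Ω ×ˢ Ici (0 : ℝ)] z] fun _ => 0 := by
    filter_upwards [self_mem_nhdsWithin,
      mem_nhdsWithin_of_mem_nhds (hK.isClosed.isOpen_compl.mem_nhds hz.2)] with y hy hy'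
      using hV0 y ⟨hy, hy'⟩
  rw [h.fderivWithin_eq (hV0 z hz)]
  simp

variable [MeasureSpace E] [BorelSpace E]
  [(volume : Measure E).IsAddHaarMeasure]

/-- The derivative within `Ω × [0, ∞)` is continuous up to `t = 0`, hence bounded on the compact
`K`; on the open cylinder it is the ordinary derivative. -/
lemma integrableOn_fderiv_cylinder (hΩ : IsOpen Ω) (hK : IsCompact K)
    (hKS : K ⊆ Ω ×ˢ Ici (0 : ℝ)) (hV : ContDiffOn ℝ 1 V (Ω ×ˢ Ici (0 : ℝ)))
    (hV0 : ∀ z ∈ Ω ×ˢ Ici (0 : ℝ) \ K, V z = 0) (v : E × ℝ) :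
    IntegrableOn (fun z => fderiv ℝ V z v) (Ω ×ˢ Ioi (0 : ℝ)) := by
  have hO : MeasurableSet (Ω ×ˢ Ioi (0 : ℝ)) := (hΩ.prod isOpen_Ioi).measurableSet
  have h : IntegrableOn (fun z => fderivWithin ℝ V (Ω ×ˢ Ici (0 : ℝ)) z v) (Ω ×ˢ Ioi (0 : ℝ)) := by
    refine integrableOn_of_continuousOn_compact hK hKS hO
      ((hV.continuousOn_fderivWithin (uniqueDiffOn_cylinder hΩ) le_rfl).clm_apply
        continuousOn_const) fun z hz => ?_
    rw [fderivWithin_cylinder_eq_zero hK hV0 ⟨⟨hz.1.1, Ioi_subset_Ici_self hz.1.2⟩, hz.2⟩]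
    simp
  refine h.congr_fun (fun z hz => ?_) hO
  simp only [fderivWithin_of_mem_nhds (cylinder_mem_nhds hΩ hz)]

variable [FiniteDimensional ℝ E]

/-- On each slice `t = const > 0` the field is `C¹` with compact support in `Ω`, so the integral of
its derivative in a direction tangent to `Ω` vanishes. -/
lemma integral_fderiv_horizontal (hΩ : IsOpen Ω) (hK : IsCompact K)
    (hKS : K ⊆ Ω ×ˢ Ici (0 : ℝ)) (hV : ContDiffOn ℝ 1 V (Ω ×ˢ Ici (0 : ℝ)))
    (hV0 : ∀ z ∈ Ω ×ˢ Ici (0 : ℝ) \ K, V z = 0) (e : E) :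
    ∫ z in Ω ×ˢ Ioi (0 : ℝ), fderiv ℝ V z (e, 0) = 0 := by
  have hi := integrableOn_fderiv_cylinder hΩ hK hKS hV hV0 (e, 0)
  rw [Measure.volume_eq_prod, setIntegral_prod_symm' hi]
  refine setIntegral_eq_zero_of_forall_eq_zero fun t ht => ?_
  have hcomp : ContDiffOn ℝ 1 (fun x => V (x, t)) Ω :=
    hV.comp (contDiff_id.prodMk contDiff_const).contDiffOn fun x hx =>
      ⟨hx, (le_of_lt ht : (0 : ℝ) ≤ t)⟩
  refine Eq.trans ?_ (integral_fderiv_eq_zero_of_compact volume hΩ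
    (K := Prod.fst '' (K ∩ (univ ×ˢ {t}))) (f := fun x => V (x, t)) ?_ ?_ hcomp ?_ e)
  · refine setIntegral_congr_fun hΩ.measurableSet fun x hx => ?_
    have hd : DifferentiableAt ℝ V (x, t) :=
      (hV.contDiffAt (cylinder_mem_nhds hΩ ⟨hx, ht⟩)).differentiableAt one_ne_zero
    have h2 : HasFDerivAt (fun y : E => (y, t)) (ContinuousLinearMap.inl ℝ E ℝ) x :=
      hasFDerivAt_prodMk_left x t
    have h3 := hd.hasFDerivAt.comp x h2
    have h4 : fderiv ℝ (fun x => V (x, t)) x = _ := h3.fderiv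
    simp only [h4]
    simp
  · exact (hK.inter_right (isClosed_univ.prod isClosed_singleton)).image continuous_fst
  · rintro _ ⟨z, hz, rfl⟩
    exact (hKS hz.1).1
  · rintro x ⟨hx, hxK⟩
    exact hV0 (x, t) ⟨⟨hx, (le_of_lt ht : (0 : ℝ) ≤ t)⟩, fun h => hxK ⟨(x, t), ⟨h, by simp⟩, rfl⟩⟩

/-- On each half-line `{x} × [0, ∞)` the field vanishes for large `t`, so only the value at the
bottom `t = 0` survives. -/
lemma integral_fderiv_vertical (hΩ : IsOpen Ω) (hK : IsCompact K)
    (hKS : K ⊆ Ω ×ˢ Ici (0 : ℝ)) (hV : ContDiffOn ℝ 1 V (Ω ×ˢ Ici (0 : ℝ)))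
    (hV0 : ∀ z ∈ Ω ×ˢ Ici (0 : ℝ) \ K, V z = 0) :
    ∫ z in Ω ×ˢ Ioi (0 : ℝ), fderiv ℝ V z (0, 1) = ∫ x in Ω, -V (x, 0) := by
  have hi := integrableOn_fderiv_cylinder hΩ hK hKS hV hV0 (0, 1)
  rw [Measure.volume_eq_prod, setIntegral_prod _ hi]
  refine setIntegral_congr_fun hΩ.measurableSet fun x hx => ?_
  have hmap : MapsTo (fun t : ℝ => (x, t)) (Ici 0) (Ω ×ˢ Ici (0 : ℝ)) := fun t ht => ⟨hx, ht⟩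
  have hcm : ContinuousOn (fun t : ℝ => (x, t)) (Ici 0) := by fun_prop
  obtain ⟨R, hR⟩ := (hK.image continuous_snd).bddAbove
  have hslice : IntegrableOn (fun t => fderiv ℝ V (x, t) (0, 1)) (Ioi (0 : ℝ)) := by
    have h : IntegrableOn (fun t => fderivWithin ℝ V (Ω ×ˢ Ici (0 : ℝ)) (x, t) (0, 1))
        (Ioi (0 : ℝ)) := by
      refine integrableOn_of_continuousOn_compact (S := Ici 0)
        (K := Prod.snd '' (K ∩ ({x} ×ˢ univ)))
        ((hK.inter_right (isClosed_singleton.prod isClosed_univ)).image continuous_snd) ?_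
        measurableSet_Ioi
        ((((hV.continuousOn_fderivWithin (uniqueDiffOn_cylinder hΩ) le_rfl).clm_apply
          continuousOn_const)).comp hcm hmap) fun t ht => ?_
      · rintro _ ⟨z, hz, rfl⟩
        exact (hKS hz.1).2
      · rw [fderivWithin_cylinder_eq_zero hK hV0 ⟨mk_mem_prod hx (le_of_lt ht.1 : (0 : ℝ) ≤ t),
          fun h => ht.2 ⟨(x, t), ⟨h, by simp⟩, rfl⟩⟩]
        simp
    refine h.congr_fun (fun t ht => ?_) measurableSet_Ioi
    simp only [fderivWithin_of_mem_nhds (cylinder_mem_nhds hΩ (z := (x, t)) ⟨hx, ht⟩)]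
  have := integral_Ioi_of_hasDerivAt_of_tendsto (f := fun t => V (x, t)) (m := 0) (a := 0)
    (f' := fun t => fderiv ℝ V (x, t) (0, 1)) ?_ ?_ hslice ?_
  · simpa using this
  · exact (hV.continuousOn.comp hcm hmap) 0 self_mem_Ici
  · intro t ht
    have hd : DifferentiableAt ℝ V (x, t) :=
      (hV.contDiffAt (cylinder_mem_nhds hΩ ⟨hx, ht⟩)).differentiableAt one_ne_zero
    exact hd.hasFDerivAt.comp_hasDerivAt t ((hasDerivAt_const t x).prodMk (hasDerivAt_id t))
  · refine tendsto_const_nhds.congr' ?_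
    filter_upwards [eventually_gt_atTop R, eventually_ge_atTop 0] with t ht ht0
    exact (hV0 (x, t) ⟨⟨hx, ht0⟩, fun h => absurd (hR ⟨_, h, rfl⟩) (not_le.2 ht)⟩).symm

end Cylinder

section Classical

/-! ### Partial derivatives as components of the derivative in `(x, t)` -/

variable {n : ℕ}

lemma pderivX_eq_fderiv {G : EuclideanSpace ℝ (Fin n) → ℝ → ℝ} (i : Fin n)
    {x : EuclideanSpace ℝ (Fin n)} {t : ℝ}
    (hd : DifferentiableAt ℝ (fun z : EuclideanSpace ℝ (Fin n) × ℝ => G z.1 z.2) (x, t)) :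
    pderivX G i x t = fderiv ℝ (fun z : EuclideanSpace ℝ (Fin n) × ℝ => G z.1 z.2) (x, t)
      (EuclideanSpace.single i 1, 0) := by
  have hl : HasFDerivAt (fun y : EuclideanSpace ℝ (Fin n) => (y, t))
      (ContinuousLinearMap.inl ℝ (EuclideanSpace ℝ (Fin n)) ℝ) x := hasFDerivAt_prodMk_left x t
  have h := hd.hasFDerivAt.comp x hl
  have h' : fderiv ℝ (fun y => G y t) x = _ := h.fderiv
  rw [pderivX, h']
  simp

lemma pderivT_eq_fderiv {G : EuclideanSpace ℝ (Fin n) → ℝ → ℝ}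
    {x : EuclideanSpace ℝ (Fin n)} {t : ℝ}
    (hd : DifferentiableAt ℝ (fun z : EuclideanSpace ℝ (Fin n) × ℝ => G z.1 z.2) (x, t)) :
    pderivT G x t = fderiv ℝ (fun z : EuclideanSpace ℝ (Fin n) × ℝ => G z.1 z.2) (x, t)
      (0, 1) :=
  (hd.hasFDerivAt.comp_hasDerivAt t ((hasDerivAt_const t x).prodMk (hasDerivAt_id t))).deriv

variable {Ω : Set (EuclideanSpace ℝ (Fin n))} {U : EuclideanSpace ℝ (Fin n) → ℝ → ℝ}

lemma pderivX_eq_fderivWithin (hΩ : IsOpen Ω)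
    (hU : ContDiffOn ℝ 2 (fun z : EuclideanSpace ℝ (Fin n) × ℝ => U z.1 z.2)
      (Ω ×ˢ Ici (0 : ℝ))) (i : Fin n) {z : EuclideanSpace ℝ (Fin n) × ℝ}
    (hz : z ∈ Ω ×ˢ Ioi (0 : ℝ)) :
    pderivX U i z.1 z.2 = fderivWithin ℝ (fun z : EuclideanSpace ℝ (Fin n) × ℝ => U z.1 z.2)
      (Ω ×ˢ Ici (0 : ℝ)) z (EuclideanSpace.single i 1, 0) := by
  rw [fderivWithin_of_mem_nhds (cylinder_mem_nhds hΩ hz)]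
  exact pderivX_eq_fderiv i
    ((hU.contDiffAt (cylinder_mem_nhds hΩ hz)).differentiableAt two_ne_zero)

lemma pderivT_eq_fderivWithin (hΩ : IsOpen Ω)
    (hU : ContDiffOn ℝ 2 (fun z : EuclideanSpace ℝ (Fin n) × ℝ => U z.1 z.2)
      (Ω ×ˢ Ici (0 : ℝ))) {z : EuclideanSpace ℝ (Fin n) × ℝ}
    (hz : z ∈ Ω ×ˢ Ioi (0 : ℝ)) :
    pderivT U z.1 z.2 = fderivWithin ℝ (fun z : EuclideanSpace ℝ (Fin n) × ℝ => U z.1 z.2)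
      (Ω ×ˢ Ici (0 : ℝ)) z (0, 1) := by
  rw [fderivWithin_of_mem_nhds (cylinder_mem_nhds hΩ hz)]
  exact pderivT_eq_fderiv
    ((hU.contDiffAt (cylinder_mem_nhds hΩ hz)).differentiableAt two_ne_zero)

lemma derivWithin_eq_fderivWithin
    (hU : ContDiffOn ℝ 2 (fun z : EuclideanSpace ℝ (Fin n) × ℝ => U z.1 z.2)
      (Ω ×ˢ Ici (0 : ℝ))) {x : EuclideanSpace ℝ (Fin n)} (hx : x ∈ Ω) :
    derivWithin (U x) (Ici (0 : ℝ)) 0 =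
      fderivWithin ℝ (fun z : EuclideanSpace ℝ (Fin n) × ℝ => U z.1 z.2)
        (Ω ×ˢ Ici (0 : ℝ)) (x, 0) (0, 1) := by
  have hd := (hU.differentiableOn two_ne_zero (x, 0) ⟨hx, self_mem_Ici⟩).hasFDerivWithinAt
  have h1 : HasDerivWithinAt (fun t : ℝ => (x, t)) ((0, 1) : EuclideanSpace ℝ (Fin n) × ℝ)
      (Ici (0 : ℝ)) 0 :=
    ((hasDerivAt_const (0 : ℝ) x).prodMk (hasDerivAt_id (0 : ℝ))).hasDerivWithinAt
  have h2 := hd.comp_hasDerivWithinAt (0 : ℝ) h1 (fun t ht => ⟨hx, ht⟩)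
  exact h2.derivWithin (uniqueDiffOn_Ici 0 0 self_mem_Ici)

/-! ### The equation tested against a truncation of the solution -/

/-- The equation tested against `η(t) φ(U)`, where `φ` vanishes on `[-ε, ε]` and `η` on `[R, ∞)`. -/
lemma weak_identity (hΩopen : IsOpen Ω) (hΩbdd : Bornology.IsBounded Ω) {m : ℝ}
    (hUreg : ContDiffOn ℝ 2 (fun z : EuclideanSpace ℝ (Fin n) × ℝ => U z.1 z.2)
      (closure Ω ×ˢ Set.Ici (0:ℝ)))
    (hPDE : ∀ x ∈ Ω, ∀ t ∈ Set.Ioi (0:ℝ), cylLaplacian U x t = m ^ 2 * U x t)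
    (hDir : ∀ x ∈ frontier Ω, ∀ t ∈ Set.Ici (0:ℝ), U x t = 0)
    {φ η : ℝ → ℝ} (hφ : ContDiff ℝ 1 φ) (hη : ContDiff ℝ 1 η) {ε R : ℝ} (hε : 0 < ε)
    (hφ0 : ∀ s, |s| ≤ ε → φ s = 0) (hη0 : ∀ t, R ≤ t → η t = 0) :
    ∫ z in Ω ×ˢ Ioi (0 : ℝ), (η z.2 * deriv φ (U z.1 z.2) * gradSqFull U z.1 z.2
        + deriv η z.2 * φ (U z.1 z.2) * pderivT U z.1 z.2
        + η z.2 * φ (U z.1 z.2) * (m ^ 2 * U z.1 z.2))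
      = ∫ x in Ω, η 0 * φ (U x 0) * -(derivWithin (U x) (Ici (0 : ℝ)) 0) := by
  set u : EuclideanSpace ℝ (Fin n) × ℝ → ℝ := fun z => U z.1 z.2 with hu
  set S : Set (EuclideanSpace ℝ (Fin n) × ℝ) := Ω ×ˢ Ici (0 : ℝ) with hS
  set W := fderivWithin ℝ u S with hW
  have hUS : ContDiffOn ℝ 2 u S := hUreg.mono (prod_mono_left subset_closure)
  have hWS : ContDiffOn ℝ 1 W S :=
    hUS.fderivWithin (uniqueDiffOn_cylinder hΩopen) (by norm_num)
  -- `K` contains the support of `η φ(U)`; it avoids `∂Ω × [0, R]` because `U = 0` there.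
  set K : Set (EuclideanSpace ℝ (Fin n) × ℝ) :=
    (closure Ω ×ˢ Icc 0 R) ∩ (fun z => |u z|) ⁻¹' Ici ε with hKdef
  have hK : IsCompact K := by
    have hc : IsCompact (closure Ω ×ˢ Icc 0 R) := hΩbdd.isCompact_closure.prod isCompact_Icc
    have hcl : IsClosed K := ((hUreg.continuousOn.mono
      (prod_mono_right Icc_subset_Ici_self)).abs).preimage_isClosed_of_isClosed
        hc.isClosed isClosed_Ici
    exact hc.of_isClosed_subset hcl inter_subset_left
  have hKS : K ⊆ S := by
    rintro z ⟨⟨hz1, hz2⟩, hz3⟩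
    refine ⟨?_, hz2.1⟩
    by_contra hzΩ
    have hf : z.1 ∈ frontier Ω := by
      rw [hΩopen.frontier_eq]
      exact ⟨hz1, hzΩ⟩
    have h0 := hDir _ hf z.2 hz2.1
    simp only [mem_preimage, hu, h0, abs_zero, mem_Ici] at hz3
    exact absurd hz3 (not_le.2 hε)
  set V : EuclideanSpace ℝ (Fin n) × ℝ → EuclideanSpace ℝ (Fin n) × ℝ → ℝ :=
    fun v z => η z.2 * φ (u z) * W z v with hVdef
  have hV : ∀ v, ContDiffOn ℝ 1 (V v) S := fun v =>
    ((hη.comp contDiff_snd).contDiffOn.mul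
      (hφ.comp_contDiffOn (hUS.of_le (by norm_num)))).mul (hWS.clm_apply contDiffOn_const)
  have hV0 : ∀ v, ∀ z ∈ S \ K, V v z = 0 := by
    rintro v z ⟨hzS, hzK⟩
    rcases le_or_gt R z.2 with h | h
    · simp [hVdef, hη0 _ h]
    · have : |u z| ≤ ε := by
        by_contra hcon
        exact hzK ⟨⟨subset_closure hzS.1, hzS.2, h.le⟩, (not_le.1 hcon).le⟩
      simp [hVdef, hφ0 _ this]
  have hx := fun i : Fin n => integral_fderiv_horizontal hΩopen hK hKS
    (hV (EuclideanSpace.single i 1, 0)) (hV0 _) (EuclideanSpace.single i 1)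
  have hxi := fun i : Fin n => integrableOn_fderiv_cylinder hΩopen hK hKS
    (hV (EuclideanSpace.single i 1, 0)) (hV0 _) (EuclideanSpace.single i 1, 0)
  have ht := integral_fderiv_vertical hΩopen hK hKS (hV (0, 1)) (hV0 _)
  have hti := integrableOn_fderiv_cylinder hΩopen hK hKS (hV (0, 1)) (hV0 _) (0, 1)
  have hO : MeasurableSet (Ω ×ˢ Ioi (0 : ℝ)) := (hΩopen.prod isOpen_Ioi).measurableSet
  have hrhs : ∫ x in Ω, η 0 * φ (U x 0) * -(derivWithin (U x) (Ici (0 : ℝ)) 0)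
      = ∫ x in Ω, -V (0, 1) (x, 0) := by
    refine setIntegral_congr_fun hΩopen.measurableSet fun x hx => ?_
    simp only [hVdef, hW, hS, hu]
    rw [derivWithin_eq_fderivWithin hUS hx, mul_neg]
  rw [hrhs, ← ht]
  -- the horizontal divergence terms integrate to zero and may be added
  have hsum : ∫ z in Ω ×ˢ Ioi (0 : ℝ), ((∑ i : Fin n,
      fderiv ℝ (V (EuclideanSpace.single i 1, 0)) z (EuclideanSpace.single i 1, 0))
        + fderiv ℝ (V (0, 1)) z (0, 1))
      = ∫ z in Ω ×ˢ Ioi (0 : ℝ), fderiv ℝ (V (0, 1)) z (0, 1) := by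
    rw [integral_add (integrable_finsetSum _ fun i _ => hxi i) hti,
      integral_finsetSum _ fun i _ => hxi i]
    simp [hx]
  rw [← hsum]
  refine setIntegral_congr_fun hO fun z hz => ?_
  have hSz : S ∈ 𝓝 z := cylinder_mem_nhds hΩopen hz
  have hdu : HasFDerivAt u (W z) z := by
    rw [hW, fderivWithin_of_mem_nhds hSz]
    exact ((hUS.contDiffAt hSz).differentiableAt two_ne_zero).hasFDerivAt
  have hdW : ∀ v, DifferentiableAt ℝ (fun z => W z v) z := fun v =>
    ((hWS.contDiffAt hSz).differentiableAt one_ne_zero).clm_apply (differentiableAt_const v)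
  have hdV : ∀ v w, fderiv ℝ (V v) z w = w.2 * (deriv η z.2 * φ (u z) * W z v)
      + η z.2 * deriv φ (u z) * (W z w * W z v)
      + η z.2 * φ (u z) * fderiv ℝ (fun z => W z v) z w := by
    intro v w
    have h1 : HasFDerivAt (fun z : EuclideanSpace ℝ (Fin n) × ℝ => η z.2)
        (deriv η z.2 • ContinuousLinearMap.snd ℝ (EuclideanSpace ℝ (Fin n)) ℝ) z :=
      ((hη.differentiable one_ne_zero z.2).hasDerivAt).comp_hasFDerivAt z hasFDerivAt_snd
    have h2 : HasFDerivAt (fun z => φ (u z)) (deriv φ (u z) • W z) z :=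
      ((hφ.differentiable one_ne_zero (u z)).hasDerivAt).comp_hasFDerivAt z hdu
    have h3 := ((h1.mul h2).mul (hdW v).hasFDerivAt).fderiv
    have h4 : fderiv ℝ (V v) z = _ := h3
    rw [h4]
    simp
    ring
  have hOz : Ω ×ˢ Ioi (0 : ℝ) ∈ 𝓝 z := (hΩopen.prod isOpen_Ioi).mem_nhds hz
  have hxx : ∀ i : Fin n, pderivX (fun y s => pderivX U i y s) i z.1 z.2
      = fderiv ℝ (fun z => W z (EuclideanSpace.single i 1, 0)) z
        (EuclideanSpace.single i 1, 0) := by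
    intro i
    have hev : (fun z : EuclideanSpace ℝ (Fin n) × ℝ => pderivX U i z.1 z.2)
        =ᶠ[𝓝 z] fun z => W z (EuclideanSpace.single i 1, 0) := by
      filter_upwards [hOz] with y hy using pderivX_eq_fderivWithin hΩopen hUS i hy
    rw [← hev.fderiv_eq]
    exact pderivX_eq_fderiv i ((hdW _).congr_of_eventuallyEq hev)
  have htt : pderivT (fun y s => pderivT U y s) z.1 z.2
      = fderiv ℝ (fun z => W z (0, 1)) z (0, 1) := by
    have hev : (fun z : EuclideanSpace ℝ (Fin n) × ℝ => pderivT U z.1 z.2)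
        =ᶠ[𝓝 z] fun z => W z (0, 1) := by
      filter_upwards [hOz] with y hy using pderivT_eq_fderivWithin hΩopen hUS hy
    rw [← hev.fderiv_eq]
    exact pderivT_eq_fderiv ((hdW _).congr_of_eventuallyEq hev)
  have hL := hPDE z.1 hz.1 z.2 hz.2
  rw [cylLaplacian] at hL
  simp only [← hL, hdV, gradSqFull, hxx, htt, pderivX_eq_fderivWithin hΩopen hUS _ hz,
    pderivT_eq_fderivWithin hΩopen hUS hz, ← hu, ← hS, ← hW]
  simp only [zero_mul, zero_add, one_mul, Finset.sum_add_distrib, ← Finset.mul_sum, hu, pow_two]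
  ring

/-- A differentiable function has zero derivative at almost every point of its zero set. The
multiple `f • e` of a fixed vector `e ≠ 0` is a map `E → E` that agrees with the zero linear map on
the zero set, to which the density-point lemma `ApproximatesLinearOn.norm_fderiv_sub_le` applies. -/
lemma ae_fderiv_eq_zero_of_eq_zero {E : Type*} [NormedAddCommGroup E] [NormedSpace ℝ E]
    [FiniteDimensional ℝ E] [MeasurableSpace E] [BorelSpace E] (μ : Measure E)
    [μ.IsAddHaarMeasure] {O : Set E} (hO : IsOpen O) {f : E → ℝ} (hf : DifferentiableOn ℝ f O) :
    ∀ᵐ x ∂μ.restrict O, f x = 0 → fderiv ℝ f x = 0 := by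
  rcases subsingleton_or_nontrivial E with hE | hE
  · exact Eventually.of_forall fun x _ => ContinuousLinearMap.ext fun v => by
      rw [Subsingleton.elim v 0]; simp
  obtain ⟨e, he⟩ := exists_ne (0 : E)
  set s : Set E := O ∩ f ⁻¹' {0} with hs
  have hsm : MeasurableSet s := by
    have h := hf.continuousOn.isOpen_inter_preimage hO isOpen_compl_singleton (t := {0}ᶜ)
    have : s = O \ (O ∩ f ⁻¹' {0}ᶜ) := by
      ext x; simp [hs]
    rw [this]
    exact hO.measurableSet.diff h.measurableSet
  have happ : ApproximatesLinearOn (fun x => f x • e) (0 : E →L[ℝ] E) s 0 := by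
    intro x hx y hy
    have hx0 : f x = 0 := hx.2
    have hy0 : f y = 0 := hy.2
    simp [hx0, hy0]
  have h := happ.norm_fderiv_sub_le μ hsm (fun x => (fderiv ℝ f x).smulRight e) (fun x hx =>
    ((((hf x hx.1).differentiableAt (hO.mem_nhds hx.1)).hasFDerivAt).smul_const e).hasFDerivWithinAt)
  rw [ae_restrict_iff' hsm] at h
  rw [ae_restrict_iff' hO.measurableSet]
  filter_upwards [h] with x hx hxO hx0
  have h1 := hx ⟨hxO, hx0⟩
  have h2 : fderiv ℝ f x = 0 ∨ e = 0 := by simpa using h1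
  exact h2.resolve_right he

end Classical

/-! ### Truncations and cutoffs -/

/-- The truncation `y ↦ χ(y² - 1) y`, with `χ` the smooth transition from `0` to `1`. -/
lemma exists_truncation : ∃ (ψ : ℝ → ℝ) (C : ℝ), ContDiff ℝ 1 ψ ∧ (∀ y, |y| ≤ 1 → ψ y = 0) ∧
    (∀ y, 2 < |y| → ψ =ᶠ[𝓝 y] id) ∧ (∀ y, |ψ y| ≤ |y|) ∧ ∀ y, |deriv ψ y| ≤ C := by
  set ψ : ℝ → ℝ := fun y => Real.smoothTransition (y ^ 2 - 1) * y with hψ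
  have hC : ContDiff ℝ 1 ψ :=
    (Real.smoothTransition.contDiff.comp ((contDiff_id.pow 2).sub contDiff_const)).mul contDiff_id
  have hid : ∀ y, 2 < |y| → ψ =ᶠ[𝓝 y] id := by
    intro y hy
    filter_upwards [(isOpen_lt continuous_const continuous_abs).mem_nhds hy] with x hx
    have hx2 : 2 < |x| := hx
    have : (1 : ℝ) ≤ x ^ 2 - 1 := by
      rw [← sq_abs]; nlinarith
    simp [hψ, Real.smoothTransition.one_of_one_le this]
  obtain ⟨C, hCb⟩ := (isCompact_Icc (a := (-2 : ℝ)) (b := 2)).exists_bound_of_continuousOn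
    (hC.continuous_deriv le_rfl).continuousOn
  refine ⟨ψ, max C 1, hC, fun y hy => ?_, hid, fun y => ?_, fun y => ?_⟩
  · have : y ^ 2 - 1 ≤ 0 := by
      rw [← sq_abs]; nlinarith [abs_nonneg y]
    simp [hψ, Real.smoothTransition.zero_of_nonpos this]
  · rw [hψ, abs_mul, abs_of_nonneg (Real.smoothTransition.nonneg _)]
    exact mul_le_of_le_one_left (abs_nonneg y) (Real.smoothTransition.le_one _)
  · rcases le_or_gt |y| 2 with h | h
    · exact (hCb y (abs_le.1 h)).trans (le_max_left _ _)
    · rw [(hid y h).deriv_eq]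
      simp

/-- The cutoff `t ↦ χ(2 - t)`, with `χ` the smooth transition from `0` to `1`. -/
lemma exists_cutoff : ∃ (ζ : ℝ → ℝ) (C : ℝ), ContDiff ℝ 1 ζ ∧ (∀ t, t < 1 → ζ =ᶠ[𝓝 t] fun _ => 1) ∧
    (∀ t, 2 ≤ t → ζ t = 0) ∧ (∀ t, |ζ t| ≤ 1) ∧ ∀ t, |deriv ζ t| ≤ C := by
  set ζ : ℝ → ℝ := fun t => Real.smoothTransition (2 - t) with hζ
  have hC : ContDiff ℝ 1 ζ :=
    Real.smoothTransition.contDiff.comp (contDiff_const.sub contDiff_id)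
  have h1 : ∀ t, t < 1 → ζ =ᶠ[𝓝 t] fun _ => 1 := fun t ht => by
    filter_upwards [Iio_mem_nhds ht] with s hs
    exact Real.smoothTransition.one_of_one_le (by linarith [mem_Iio.1 hs])
  have h2 : ∀ t, 2 ≤ t → ζ t = 0 := fun t ht =>
    Real.smoothTransition.zero_of_nonpos (by linarith)
  obtain ⟨C, hCb⟩ := (isCompact_Icc (a := (1 : ℝ)) (b := 2)).exists_bound_of_continuousOn
    (hC.continuous_deriv le_rfl).continuousOn
  refine ⟨ζ, max C 0, hC, h1, h2, fun t => ?_, fun t => ?_⟩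
  · rw [hζ, abs_of_nonneg (Real.smoothTransition.nonneg _)]
    exact Real.smoothTransition.le_one _
  · rcases lt_or_ge t 1 with h | h
    · rw [(h1 t h).deriv_eq]
      simp
    rcases lt_or_ge 2 t with h' | h'
    · have : ζ =ᶠ[𝓝 t] fun _ => 0 := by
        filter_upwards [Ioi_mem_nhds h'] with s hs using h2 s (le_of_lt hs)
      rw [this.deriv_eq]
      simp
    · exact (hCb t ⟨h, h'⟩).trans (le_max_left _ _)

/-- `φ N` are `C¹` truncations of the identity, vanishing near `0`, and `η N` are `C¹` cutoffs in
time, equal to `1` at `t = 0` and vanishing for large `t`. They converge pointwise to the identity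
and to `1` together with their derivatives (those of `φ N` away from `0`), and `C` bounds all the
derivatives. -/
structure CutoffSeq (φ η : ℕ → ℝ → ℝ) (C : ℝ) : Prop where
  contDiff_trunc : ∀ N, ContDiff ℝ 1 (φ N)
  contDiff_cut : ∀ N, ContDiff ℝ 1 (η N)
  trunc_eq_zero : ∀ N, ∃ ε > 0, ∀ s, |s| ≤ ε → φ N s = 0
  cut_eq_zero : ∀ N, ∃ R, ∀ t, R ≤ t → η N t = 0
  cut_zero : ∀ N, η N 0 = 1
  abs_trunc_le : ∀ N s, |φ N s| ≤ |s|
  abs_deriv_trunc_le : ∀ N s, |deriv (φ N) s| ≤ C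
  abs_cut_le : ∀ N t, |η N t| ≤ 1
  abs_deriv_cut_le : ∀ N t, |deriv (η N) t| ≤ C
  tendsto_trunc : ∀ s, Tendsto (fun N => φ N s) atTop (𝓝 s)
  tendsto_deriv_trunc : ∀ s, s ≠ 0 → Tendsto (fun N => deriv (φ N) s) atTop (𝓝 1)
  tendsto_cut : ∀ t, Tendsto (fun N => η N t) atTop (𝓝 1)
  tendsto_deriv_cut : ∀ t, Tendsto (fun N => deriv (η N) t) atTop (𝓝 0)

/-- Rescaling: `φ N s = ψ((N+1) s)/(N+1)` and `η N t = ζ(t/(N+1))`, with `ψ` the truncation and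
`ζ` the cutoff above. -/
lemma exists_cutoffSeq : ∃ φ η C, CutoffSeq φ η C := by
  obtain ⟨ψ, C₁, hψ, hψ0, hψ1, hψb, hψd⟩ := exists_truncation
  obtain ⟨ζ, C₂, hζ, hζ1, hζ0, hζb, hζd⟩ := exists_cutoff
  have hc : ∀ N : ℕ, (0 : ℝ) < N + 1 := fun N => by positivity
  have hlarge : ∀ a : ℝ, ∀ᶠ N : ℕ in atTop, a < (N : ℝ) + 1 := fun a => by
    filter_upwards [(tendsto_natCast_atTop_atTop (R := ℝ)).eventually_gt_atTop a] with N hN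
    linarith
  have hs2 : ∀ s : ℝ, s ≠ 0 → ∀ᶠ N : ℕ in atTop, 2 < |((N : ℝ) + 1) * s| := fun s hs => by
    filter_upwards [hlarge (2 / |s|)] with N hN
    rw [abs_mul, abs_of_pos (hc N)]
    exact (div_lt_iff₀ (abs_pos.2 hs)).1 hN
  have ht1 : ∀ t : ℝ, ∀ᶠ N : ℕ in atTop, ((N : ℝ) + 1)⁻¹ * t < 1 := fun t => by
    filter_upwards [hlarge t] with N hN
    rw [inv_mul_lt_iff₀ (hc N)]
    linarith
  have hdφ : ∀ (N : ℕ) (s : ℝ), deriv (fun s => ((N : ℝ) + 1)⁻¹ * ψ (((N : ℝ) + 1) * s)) s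
      = deriv ψ (((N : ℝ) + 1) * s) := fun N s => by
    rw [deriv_const_mul_field, deriv_comp_mul_left, smul_eq_mul,
      inv_mul_cancel_left₀ (hc N).ne']
  have hdη : ∀ (N : ℕ) (t : ℝ), deriv (fun t => ζ (((N : ℝ) + 1)⁻¹ * t)) t
      = ((N : ℝ) + 1)⁻¹ * deriv ζ (((N : ℝ) + 1)⁻¹ * t) := fun N t => by
    rw [deriv_comp_mul_left, smul_eq_mul]
  refine ⟨fun N s => ((N : ℝ) + 1)⁻¹ * ψ (((N : ℝ) + 1) * s),
    fun N t => ζ (((N : ℝ) + 1)⁻¹ * t), max C₁ C₂, ?_⟩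
  refine
  { contDiff_trunc := fun N => contDiff_const.mul (hψ.comp (contDiff_const.mul contDiff_id))
    contDiff_cut := fun N => hζ.comp (contDiff_const.mul contDiff_id)
    trunc_eq_zero := fun N => ⟨((N : ℝ) + 1)⁻¹, inv_pos.2 (hc N), fun s hs => ?_⟩
    cut_eq_zero := fun N => ⟨((N : ℝ) + 1) * 2, fun t ht => hζ0 _ ?_⟩
    cut_zero := fun N => ?_
    abs_trunc_le := fun N s => ?_
    abs_deriv_trunc_le := fun N s => ?_
    abs_cut_le := fun N t => hζb _
    abs_deriv_cut_le := fun N t => ?_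
    tendsto_trunc := fun s => ?_
    tendsto_deriv_trunc := fun s hs => ?_
    tendsto_cut := fun t => ?_
    tendsto_deriv_cut := fun t => ?_ }
  · rw [hψ0, mul_zero]
    rw [abs_mul, abs_of_pos (hc N)]
    rwa [← mul_one ((N : ℝ) + 1)⁻¹, ← div_eq_inv_mul, le_div_iff₀' (hc N)] at hs
  · rwa [← div_eq_inv_mul, le_div_iff₀' (hc N)]
  · simpa using (hζ1 0 one_pos).eq_of_nhds
  · rw [abs_mul, abs_of_pos (inv_pos.2 (hc N)), inv_mul_le_iff₀ (hc N)]
    refine (hψb _).trans_eq ?_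
    rw [abs_mul, abs_of_pos (hc N)]
  · rw [hdφ]
    exact (hψd _).trans (le_max_left _ _)
  · rw [hdη, abs_mul, abs_of_pos (inv_pos.2 (hc N))]
    refine (mul_le_of_le_one_left (abs_nonneg _) (inv_le_one_of_one_le₀ ?_)).trans
      ((hζd _).trans (le_max_right _ _))
    have : (0 : ℝ) ≤ N := by positivity
    linarith
  · rcases eq_or_ne s 0 with rfl | hs
    · simp [hψ0 0 (by simp)]
    · refine tendsto_const_nhds.congr' ?_
      filter_upwards [hs2 s hs] with N hN
      rw [(hψ1 _ hN).eq_of_nhds, id, inv_mul_cancel_left₀ (hc N).ne']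
  · refine tendsto_const_nhds.congr' ?_
    filter_upwards [hs2 s hs] with N hN
    rw [hdφ, (hψ1 _ hN).deriv_eq, deriv_id]
  · refine tendsto_const_nhds.congr' ?_
    filter_upwards [ht1 t] with N hN
    exact (hζ1 _ hN).eq_of_nhds.symm
  · refine tendsto_const_nhds.congr' ?_
    filter_upwards [ht1 t] with N hN
    rw [hdη, (hζ1 _ hN).deriv_eq]
    simp

/-! ### Passage to the limit -/

/-- **Nehari identity for classical solutions of the localized problem.** -/
theorem nehari_identity
    {n : ℕ} (hn : 3 ≤ n) (p m : ℝ) (hp : 1 < p) (hm : 0 < m)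
    (Ω : Set (EuclideanSpace ℝ (Fin n)))
    (hΩopen : IsOpen Ω) (hΩbdd : Bornology.IsBounded Ω) (hΩbdry : HasC2Boundary Ω)
    (U : EuclideanSpace ℝ (Fin n) → ℝ → ℝ)
    (hUbdd : ∃ M : ℝ, ∀ x ∈ closure Ω, ∀ t ∈ Set.Ici (0:ℝ), |U x t| ≤ M)
    (hUreg : ContDiffOn ℝ 2 (fun z : EuclideanSpace ℝ (Fin n) × ℝ => U z.1 z.2)
      (closure Ω ×ˢ Set.Ici (0:ℝ)))
    (hUenergy : IntegrableOn
      (fun z : EuclideanSpace ℝ (Fin n) × ℝ => gradSqFull U z.1 z.2 + (U z.1 z.2) ^ 2)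
      (Ω ×ˢ Set.Ioi (0:ℝ)))
    (hPDE : ∀ x ∈ Ω, ∀ t ∈ Set.Ioi (0:ℝ), cylLaplacian U x t = m ^ 2 * U x t)
    (hDir : ∀ x ∈ frontier Ω, ∀ t ∈ Set.Ici (0:ℝ), U x t = 0)
    (hNeu : ∀ x ∈ Ω,
      -(derivWithin (U x) (Set.Ici (0:ℝ)) 0) = m * U x 0 + |U x 0| ^ (p - 1) * U x 0) :
    (∫ x in Ω, (m * (U x 0) ^ 2 + |U x 0| ^ (p + 1))) =
      m ^ 2 * (∫ t in Set.Ioi (0:ℝ), ∫ x in Ω, (U x t) ^ 2) +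
        ∫ t in Set.Ioi (0:ℝ), ∫ x in Ω, gradSqFull U x t := by
  obtain ⟨φ, η, C, hcut⟩ := exists_cutoffSeq
  obtain ⟨M, hM⟩ := hUbdd
  set O : Set (EuclideanSpace ℝ (Fin n) × ℝ) := Ω ×ˢ Ioi (0 : ℝ) with hOdef
  have hOopen : IsOpen O := hΩopen.prod isOpen_Ioi
  have hO : MeasurableSet O := hOopen.measurableSet
  have hUS : ContDiffOn ℝ 2 (fun z : EuclideanSpace ℝ (Fin n) × ℝ => U z.1 z.2)
      (Ω ×ˢ Ici (0 : ℝ)) := hUreg.mono (prod_mono_left subset_closure)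
  have hOS : O ⊆ Ω ×ˢ Ici (0 : ℝ) := prod_mono_right Ioi_subset_Ici_self
  have hWc := (hUS.continuousOn_fderivWithin (uniqueDiffOn_cylinder hΩopen) (by norm_num)).mono hOS
  have hcu : ContinuousOn (fun z : EuclideanSpace ℝ (Fin n) × ℝ => U z.1 z.2) O :=
    hUS.continuousOn.mono hOS
  have hcT : ContinuousOn (fun z : EuclideanSpace ℝ (Fin n) × ℝ => pderivT U z.1 z.2) O :=
    (hWc.clm_apply continuousOn_const).congr fun z hz => pderivT_eq_fderivWithin hΩopen hUS hz
  have hcX : ∀ i, ContinuousOn (fun z : EuclideanSpace ℝ (Fin n) × ℝ => pderivX U i z.1 z.2) O :=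
    fun i => (hWc.clm_apply continuousOn_const).congr
      fun z hz => pderivX_eq_fderivWithin hΩopen hUS i hz
  have hcG : ContinuousOn
      (fun z : EuclideanSpace ℝ (Fin n) × ℝ => gradSqFull U z.1 z.2) O :=
    (continuousOn_finsetSum _ fun i _ => (hcX i).pow 2).add (hcT.pow 2)
  have hG0 : ∀ x t, 0 ≤ gradSqFull U x t := fun x t =>
    add_nonneg (Finset.sum_nonneg fun i _ => sq_nonneg _) (sq_nonneg _)
  have hTG : ∀ x t, pderivT U x t ^ 2 ≤ gradSqFull U x t := fun x t =>
    le_add_of_nonneg_left (Finset.sum_nonneg fun i _ => sq_nonneg _)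
  have hGi : IntegrableOn
      (fun z : EuclideanSpace ℝ (Fin n) × ℝ => gradSqFull U z.1 z.2) O := by
    refine Integrable.mono' hUenergy (hcG.aestronglyMeasurable hO) (Eventually.of_forall fun z => ?_)
    rw [Real.norm_of_nonneg (hG0 _ _)]
    exact le_add_of_nonneg_right (sq_nonneg _)
  have hUi : IntegrableOn
      (fun z : EuclideanSpace ℝ (Fin n) × ℝ => U z.1 z.2 ^ 2) O := by
    refine Integrable.mono' hUenergy ((hcu.pow 2).aestronglyMeasurable hO)
      (Eventually.of_forall fun z => ?_)
    rw [Real.norm_of_nonneg (sq_nonneg _)]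
    exact le_add_of_nonneg_left (hG0 _ _)
  have hC0 : 0 ≤ C := (abs_nonneg _).trans (hcut.abs_deriv_cut_le 0 0)
  have hlimL := tendsto_integral_of_dominated_convergence (μ := volume.restrict O)
    (F := fun N z => η N z.2 * deriv (φ N) (U z.1 z.2) * gradSqFull U z.1 z.2
        + deriv (η N) z.2 * φ N (U z.1 z.2) * pderivT U z.1 z.2
        + η N z.2 * φ N (U z.1 z.2) * (m ^ 2 * U z.1 z.2))
    (f := fun z => gradSqFull U z.1 z.2 + m ^ 2 * U z.1 z.2 ^ 2)
    (fun z => (2 * C + m ^ 2) * (gradSqFull U z.1 z.2 + U z.1 z.2 ^ 2))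
    ?_ (hUenergy.const_mul _) ?_ ?_
  rotate_left
  · intro N
    have hφc : ContinuousOn (fun z : EuclideanSpace ℝ (Fin n) × ℝ => φ N (U z.1 z.2)) O :=
      (hcut.contDiff_trunc N).continuous.comp_continuousOn hcu
    have hdφc : ContinuousOn
        (fun z : EuclideanSpace ℝ (Fin n) × ℝ => deriv (φ N) (U z.1 z.2)) O :=
      ((hcut.contDiff_trunc N).continuous_deriv le_rfl).comp_continuousOn hcu
    have hηc : ContinuousOn (fun z : EuclideanSpace ℝ (Fin n) × ℝ => η N z.2) O :=
      ((hcut.contDiff_cut N).continuous.comp continuous_snd).continuousOn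
    have hdηc : ContinuousOn (fun z : EuclideanSpace ℝ (Fin n) × ℝ => deriv (η N) z.2) O :=
      (((hcut.contDiff_cut N).continuous_deriv le_rfl).comp continuous_snd).continuousOn
    exact ((((hηc.mul hdφc).mul hcG).add ((hdηc.mul hφc).mul hcT)).add
      ((hηc.mul hφc).mul (continuousOn_const.mul hcu))).aestronglyMeasurable hO
  · refine fun N => Eventually.of_forall fun z => ?_
    set a := U z.1 z.2
    set b := pderivT U z.1 z.2
    set g := gradSqFull U z.1 z.2
    have hg : 0 ≤ g := hG0 _ _
    have hbg : b ^ 2 ≤ g := hTG _ _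
    have h1 : |η N z.2 * deriv (φ N) a * g| ≤ C * g := by
      rw [abs_mul, abs_mul, abs_of_nonneg hg]
      refine mul_le_mul_of_nonneg_right ?_ hg
      calc |η N z.2| * |deriv (φ N) a| ≤ 1 * C :=
            mul_le_mul (hcut.abs_cut_le _ _) (hcut.abs_deriv_trunc_le _ _) (abs_nonneg _) zero_le_one
        _ = C := one_mul C
    have h2 : |deriv (η N) z.2 * φ N a * b| ≤ C * (g + a ^ 2) := by
      have hab : |a| * |b| ≤ g + a ^ 2 := by
        nlinarith [sq_abs a, sq_abs b, sq_nonneg (|a| - |b|), sq_nonneg a]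
      rw [abs_mul, abs_mul, mul_assoc]
      refine mul_le_mul (hcut.abs_deriv_cut_le _ _) ?_ (by positivity) hC0
      exact (mul_le_mul_of_nonneg_right (hcut.abs_trunc_le _ _) (abs_nonneg _)).trans hab
    have h3 : |η N z.2 * φ N a * (m ^ 2 * a)| ≤ m ^ 2 * a ^ 2 := by
      have : |η N z.2| * |φ N a| ≤ 1 * |a| :=
        mul_le_mul (hcut.abs_cut_le _ _) (hcut.abs_trunc_le _ _) (abs_nonneg _) zero_le_one
      calc |η N z.2 * φ N a * (m ^ 2 * a)| = |η N z.2| * |φ N a| * (m ^ 2 * |a|) := by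
            rw [abs_mul, abs_mul, abs_mul, abs_of_nonneg (sq_nonneg m)]
        _ ≤ 1 * |a| * (m ^ 2 * |a|) := mul_le_mul_of_nonneg_right this (by positivity)
        _ = m ^ 2 * a ^ 2 := by rw [← sq_abs a]; ring
    rw [Real.norm_eq_abs]
    refine (abs_add_three _ _ _).trans ?_
    nlinarith [mul_nonneg hC0 (sq_nonneg a), mul_nonneg (sq_nonneg m) hg]
  · have hae := ae_fderiv_eq_zero_of_eq_zero
      ((volume : Measure (EuclideanSpace ℝ (Fin n))).prod (volume : Measure ℝ)) hOopen
      ((hUS.differentiableOn two_ne_zero).mono hOS)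
    rw [← Measure.volume_eq_prod] at hae
    filter_upwards [hae, ae_restrict_mem hO] with z hz0 hz
    have hlast := ((hcut.tendsto_cut z.2).mul (hcut.tendsto_trunc (U z.1 z.2))).mul_const
      (m ^ 2 * U z.1 z.2)
    have hmid := ((hcut.tendsto_deriv_cut z.2).mul (hcut.tendsto_trunc (U z.1 z.2))).mul_const
      (pderivT U z.1 z.2)
    -- where `U = 0` the factor `deriv (φ N) U` is zero, but so is the gradient, almost everywhere
    have hfirst : Tendsto (fun N => η N z.2 * deriv (φ N) (U z.1 z.2) * gradSqFull U z.1 z.2)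
        atTop (𝓝 (gradSqFull U z.1 z.2)) := by
      rcases eq_or_ne (U z.1 z.2) 0 with h0 | h0
      · have hd : DifferentiableAt ℝ (fun z : EuclideanSpace ℝ (Fin n) × ℝ => U z.1 z.2) z :=
          (hUS.contDiffAt (cylinder_mem_nhds hΩopen hz)).differentiableAt two_ne_zero
        have hg : gradSqFull U z.1 z.2 = 0 := by
          have hX : ∀ i, pderivX U i z.1 z.2 = 0 := fun i => by
            rw [pderivX_eq_fderiv i hd, hz0 h0]; simp
          have hT : pderivT U z.1 z.2 = 0 := by
            rw [pderivT_eq_fderiv hd, hz0 h0]; simp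
          simp [gradSqFull, hX, hT]
        simp [hg]
      · simpa using ((hcut.tendsto_cut z.2).mul (hcut.tendsto_deriv_trunc _ h0)).mul_const
          (gradSqFull U z.1 z.2)
    convert (hfirst.add hmid).add hlast using 2
    ring
  have hUM : ∀ x ∈ Ω, |U x 0| ≤ M := fun x hx => hM x (subset_closure hx) 0 self_mem_Ici
  have hcU0 : ContinuousOn (fun x => U x 0) Ω :=
    hUS.continuousOn.comp (f := fun x => (x, (0 : ℝ))) (by fun_prop)
      fun x hx => ⟨hx, self_mem_Ici⟩
  have hfin : volume Ω < ⊤ := hΩbdd.measure_lt_top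
  -- the boundary integrals are over a bounded set, with `U` bounded there
  have hlimR := tendsto_integral_of_dominated_convergence (μ := volume.restrict Ω)
    (F := fun N x => φ N (U x 0) * (m * U x 0 + |U x 0| ^ (p - 1) * U x 0))
    (f := fun x => U x 0 * (m * U x 0 + |U x 0| ^ (p - 1) * U x 0))
    (fun _ => M * (m * M + M ^ (p - 1) * M)) ?_ ?_ ?_ ?_
  rotate_left
  · intro N
    have hφc : ContinuousOn (fun x => φ N (U x 0)) Ω :=
      (hcut.contDiff_trunc N).continuous.comp_continuousOn hcU0
    have hpow : ContinuousOn (fun x => |U x 0| ^ (p - 1)) Ω :=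
      hcU0.abs.rpow_const fun x _ => Or.inr (by linarith)
    exact (hφc.mul ((continuousOn_const.mul hcU0).add (hpow.mul hcU0))).aestronglyMeasurable
      hΩopen.measurableSet
  · exact integrableOn_const hfin.ne
  · intro N
    filter_upwards [ae_restrict_mem hΩopen.measurableSet] with x hx
    have hx' := hUM x hx
    have hM0 : 0 ≤ M := (abs_nonneg _).trans hx'
    rw [Real.norm_eq_abs, abs_mul]
    refine mul_le_mul ((hcut.abs_trunc_le _ _).trans hx') ?_ (abs_nonneg _) hM0
    refine (abs_add_le _ _).trans (add_le_add ?_ ?_)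
    · rw [abs_mul, abs_of_pos hm]
      exact mul_le_mul_of_nonneg_left hx' hm.le
    · rw [abs_mul, abs_of_nonneg (Real.rpow_nonneg (abs_nonneg _) _)]
      exact mul_le_mul (Real.rpow_le_rpow (abs_nonneg _) hx' (by linarith)) hx' (abs_nonneg _)
        (Real.rpow_nonneg hM0 _)
  · exact Eventually.of_forall fun x => (hcut.tendsto_trunc (U x 0)).mul_const _
  have hweak : ∀ N, (∫ z in O, (η N z.2 * deriv (φ N) (U z.1 z.2) * gradSqFull U z.1 z.2
        + deriv (η N) z.2 * φ N (U z.1 z.2) * pderivT U z.1 z.2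
        + η N z.2 * φ N (U z.1 z.2) * (m ^ 2 * U z.1 z.2)))
      = ∫ x in Ω, φ N (U x 0) * (m * U x 0 + |U x 0| ^ (p - 1) * U x 0) := fun N => by
    obtain ⟨ε, hε, hφ0⟩ := hcut.trunc_eq_zero N
    obtain ⟨R, hη0⟩ := hcut.cut_eq_zero N
    rw [weak_identity hΩopen hΩbdd hUreg hPDE hDir (hcut.contDiff_trunc N) (hcut.contDiff_cut N)
      hε hφ0 hη0]
    refine setIntegral_congr_fun hΩopen.measurableSet fun x hx => ?_
    simp only [hNeu x hx, hcut.cut_zero, one_mul]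
  simp only [hweak] at hlimL
  have heq := tendsto_nhds_unique hlimR hlimL
  have hlhs : (∫ x in Ω, (m * (U x 0) ^ 2 + |U x 0| ^ (p + 1)))
      = ∫ x in Ω, U x 0 * (m * U x 0 + |U x 0| ^ (p - 1) * U x 0) := by
    refine setIntegral_congr_fun hΩopen.measurableSet fun x _ => ?_
    have hpow : |U x 0| ^ (p + 1) = |U x 0| ^ (p - 1) * U x 0 ^ 2 := by
      rcases eq_or_ne (U x 0) 0 with h | h
      · rw [h, abs_zero, Real.zero_rpow (by linarith)]
        simp
      · rw [show p + 1 = p - 1 + (2 : ℕ) by push_cast; ring,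
          Real.rpow_add_natCast (abs_pos.2 h).ne', sq_abs]
    simp only [hpow]
    ring
  rw [hlhs, heq, integral_add hGi (hUi.const_mul _), integral_const_mul, Measure.volume_eq_prod,
    setIntegral_prod_symm' hGi, setIntegral_prod_symm' hUi, add_comm]
end
end

section
/- Dirichlet energy of the bubble extension. Let n ≥ 3 be an integer. Define W_{1,0}(x,t) = c_n ( 1 / (|x|² + (t+1)²) )^{(n−1)/2} for (x,t) ∈ ℝⁿ × [0,∞). Then ∫₀^∞∫_{ℝⁿ} |∇W_{1,0}(x,t)|² dx dt = ∫_{ℝⁿ} ( w_{1,0}(x) )^{2n/(n−1)} dx, where ∇ denotes the full gradient in the n+1 variables (x,t). -/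
/-!
The squared gradient of `W = c_n ρ^{-(n-1)}`, with `ρ² = |x|² + (t+1)²`, is `c_n² (n-1)² ρ^{-2n}`.
Scaling `x = (t+1) y` turns its integral over the slice at height `t` into
`c_n² (n-1)² (t+1)^{-n} I`, where `I = ∫ (1+|y|²)^{-n} dy`, and integrating in `t` leaves
`c_n² (n-1) I`. On the other side, `w^{2n/(n-1)} = c_n^{2n/(n-1)} (1+|x|²)^{-n}`. The functional
equation of `Γ` gives `c_n = (n-1)^{(n-1)/2}` (`cnConst_eq`), so both constants equal `(n-1)^n`.
The value of `I` is never needed.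
-/

open MeasureTheory

noncomputable section

/-- The normalizing constant `c_n`. -/
def cnConst (n : ℕ) : ℝ :=
  2 ^ (((n : ℝ) - 1) / 2) *
    (Real.Gamma (((n : ℝ) + 1) / 2) / Real.Gamma (((n : ℝ) - 1) / 2)) ^ (((n : ℝ) - 1) / 2)

/-- The standard bubble `w_{1,0}` on `ℝⁿ`. -/
def bubble (n : ℕ) (x : EuclideanSpace ℝ (Fin n)) : ℝ :=
  cnConst n * (1 / (1 + ‖x‖ ^ 2)) ^ (((n : ℝ) - 1) / 2)

/-- The explicit extension `W_{1,0}` of the standard bubble to the upper half space. -/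
def bubbleExt (n : ℕ) (x : EuclideanSpace ℝ (Fin n)) (t : ℝ) : ℝ :=
  cnConst n * (1 / (‖x‖ ^ 2 + (t + 1) ^ 2)) ^ (((n : ℝ) - 1) / 2)

lemma cnConst_eq {n : ℕ} (hn : 3 ≤ n) :
    cnConst n = ((n : ℝ) - 1) ^ (((n : ℝ) - 1) / 2) := by
  have hn' : (3 : ℝ) ≤ n := by exact_mod_cast hn
  have hpos : 0 < ((n : ℝ) - 1) / 2 := by linarith
  have hG : Real.Gamma (((n : ℝ) + 1) / 2)
      = ((n : ℝ) - 1) / 2 * Real.Gamma (((n : ℝ) - 1) / 2) := by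
    rw [← Real.Gamma_add_one hpos.ne']
    congr 1
    ring
  have hne : Real.Gamma (((n : ℝ) - 1) / 2) ≠ 0 := (Real.Gamma_pos_of_pos hpos).ne'
  rw [cnConst, hG, mul_div_assoc, div_self hne, mul_one,
    ← Real.mul_rpow (by norm_num) hpos.le]
  congr 1
  ring

lemma cnConst_sq {n : ℕ} (hn : 3 ≤ n) : cnConst n ^ 2 * ((n : ℝ) - 1) = ((n : ℝ) - 1) ^ n := by
  have hn' : (3 : ℝ) ≤ n := by exact_mod_cast hn
  have hpos : 0 < (n : ℝ) - 1 := by linarith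
  rw [cnConst_eq hn, ← Real.rpow_natCast, ← Real.rpow_mul hpos.le, ← Real.rpow_add_one hpos.ne',
    ← Real.rpow_natCast]
  congr 1
  push_cast
  ring

lemma bubble_rpow {n : ℕ} (hn : 3 ≤ n) (x : EuclideanSpace ℝ (Fin n)) :
    bubble n x ^ (2 * (n : ℝ) / ((n : ℝ) - 1)) = ((n : ℝ) - 1) ^ n * ((1 + ‖x‖ ^ 2) ^ n)⁻¹ := by
  have hn' : (3 : ℝ) ≤ n := by exact_mod_cast hn
  have hpos : 0 < (n : ℝ) - 1 := by linarith
  have hx : 0 < 1 + ‖x‖ ^ 2 := by positivity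
  have he : ((n : ℝ) - 1) / 2 * (2 * (n : ℝ) / ((n : ℝ) - 1)) = n := by
    field_simp
  rw [bubble, cnConst_eq hn, Real.mul_rpow (by positivity) (by positivity),
    ← Real.rpow_mul hpos.le, ← Real.rpow_mul (by positivity), he, Real.rpow_natCast,
    Real.rpow_natCast, one_div, inv_pow]

lemma hasDerivAt_profile (c a u : ℝ) (hu : 0 < u) :
    HasDerivAt (fun u : ℝ => c * (1 / u) ^ a) (-(c * a * u ^ (-a - 1))) u := by
  have h := (Real.hasDerivAt_rpow_const (x := u) (p := -a) (Or.inl hu.ne')).const_mul c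
  have h2 := h.congr_of_eventuallyEq (f₁ := fun u : ℝ => c * (1 / u) ^ a) (by
    filter_upwards [lt_mem_nhds hu] with v hv
    rw [one_div, Real.inv_rpow hv.le, Real.rpow_neg hv.le])
  refine h2.congr_deriv ?_
  ring

lemma gradSqFull_bubbleExt {n : ℕ} (x : EuclideanSpace ℝ (Fin n)) {t : ℝ}
    (ht : 0 < t) :
    gradSqFull (bubbleExt n) x t
      = cnConst n ^ 2 * ((n : ℝ) - 1) ^ 2 * ((‖x‖ ^ 2 + (t + 1) ^ 2) ^ n)⁻¹ := by
  set a : ℝ := ((n : ℝ) - 1) / 2 with ha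
  set u : ℝ := ‖x‖ ^ 2 + (t + 1) ^ 2 with hu
  have hupos : 0 < u := by positivity
  have hp := hasDerivAt_profile (cnConst n) a u hupos
  have hT : pderivT (bubbleExt n) x t
      = -(cnConst n * a * u ^ (-a - 1)) * (2 * (t + 1)) := by
    have h1 : HasDerivAt (fun s : ℝ => ‖x‖ ^ 2 + (s + 1) ^ 2) (2 * (t + 1)) t := by
      simpa using (((hasDerivAt_id t).add_const 1).pow 2).const_add (‖x‖ ^ 2)
    exact (hp.comp t h1).deriv
  have hX : ∀ i, pderivX (bubbleExt n) i x t
      = -(cnConst n * a * u ^ (-a - 1)) * (2 * x i) := by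
    intro i
    have h1 : HasFDerivAt (fun y : EuclideanSpace ℝ (Fin n) => ‖y‖ ^ 2 + (t + 1) ^ 2)
        (2 • innerSL ℝ x) x :=
      (hasStrictFDerivAt_norm_sq x).hasFDerivAt.add_const _
    have h2 := hp.comp_hasFDerivAt x h1
    have h3 : fderiv ℝ (fun y => bubbleExt n y t) x = _ := h2.fderiv
    rw [pderivX, h3]
    simp [EuclideanSpace.inner_single_right]
  have hpow : (u ^ (-a - 1)) ^ 2 * u = (u ^ n)⁻¹ := by
    rw [← Real.rpow_natCast (u ^ (-a - 1)), ← Real.rpow_mul hupos.le,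
      ← Real.rpow_add_one hupos.ne', ← Real.rpow_natCast u n, ← Real.rpow_neg hupos.le, ha]
    congr 1
    push_cast
    ring
  have hnorm : ∑ i, x i ^ 2 = ‖x‖ ^ 2 := by
    rw [EuclideanSpace.real_norm_sq_eq]
  rw [gradSqFull, hT]
  simp_rw [hX, mul_pow]
  rw [← Finset.mul_sum, ← Finset.mul_sum, hnorm, ← hpow, ha, hu]
  ring

/-- The substitution `x = s y` in a slice. `integral_comp_smul` holds without integrability, since
dilation preserves it. -/
lemma integral_slice {n : ℕ} {s : ℝ} (hs : 0 < s) :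
    ∫ x : EuclideanSpace ℝ (Fin n), ((‖x‖ ^ 2 + s ^ 2) ^ n)⁻¹
      = (s ^ n)⁻¹ * ∫ x : EuclideanSpace ℝ (Fin n), ((1 + ‖x‖ ^ 2) ^ n)⁻¹ := by
  have h := Measure.integral_comp_smul (volume : Measure (EuclideanSpace ℝ (Fin n)))
    (fun x => ((‖x‖ ^ 2 + s ^ 2) ^ n)⁻¹) s
  have hl : ∀ x : EuclideanSpace ℝ (Fin n), ((‖s • x‖ ^ 2 + s ^ 2) ^ n)⁻¹
      = ((s ^ n)⁻¹ * (s ^ n)⁻¹) * ((1 + ‖x‖ ^ 2) ^ n)⁻¹ := by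
    intro x
    rw [norm_smul, Real.norm_of_nonneg hs.le, ← mul_inv, ← mul_inv, ← mul_pow, ← mul_pow]
    congr 2
    ring
  simp_rw [hl] at h
  rw [integral_const_mul, finrank_euclideanSpace_fin, abs_of_pos (by positivity), smul_eq_mul,
    mul_assoc] at h
  exact (mul_left_cancel₀ (by positivity) h).symm

lemma integral_height {n : ℕ} (hn : 3 ≤ n) :
    ∫ t in Set.Ioi (0 : ℝ), ((t + 1) ^ n)⁻¹ = ((n : ℝ) - 1)⁻¹ := by
  have hn' : (3 : ℝ) ≤ n := by exact_mod_cast hn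
  have h1 : ∫ t in Set.Ioi (0 : ℝ), ((t + 1) ^ n)⁻¹ = ∫ t in Set.Ioi (1 : ℝ), (t ^ n)⁻¹ := by
    have := (measurePreserving_add_right (volume : Measure ℝ) 1).setIntegral_preimage_emb
      (measurableEmbedding_addRight 1) (fun t : ℝ => (t ^ n)⁻¹) (Set.Ioi 1)
    simpa using this
  have h2 : ∫ t in Set.Ioi (1 : ℝ), (t ^ n)⁻¹ = ∫ t in Set.Ioi (1 : ℝ), t ^ (-(n : ℝ)) := by
    refine setIntegral_congr_fun measurableSet_Ioi fun t ht => ?_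
    have : (0 : ℝ) < t := lt_trans one_pos ht
    simp only [Real.rpow_neg this.le, Real.rpow_natCast]
  rw [h1, h2, integral_Ioi_rpow_of_lt (by linarith) one_pos, Real.one_rpow, neg_div, ← div_neg,
    one_div]
  congr 1
  ring

/-- **Dirichlet energy of the bubble extension.** -/
theorem bubbleExt_dirichlet_energy {n : ℕ} (hn : 3 ≤ n) :
    (∫ t in Set.Ioi (0:ℝ), ∫ x : EuclideanSpace ℝ (Fin n), gradSqFull (bubbleExt n) x t) =
      ∫ x : EuclideanSpace ℝ (Fin n), (bubble n x) ^ (2 * (n : ℝ) / ((n : ℝ) - 1)) := by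
  have hn' : (3 : ℝ) ≤ n := by exact_mod_cast hn
  have hne : (n : ℝ) - 1 ≠ 0 := by linarith
  set I : ℝ := ∫ x : EuclideanSpace ℝ (Fin n), ((1 + ‖x‖ ^ 2) ^ n)⁻¹ with hI
  have hslice : ∀ t ∈ Set.Ioi (0 : ℝ),
      ∫ x : EuclideanSpace ℝ (Fin n), gradSqFull (bubbleExt n) x t
        = cnConst n ^ 2 * ((n : ℝ) - 1) ^ 2 * I * ((t + 1) ^ n)⁻¹ := by
    intro t ht
    have ht0 : 0 < t := ht
    simp_rw [gradSqFull_bubbleExt _ ht0]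
    rw [integral_const_mul, integral_slice (by linarith), ← hI]
    ring
  rw [setIntegral_congr_fun measurableSet_Ioi hslice, integral_const_mul, integral_height hn]
  simp_rw [bubble_rpow hn]
  rw [integral_const_mul, ← hI, ← cnConst_sq hn]
  field_simp
end
end

section
/- Symbol estimate for the ratio of the regularized pseudo-relativistic and Laplacian symbols (Proposition A.2(1)). Fix λ₁ > 0 and a smooth function χ : ℝ → [0,1] with χ(λ) = 1 for λ ≤ λ₁/2 and χ(λ) = 0 for λ ≥ λ₁. For m > 0 set P_m(λ) = 2m(√(λ+m²) − m) + χ(λ) and P_∞(λ) = λ + χ(λ). Then for every positive integer k there exists a constant C_k > 0 such that for all m ≥ 2 and all λ > 0, the k-th derivative satisfies | (d/dλ)^k ( P_m(λ) / P_∞(λ) ) | ≤ C_k / λ^k. -/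
/-!
With `u = lorentz m l = m / √(l + m²)`, rationalizing the square root gives, for `l > 0`,
`P_m / P_∞ = 1 + (l / P_∞) * ((u - 1) / (u + 1))` (`ratio_eq`). Both factors of the product are
symbols of order zero, uniformly in `m`, so the claim follows from the Leibniz rule.

* The first factor does not involve `m`. It is smooth on `(-1, ∞)` and equals `1` beyond `lam1`,
  so its bounds come from compactness of `[0, lam1]` (`div_Pinf_bound`).
* For the second factor, `l du/dl = -u (1 - u²) / 2` is a function of `u` alone. By induction,
  `l ^ k` times the `k`-th derivative is `F_k(u)` with `F_k` smooth on `(-1, ∞)` and independent of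
  `m` (`exists_profile`); since `u ∈ [0, 1]`, it is bounded uniformly in `m` and `l`
  (`relativistic_bound`).
-/

noncomputable section

/-- The regularized pseudo-relativistic symbol `P_m`. -/
def Pm (χ : ℝ → ℝ) (m : ℝ) (l : ℝ) : ℝ :=
  2 * m * (Real.sqrt (l + m ^ 2) - m) + χ l

/-- The regularized Laplacian symbol `P_∞`. -/
def Pinf (χ : ℝ → ℝ) (l : ℝ) : ℝ :=
  l + χ l

/-- The inverse Lorentz factor `m / √(l + m²)`, which lies in `(0, 1)` for `l, m > 0`. -/
def lorentz (m l : ℝ) : ℝ := m / Real.sqrt (l + m ^ 2)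

lemma hasDerivAt_lorentz {m l : ℝ} (hm : 0 < m) (hl : 0 < l) :
    HasDerivAt (lorentz m) (-(lorentz m l * (1 - lorentz m l ^ 2) / 2) / l) l := by
  have hpos : 0 < l + m ^ 2 := by positivity
  have hs : 0 < Real.sqrt (l + m ^ 2) := Real.sqrt_pos.2 hpos
  have hsq : Real.sqrt (l + m ^ 2) ^ 2 = l + m ^ 2 := Real.sq_sqrt hpos.le
  have h1 : HasDerivAt (fun x : ℝ => x + m ^ 2) 1 l := (hasDerivAt_id l).add_const _
  have h2 := (hasDerivAt_const l m).div (h1.sqrt hpos.ne') hs.ne'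
  refine h2.congr_deriv ?_
  unfold lorentz
  set s := Real.sqrt (l + m ^ 2)
  have hl' : l = s ^ 2 - m ^ 2 := by linarith
  have hne : s ^ 2 - m ^ 2 ≠ 0 := hl' ▸ hl.ne'
  rw [hl']
  field_simp
  ring

lemma lorentz_mem {m l : ℝ} (hm : 0 < m) (hl : 0 < l) : lorentz m l ∈ Set.Icc (0 : ℝ) 1 := by
  have hpos : 0 < l + m ^ 2 := by positivity
  refine ⟨by unfold lorentz; positivity, ?_⟩
  unfold lorentz
  rw [div_le_one (Real.sqrt_pos.2 hpos)]
  exact Real.le_sqrt_of_sq_le (by linarith)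

/-- The Euler operator `l d/dl` acts on functions of `u = lorentz m l` as `-u (1 - u²)/2 d/du`.
Hence `l ^ k` times the `k`-th derivative of a smooth function of `u` is again a smooth function
of `u`, and this function does not depend on `m`. -/
lemma exists_profile {F₀ : ℝ → ℝ} (hF₀ : ContDiffOn ℝ (⊤ : ℕ∞) F₀ (Set.Ioi (-1))) (k : ℕ) :
    ∃ F : ℝ → ℝ, ContDiffOn ℝ (⊤ : ℕ∞) F (Set.Ioi (-1)) ∧ ∀ m l : ℝ, 0 < m → 0 < l →
      iteratedDeriv k (fun x => F₀ (lorentz m x)) l = F (lorentz m l) / l ^ k := by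
  induction k with
  | zero => exact ⟨F₀, hF₀, by simp⟩
  | succ k ih =>
    obtain ⟨F, hF, hFk⟩ := ih
    refine ⟨fun u => -(u * (1 - u ^ 2) / 2) * deriv F u - k * F u, ?_, ?_⟩
    · have hd : ContDiffOn ℝ (⊤ : ℕ∞) (deriv F) (Set.Ioi (-1)) :=
        hF.deriv_of_isOpen isOpen_Ioi (by simp)
      exact ((by fun_prop : ContDiff ℝ (⊤ : ℕ∞)
        (fun u : ℝ => -(u * (1 - u ^ 2) / 2))).contDiffOn.mul hd).sub (contDiffOn_const.mul hF)
    · intro m l hm hl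
      rw [iteratedDeriv_succ]
      have hev : iteratedDeriv k (fun x => F₀ (lorentz m x)) =ᶠ[nhds l]
          fun x => F (lorentz m x) / x ^ k := by
        filter_upwards [lt_mem_nhds hl] with x hx using hFk m x hm hx
      have hu : (-1 : ℝ) < lorentz m l := by linarith [(lorentz_mem hm hl).1]
      have hFd : HasDerivAt F (deriv F (lorentz m l)) (lorentz m l) :=
        ((hF.differentiableOn (by simp)).differentiableAt (Ioi_mem_nhds hu)).hasDerivAt
      have h := (hFd.comp l (hasDerivAt_lorentz hm hl)).div (hasDerivAt_pow k l)
        (pow_pos hl k).ne'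
      rw [hev.deriv_eq]
      refine h.deriv.trans ?_
      simp only [Function.comp_apply]
      rcases k with _ | k
      · simp
        field_simp
      · simp only [Nat.add_sub_cancel]
        push_cast
        field_simp
        ring

lemma contDiffOn_profile_zero :
    ContDiffOn ℝ (⊤ : ℕ∞) (fun u : ℝ => (u - 1) / (u + 1)) (Set.Ioi (-1)) := by
  refine ContDiffOn.div (by fun_prop) (by fun_prop) fun u hu => ?_
  have : -1 < u := hu
  linarith

lemma relativistic_bound (k : ℕ) :
    ∃ C : ℝ, ∀ m l : ℝ, 0 < m → 0 < l →
      |iteratedDeriv k (fun x => (lorentz m x - 1) / (lorentz m x + 1)) l| ≤ C / l ^ k := by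
  obtain ⟨F, hF, hFk⟩ := exists_profile contDiffOn_profile_zero k
  obtain ⟨C, hC⟩ := isCompact_Icc.exists_bound_of_continuousOn
    (hF.continuousOn.mono (fun u hu => by
      have := hu.1; simp only [Set.mem_Ioi]; linarith : Set.Icc (0 : ℝ) 1 ⊆ Set.Ioi (-1)))
  refine ⟨C, fun m l hm hl => ?_⟩
  rw [hFk m l hm hl, abs_div, abs_of_pos (pow_pos hl k)]
  gcongr
  exact hC _ (lorentz_mem hm hl)

lemma contDiffAt_relativistic {m l : ℝ} (hm : 0 < m) (hl : 0 < l) :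
    ContDiffAt ℝ (⊤ : ℕ∞) (fun x => (lorentz m x - 1) / (lorentz m x + 1)) l := by
  have hpos : 0 < l + m ^ 2 := by positivity
  have hu : ContDiffAt ℝ (⊤ : ℕ∞) (lorentz m) l :=
    contDiffAt_const.div ((contDiffAt_id.add contDiffAt_const).sqrt hpos.ne')
      (Real.sqrt_pos.2 hpos).ne'
  refine (hu.sub contDiffAt_const).div (hu.add contDiffAt_const) ?_
  linarith [(lorentz_mem hm hl).1]

/-- Positivity holds slightly beyond `l = 0`, so that `l / P_∞` is smooth on a neighbourhood of the
closed half-line. -/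
lemma Pinf_pos {lam1 : ℝ} (hlam1 : 0 < lam1) {χ : ℝ → ℝ}
    (hχrange : ∀ l : ℝ, χ l ∈ Set.Icc (0:ℝ) 1)
    (hχone : ∀ l : ℝ, l ≤ lam1 / 2 → χ l = 1) {l : ℝ} (hl : -1 < l) : 0 < Pinf χ l := by
  unfold Pinf
  rcases le_or_gt l 0 with h | h
  · rw [hχone l (by linarith)]
    linarith
  · linarith [(hχrange l).1]

lemma contDiffOn_div_Pinf {lam1 : ℝ} (hlam1 : 0 < lam1) {χ : ℝ → ℝ}
    (hχ : ContDiff ℝ (⊤ : ℕ∞) χ) (hχrange : ∀ l : ℝ, χ l ∈ Set.Icc (0:ℝ) 1)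
    (hχone : ∀ l : ℝ, l ≤ lam1 / 2 → χ l = 1) :
    ContDiffOn ℝ (⊤ : ℕ∞) (fun l => l / Pinf χ l) (Set.Ioi (-1)) :=
  contDiffOn_id.div (contDiff_id.add hχ).contDiffOn
    fun _ hl => (Pinf_pos hlam1 hχrange hχone hl).ne'

/-- The symbol `l / P_∞` is smooth up to `l = 0`, which gives the bound on `(0, lam1]` by
compactness, and it is constant on `(lam1, ∞)`. -/
lemma div_Pinf_bound {lam1 : ℝ} (hlam1 : 0 < lam1) {χ : ℝ → ℝ}
    (hχ : ContDiff ℝ (⊤ : ℕ∞) χ) (hχrange : ∀ l : ℝ, χ l ∈ Set.Icc (0:ℝ) 1)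
    (hχone : ∀ l : ℝ, l ≤ lam1 / 2 → χ l = 1) (hχzero : ∀ l : ℝ, lam1 ≤ l → χ l = 0) (k : ℕ) :
    ∃ C : ℝ, ∀ l : ℝ, 0 < l → |iteratedDeriv k (fun l => l / Pinf χ l) l| ≤ C / l ^ k := by
  have hcont : ContinuousOn (fun l : ℝ => l ^ k * iteratedDeriv k (fun l => l / Pinf χ l) l)
      (Set.Ioi (-1)) := by
    refine (continuous_pow k).continuousOn.mul ?_
    exact ((contDiffOn_div_Pinf hlam1 hχ hχrange hχone).continuousOn_iteratedDerivWithin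
      (m := k) (by exact_mod_cast le_top) isOpen_Ioi.uniqueDiffOn).congr
      fun l hl => (iteratedDerivWithin_of_isOpen isOpen_Ioi hl).symm
  obtain ⟨C, hC⟩ := (isCompact_Icc (a := (0 : ℝ)) (b := lam1)).exists_bound_of_continuousOn
    (hcont.mono fun l hl => by have := hl.1; simp only [Set.mem_Ioi]; linarith)
  refine ⟨max C 1, fun l hl => ?_⟩
  rw [le_div_iff₀ (pow_pos hl k)]
  rcases le_or_gt l lam1 with h | h
  · have := hC l ⟨hl.le, h⟩
    rw [Real.norm_eq_abs, abs_mul, abs_of_pos (pow_pos hl k), mul_comm] at this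
    exact this.trans (le_max_left _ _)
  · have hev : (fun l => l / Pinf χ l) =ᶠ[nhds l] fun _ => (1 : ℝ) := by
      filter_upwards [lt_mem_nhds h] with x hx
      rw [Pinf, hχzero x hx.le, add_zero, div_self (hlam1.trans hx).ne']
    rw [hev.iteratedDeriv_eq, iteratedDeriv_const]
    split_ifs with hk <;> simp [hk]

lemma ratio_eq {lam1 : ℝ} (hlam1 : 0 < lam1) {χ : ℝ → ℝ}
    (hχrange : ∀ l : ℝ, χ l ∈ Set.Icc (0:ℝ) 1)
    (hχone : ∀ l : ℝ, l ≤ lam1 / 2 → χ l = 1) {m l : ℝ} (hm : 0 < m) (hl : 0 < l) :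
    Pm χ m l / Pinf χ l =
      1 + l / Pinf χ l * ((lorentz m l - 1) / (lorentz m l + 1)) := by
  have hP : 0 < Pinf χ l := Pinf_pos hlam1 hχrange hχone (by linarith)
  have hpos : 0 < l + m ^ 2 := by positivity
  have hs : 0 < Real.sqrt (l + m ^ 2) := Real.sqrt_pos.2 hpos
  have hsq : Real.sqrt (l + m ^ 2) ^ 2 = l + m ^ 2 := Real.sq_sqrt hpos.le
  -- Rationalizing the square root: `2m(√(l+m²) - m) = l (1 + (u-1)/(u+1))` with `u = lorentz m l`.
  have key : 2 * m * (Real.sqrt (l + m ^ 2) - m) =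
      l + l * ((lorentz m l - 1) / (lorentz m l + 1)) := by
    unfold lorentz
    set s := Real.sqrt (l + m ^ 2)
    have hl' : l = s ^ 2 - m ^ 2 := by linarith
    rw [hl']
    field_simp
    ring
  have hsum : Pm χ m l = Pinf χ l + l * ((lorentz m l - 1) / (lorentz m l + 1)) := by
    rw [Pm, key, Pinf]
    ring
  rw [hsum, add_div, div_self hP.ne', div_mul_eq_mul_div]

/-- **Symbol estimate for the ratio of the regularized pseudo-relativistic and Laplacian
symbols** (Proposition A.2(1)). -/
theorem symbol_ratio_estimate
    (lam1 : ℝ) (hlam1 : 0 < lam1) (χ : ℝ → ℝ)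
    (hχ : ContDiff ℝ (⊤ : ℕ∞) χ)
    (hχrange : ∀ l : ℝ, χ l ∈ Set.Icc (0:ℝ) 1)
    (hχone : ∀ l : ℝ, l ≤ lam1 / 2 → χ l = 1)
    (hχzero : ∀ l : ℝ, lam1 ≤ l → χ l = 0)
    (k : ℕ) (hk : 1 ≤ k) :
    ∃ C > (0:ℝ), ∀ m : ℝ, 2 ≤ m → ∀ lam : ℝ, 0 < lam →
      |iteratedDeriv k (fun l => Pm χ m l / Pinf χ l) lam| ≤ C / lam ^ k := by
  choose A hA using div_Pinf_bound hlam1 hχ hχrange hχone hχzero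
  choose B hB using relativistic_bound
  refine ⟨max (∑ i ∈ Finset.range (k + 1), k.choose i * A i * B (k - i)) 1,
    lt_max_of_lt_right one_pos, fun m hm2 l hl => ?_⟩
  have hm : 0 < m := by linarith
  have hev : (fun l => Pm χ m l / Pinf χ l) =ᶠ[nhds l] fun l => 1 +
      ((fun l => l / Pinf χ l) * fun l => (lorentz m l - 1) / (lorentz m l + 1)) l := by
    filter_upwards [lt_mem_nhds hl] with x hx using ratio_eq hlam1 hχrange hχone hm hx
  have hkle : (k : WithTop ℕ∞) ≤ (⊤ : ℕ∞) := by exact_mod_cast le_top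
  have hh : ContDiffAt ℝ k (fun l => l / Pinf χ l) l :=
    ((contDiffOn_div_Pinf hlam1 hχ hχrange hχone).contDiffAt
      (Ioi_mem_nhds (by linarith))).of_le hkle
  rw [hev.iteratedDeriv_eq, iteratedDeriv_const_add hk,
    iteratedDeriv_mul hh ((contDiffAt_relativistic hm hl).of_le hkle)]
  calc |∑ i ∈ Finset.range (k + 1), (k.choose i : ℝ) * iteratedDeriv i (fun l => l / Pinf χ l) l *
        iteratedDeriv (k - i) (fun l => (lorentz m l - 1) / (lorentz m l + 1)) l|
      ≤ ∑ i ∈ Finset.range (k + 1), k.choose i * A i * B (k - i) / l ^ k := by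
        refine (Finset.abs_sum_le_sum_abs _ _).trans (Finset.sum_le_sum fun i hi => ?_)
        have hik : i + (k - i) = k := by have := Finset.mem_range.1 hi; omega
        rw [abs_mul, abs_mul, Nat.abs_cast]
        calc _ ≤ (k.choose i : ℝ) * (A i / l ^ i) * (B (k - i) / l ^ (k - i)) := by
              gcongr
              · exact mul_nonneg (Nat.cast_nonneg _) ((abs_nonneg _).trans (hA i l hl))
              · exact hA i l hl
              · exact hB (k - i) m l hm hl
          _ = k.choose i * A i * B (k - i) / (l ^ i * l ^ (k - i)) := by
              field_simp
          _ = _ := by rw [← pow_add, hik]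
    _ = (∑ i ∈ Finset.range (k + 1), k.choose i * A i * B (k - i)) / l ^ k :=
        (Finset.sum_div _ _ _).symm
    _ ≤ _ := by
        gcongr
        exact le_max_left _ _
end
end
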